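/- Let δ > 0 and ε > 0 be fixed. There is a constant C(δ, ε) such that, with the notation of the context, if it is not the case that B^{1/5 − 3δ/2} ≤ X_k ≤ B^{1/5 + 3δ/2} and B^{1/5 − δ} ≤ Y_k ≤ B^{1/5 + δ} for all k = 1, 2, 3, then N₀(B) ≤ C(δ, ε) · (B^{6/11 + ε} + B^{3/5 − δ + ε}). -/

import Mathlib

/-- The set `S₀(B)` of sextuples `(x₁, x₂, x₃, y₁, y₂, y₃)` of positive integers (encoded as a
pair of functions `Fin 3 → ℤ`) such that `Xᵢ/2 < xᵢ ≤ Xᵢ` and `Yᵢ/2 < yᵢ ≤ Yᵢ`, the equation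
`a₁x₁²y₁³ + a₂x₂²y₂³ + a₃x₃²y₃³ = 0` holds, `gcd(x₁y₁, x₂y₂, x₃y₃) = 1`,
`gcd(a₁a₂a₃, x₁x₂x₃y₁y₂y₃) = 1`, and `a₁y₁, a₂y₂, a₃y₃` are all squarefree. -/
def S0 (a : Fin 3 → ℤ) (X Y : Fin 3 → ℝ) : Set ((Fin 3 → ℤ) × (Fin 3 → ℤ)) :=
  {p | (∀ i, 0 < p.1 i) ∧ (∀ i, 0 < p.2 i) ∧
    (∀ i, X i / 2 < (p.1 i : ℝ) ∧ (p.1 i : ℝ) ≤ X i) ∧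
    (∀ i, Y i / 2 < (p.2 i : ℝ) ∧ (p.2 i : ℝ) ≤ Y i) ∧
    a 0 * p.1 0 ^ 2 * p.2 0 ^ 3 + a 1 * p.1 1 ^ 2 * p.2 1 ^ 3 +
      a 2 * p.1 2 ^ 2 * p.2 2 ^ 3 = 0 ∧
    Int.gcd (p.1 0 * p.2 0) (Int.gcd (p.1 1 * p.2 1) (p.1 2 * p.2 2)) = 1 ∧
    Int.gcd (a 0 * a 1 * a 2) (p.1 0 * p.1 1 * p.1 2 * p.2 0 * p.2 1 * p.2 2) = 1 ∧
    (∀ i, Squarefree (a i * p.2 i))}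

/-!
Three bounds for the number of solutions in a box with sides `X`, `Y` are played off against each
other. Here `W = 32B` bounds the three terms of the equation, and all bounds hold up to `W ^ ε`.

* Fix `x₁`, `x₂` and `y₀`. Modulo `y₀³` the ratio `y₁ / y₂` is one of few roots, so `(y₁, y₂)` lies
  in one of few lattices of determinant `y₀³`, on which the equation becomes a cubic curve; a
  determinant method counts its points.
* Fix all `yᵢ`. The equation becomes a conic in the `xᵢ`. After a choice of square roots modulo the
  `yᵢ³`, the determinant of three solutions is divisible by every `yᵢ³`, yet small for solutions on
  a short arc, hence zero; as a smooth conic has no three collinear points, a short arc carries few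
  solutions.
* Fix `y₀`. By Cauchy-Schwarz it suffices to count the pairs of solutions with the same `x₂` and
  `y₂`. The difference of the two `a₁x₁²y₁³` is then divisible by `y₀³` and equals the difference of
  the two `a₀x₀²y₀³`, so that the divisor bound recovers the remaining variables.

Taking logarithms leaves a linear program. Outside the critical box one side is small, and then its
value is at most `3/5 - δ` if `δ ≤ 3/55`, hence at most `6/11 = 3/5 - 3/55` for larger `δ`.
-/

/-! ### Counting -/

section Counting

open Finset

theorem card_le_mul_of_fiber_card_le {α β : Type*} [DecidableEq β] {T : Finset α} (f : α → β)
    {M N : ℝ} (hM : 0 ≤ M) (hN : (#(T.image f) : ℝ) ≤ N)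
    (hfiber : ∀ b ∈ T.image f, (#{a ∈ T | f a = b} : ℝ) ≤ M) :
    (#T : ℝ) ≤ N * M := by
  rw [card_eq_sum_card_image f T]
  push_cast
  calc ∑ b ∈ T.image f, (#{a ∈ T | f a = b} : ℝ)
      ≤ #(T.image f) * M := by simpa using sum_le_sum hfiber
    _ ≤ N * M := by gcongr

theorem card_le_sub_add_one {T : Finset ℤ} {a b : ℝ} (hab : a ≤ b)
    (hT : ∀ x ∈ T, a ≤ (x : ℝ) ∧ (x : ℝ) ≤ b) : (#T : ℝ) ≤ b - a + 1 := by
  have hsub : T ⊆ Icc ⌈a⌉ ⌊b⌋ := fun x hx =>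
    mem_Icc.2 ⟨Int.ceil_le.2 (hT x hx).1, Int.le_floor.2 (hT x hx).2⟩
  have hcard : #T ≤ (⌊b⌋ + 1 - ⌈a⌉).toNat := (card_le_card hsub).trans (Int.card_Icc ..).le
  have hfloor := Int.floor_le b
  have hceil := Int.le_ceil a
  rcases le_or_gt 0 (⌊b⌋ + 1 - ⌈a⌉) with hle | hlt
  · have hZ : (#T : ℤ) ≤ ⌊b⌋ + 1 - ⌈a⌉ := by omega
    have hR : (#T : ℝ) ≤ ⌊b⌋ + 1 - ⌈a⌉ := by exact_mod_cast hZ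
    linarith
  · have hzero : #T = 0 := by omega
    rw [hzero, Nat.cast_zero]
    linarith

theorem card_le_of_pos_of_le {T : Finset ℤ} {b : ℝ} (hb : 0 ≤ b)
    (hT : ∀ x ∈ T, 0 < x ∧ (x : ℝ) ≤ b) : (#T : ℝ) ≤ b := by
  rcases T.eq_empty_or_nonempty with rfl | ⟨x₀, hx₀⟩
  · simpa
  have hone : ∀ x ∈ T, (1 : ℝ) ≤ x := fun x hx => by exact_mod_cast (hT x hx).1
  have := card_le_sub_add_one ((hone x₀ hx₀).trans (hT x₀ hx₀).2)
    fun x hx => ⟨hone x hx, (hT x hx).2⟩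
  linarith

theorem card_le_two_mul_of_abs_le {T : Finset ℤ} {b : ℝ} (hb : 0 ≤ b)
    (hT : ∀ x ∈ T, x ≠ 0 ∧ |(x : ℝ)| ≤ b) : (#T : ℝ) ≤ 2 * b := by
  have hpos : (#{x ∈ T | 0 < x} : ℝ) ≤ b := card_le_of_pos_of_le hb fun x hx =>
    ⟨(mem_filter.1 hx).2, (le_abs_self _).trans (hT x (mem_filter.1 hx).1).2⟩
  have hneg : (#({x ∈ T | ¬ 0 < x}.image Neg.neg) : ℝ) ≤ b := by
    refine card_le_of_pos_of_le hb fun z hz => ?_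
    obtain ⟨x, hx, rfl⟩ := mem_image.1 hz
    obtain ⟨hxT, hx⟩ := mem_filter.1 hx
    obtain ⟨hx0, hxb⟩ := hT x hxT
    exact ⟨by omega, by push_cast; exact (neg_le_abs _).trans hxb⟩
  rw [card_image_of_injective _ neg_injective] at hneg
  rw [← card_filter_add_card_filter_not (s := T) (fun x => 0 < x)]
  push_cast
  linarith

theorem card_le_of_pairwise_dvd_sub {T : Finset ℤ} {a b : ℝ} (hab : a ≤ b) {q : ℤ} (hq : 0 < q)
    (hT : ∀ x ∈ T, a ≤ (x : ℝ) ∧ (x : ℝ) ≤ b) (hdvd : ∀ x ∈ T, ∀ y ∈ T, q ∣ x - y) :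
    (#T : ℝ) ≤ (b - a) / q + 1 := by
  have hq' : (0 : ℝ) < q := by exact_mod_cast hq
  rcases T.eq_empty_or_nonempty with rfl | ⟨x₀, hx₀⟩
  · have : 0 ≤ (b - a) / q := div_nonneg (sub_nonneg.2 hab) hq'.le
    rw [card_empty, Nat.cast_zero]
    linarith
  have hquot : ∀ x ∈ T, x = x₀ + (x - x₀) / q * q := fun x hx => by
    rw [Int.ediv_mul_cancel (hdvd x hx x₀ hx₀)]; ring
  have hinj : Set.InjOn (fun x => (x - x₀) / q) T := fun x hx y hy hxy => by
    rw [hquot x hx, hquot y hy]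
    simp only at hxy
    rw [hxy]
  rw [← card_image_of_injOn hinj]
  refine (card_le_sub_add_one (a := (a - x₀) / q) (b := (b - x₀) / q) (by gcongr) ?_).trans
    (le_of_eq (by ring))
  intro z hz
  obtain ⟨x, hx, rfl⟩ := mem_image.1 hz
  have hx' : ((x - x₀) / q : ℤ) * (q : ℝ) = x - x₀ := by
    exact_mod_cast Int.ediv_mul_cancel (hdvd x hx x₀ hx₀)
  rw [div_le_iff₀ hq', le_div_iff₀ hq', hx']
  exact ⟨by linarith [(hT x hx).1], by linarith [(hT x hx).2]⟩

end Counting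

/-! ### The divisor bound and roots of unity modulo a cube -/

section DivisorBound

open Finset

theorem natCast_add_one_le_mul_pow {t x : ℝ} (ht : 1 < t) (htx : t ≤ x) (n : ℕ) :
    (n : ℝ) + 1 ≤ t / (t - 1) * x ^ n := by
  have hu : 0 < t - 1 := sub_pos.2 ht
  have bernoulli : 1 + n * (t - 1) ≤ t ^ n := by
    simpa using one_add_mul_le_pow (by linarith : -2 ≤ t - 1) n
  calc (n : ℝ) + 1 ≤ t / (t - 1) * (1 + n * (t - 1)) := by
        rw [div_mul_eq_mul_div, le_div_iff₀ hu]
        nlinarith [mul_nonneg n.cast_nonneg (sq_nonneg (t - 1)), n.cast_nonneg (α := ℝ)]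
    _ ≤ t / (t - 1) * t ^ n := by gcongr
    _ ≤ t / (t - 1) * x ^ n := by gcongr

theorem natCast_add_one_le_pow {x : ℝ} (hx : 2 ≤ x) (n : ℕ) : (n : ℝ) + 1 ≤ x ^ n :=
  calc (n : ℝ) + 1 ≤ 2 ^ n := by exact_mod_cast Nat.lt_two_pow_self
    _ ≤ x ^ n := by gcongr

theorem natCast_rpow_eq_prod_primeFactors {n : ℕ} (hn : n ≠ 0) (ε : ℝ) :
    (n : ℝ) ^ ε = ∏ p ∈ n.primeFactors, ((p : ℝ) ^ ε) ^ n.factorization p := by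
  conv_lhs => rw [← Nat.prod_factorization_pow_eq_self hn, Finsupp.prod]
  push_cast
  rw [← Real.finsetProd_rpow _ _ fun p _ => by positivity]
  refine prod_congr rfl fun p _ => ?_
  rw [← Real.rpow_natCast, ← Real.rpow_mul p.cast_nonneg, ← Real.rpow_natCast,
    ← Real.rpow_mul p.cast_nonneg, mul_comm]

theorem exists_card_divisors_le_rpow {ε : ℝ} (hε : 0 < ε) :
    ∃ C : ℝ, 1 ≤ C ∧ ∀ n : ℕ, n ≠ 0 → (#n.divisors : ℝ) ≤ C * (n : ℝ) ^ ε := by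
  obtain ⟨P, hP⟩ := exists_nat_gt ((2 : ℝ) ^ (1 / ε))
  set t : ℝ := 2 ^ ε
  have ht1 : 1 < t := Real.one_lt_rpow one_lt_two hε
  set K : ℝ := t / (t - 1)
  have hK : 1 ≤ K := (one_le_div (by linarith)).2 (by linarith)
  have hlocal : ∀ p : ℕ, p.Prime → ∀ k : ℕ,
      (k : ℝ) + 1 ≤ (if p < P then K else 1) * ((p : ℝ) ^ ε) ^ k := by
    intro p hp k
    split_ifs with hpP
    · exact natCast_add_one_le_mul_pow ht1
        (Real.rpow_le_rpow two_pos.le (by exact_mod_cast hp.two_le) hε.le) k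
    · rw [one_mul]
      refine natCast_add_one_le_pow ?_ k
      rw [← Real.rpow_inv_le_iff_of_pos two_pos.le p.cast_nonneg hε, ← one_div]
      exact hP.le.trans (by exact_mod_cast not_lt.1 hpP)
  refine ⟨K ^ P, one_le_pow₀ hK, fun n hn => ?_⟩
  have hsmall : ∏ p ∈ n.primeFactors, (if p < P then K else 1) ≤ K ^ P := by
    rw [prod_ite, prod_const, prod_const_one, mul_one]
    refine pow_le_pow_right₀ hK ((card_le_card fun p hp => ?_).trans (card_range P).le)
    exact mem_range.2 (mem_filter.1 hp).2
  rw [Nat.card_divisors hn, natCast_rpow_eq_prod_primeFactors hn]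
  push_cast
  calc ∏ p ∈ n.primeFactors, ((n.factorization p : ℝ) + 1)
      ≤ ∏ p ∈ n.primeFactors, ((if p < P then K else 1) * ((p : ℝ) ^ ε) ^ n.factorization p) :=
        prod_le_prod (fun p _ => by positivity)
          fun p hp => hlocal p (Nat.prime_of_mem_primeFactors hp) _
    _ = (∏ p ∈ n.primeFactors, (if p < P then K else 1)) *
          ∏ p ∈ n.primeFactors, ((p : ℝ) ^ ε) ^ n.factorization p := prod_mul_distrib
    _ ≤ K ^ P * ∏ p ∈ n.primeFactors, ((p : ℝ) ^ ε) ^ n.factorization p := by gcongr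

theorem card_rootsOfUnity_prod (k : ℕ) (R S : Type*) [CommMonoid R] [CommMonoid S] :
    Nat.card (rootsOfUnity k (R × S)) =
      Nat.card (rootsOfUnity k R) * Nat.card (rootsOfUnity k S) := by
  rw [← Nat.card_prod]
  refine Nat.card_congr ((Equiv.subtypeEquiv MulEquiv.prodUnits.toEquiv fun u => ?_).trans
    (Equiv.subtypeProdEquivProd (p := (· ∈ rootsOfUnity k R)) (q := (· ∈ rootsOfUnity k S))))
  simp only [mem_rootsOfUnity, Units.ext_iff, Prod.ext_iff]
  rfl

theorem card_rootsOfUnity_zmod_mul (k : ℕ) {m n : ℕ} (h : m.Coprime n) :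
    Nat.card (rootsOfUnity k (ZMod (m * n))) =
      Nat.card (rootsOfUnity k (ZMod m)) * Nat.card (rootsOfUnity k (ZMod n)) := by
  rw [← card_rootsOfUnity_prod]
  exact Nat.card_congr ((ZMod.chineseRemainder h).restrictRootsOfUnity k).toEquiv

theorem card_rootsOfUnity_zmod_prime_cube_le {k p : ℕ} (hk : 0 < k) (hk4 : k ≤ 4)
    (hp : p.Prime) : Nat.card (rootsOfUnity k (ZMod (p ^ 3))) ≤ 4 := by
  classical
  have : NeZero (p ^ 3) := ⟨pow_ne_zero 3 hp.ne_zero⟩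
  by_cases hp2 : p = 2
  · subst hp2
    calc Nat.card (rootsOfUnity k (ZMod (2 ^ 3)))
        ≤ Nat.card (ZMod (2 ^ 3))ˣ :=
          Nat.card_le_card_of_injective _ Subtype.val_injective
      _ = 4 := by
        rw [Nat.card_eq_fintype_card, ZMod.card_units_eq_totient,
          Nat.totient_prime_pow Nat.prime_two (by norm_num)]
        norm_num
  · have := ZMod.isCyclic_units_of_prime_pow p hp hp2 3
    have hcyclic := IsCyclic.card_pow_eq_one_le (α := (ZMod (p ^ 3))ˣ) hk
    have hcard : Nat.card (rootsOfUnity k (ZMod (p ^ 3))) =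
        #{u : (ZMod (p ^ 3))ˣ | u ^ k = 1} := by
      simp only [← Nat.subtype_card _ fun _ => mem_filter_univ _]
      rfl
    omega

theorem card_rootsOfUnity_zmod_cube_le {k y : ℕ} (hk : 0 < k) (hk4 : k ≤ 4)
    (hy : Squarefree y) : Nat.card (rootsOfUnity k (ZMod (y ^ 3))) ≤ #y.divisors ^ 2 := by
  induction y using Nat.recOnPosPrimePosCoprime with
  | prime_pow p n hp hn =>
    obtain ⟨-, rfl⟩ := (Nat.squarefree_pow_iff hp.ne_one hn.ne').1 hy
    rw [pow_one, hp.divisors, card_pair hp.ne_one.symm]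
    exact card_rootsOfUnity_zmod_prime_cube_le hk hk4 hp
  | zero => exact absurd hy not_squarefree_zero
  | one =>
    have : Subsingleton (ZMod (1 ^ 3)) := inferInstanceAs (Subsingleton (Fin 1))
    simpa using Finite.card_le_one_iff_subsingleton.2
      (inferInstance : Subsingleton (rootsOfUnity k (ZMod (1 ^ 3))))
  | coprime a b _ _ hab iha ihb =>
    rw [mul_pow, card_rootsOfUnity_zmod_mul _ (hab.pow 3 3), hab.card_divisors_mul, mul_pow]
    exact Nat.mul_le_mul (iha hy.of_mul_left) (ihb hy.of_mul_right)

theorem exists_card_rootsOfUnity_zmod_cube_le_rpow {ε : ℝ} (hε : 0 < ε) :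
    ∃ C : ℝ, 1 ≤ C ∧ ∀ k y : ℕ, 0 < k → k ≤ 4 → Squarefree y →
      (Nat.card (rootsOfUnity k (ZMod (y ^ 3))) : ℝ) ≤ C * (y : ℝ) ^ ε := by
  obtain ⟨C, hC, hdiv⟩ := exists_card_divisors_le_rpow (half_pos hε)
  refine ⟨C ^ 2, one_le_pow₀ hC, fun k y hk hk4 hy => ?_⟩
  calc (Nat.card (rootsOfUnity k (ZMod (y ^ 3))) : ℝ) ≤ (#y.divisors : ℝ) ^ 2 := by
        exact_mod_cast card_rootsOfUnity_zmod_cube_le hk hk4 hy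
    _ ≤ (C * (y : ℝ) ^ (ε / 2)) ^ 2 := by gcongr; exact hdiv y hy.ne_zero
    _ = C ^ 2 * (y : ℝ) ^ ε := by
      rw [mul_pow, ← Real.rpow_mul_natCast y.cast_nonneg, Nat.cast_ofNat,
        div_mul_cancel₀ _ two_ne_zero]

theorem card_image_le_card_rootsOfUnity {α R : Type*} [CommMonoid R] {k : ℕ}
    [Finite (rootsOfUnity k R)] [DecidableEq Rˣ] {T : Finset α} {r : α → Rˣ}
    (h : ∀ a ∈ T, ∀ b ∈ T, r a ^ k = r b ^ k) :
    #(T.image r) ≤ Nat.card (rootsOfUnity k R) := by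
  rcases T.eq_empty_or_nonempty with rfl | ⟨a₀, ha₀⟩
  · simp
  rw [← Set.ncard_coe_finset, ← Nat.card_coe_set_eq]
  refine Nat.card_le_card_of_injective
    (fun t => (⟨t * (r a₀)⁻¹, ?_⟩ : rootsOfUnity k R)) fun s t hst => ?_
  · obtain ⟨a, ha, hat⟩ := mem_image.1 (mem_coe.1 t.2)
    rw [mem_rootsOfUnity, mul_pow, ← hat, h a ha a₀ ha₀, inv_pow, mul_inv_cancel]
  · exact Subtype.ext (mul_right_cancel (congrArg Subtype.val hst))

/-- If `uᵏ / vᵏ` is constant modulo `q`, then `u / v` takes at most as many values modulo `q` as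
there are `k`-th roots of unity, so it suffices to count on each lattice `u ≡ ρ v (mod q)`. -/
theorem card_le_card_rootsOfUnity_zmod_mul {α : Type*} {k q : ℕ} (hq : q ≠ 0) {T : Finset α}
    {u v : α → ℤ} (hu : ∀ a ∈ T, IsCoprime (u a) q) (hv : ∀ a ∈ T, IsCoprime (v a) q)
    (hk : ∀ a ∈ T, ∀ b ∈ T, (q : ℤ) ∣ u a ^ k * v b ^ k - u b ^ k * v a ^ k)
    {M : ℝ} (hM : 0 ≤ M)
    (hlattice : ∀ T' ⊆ T, ∀ ρ : ℤ, (∀ a ∈ T', (q : ℤ) ∣ u a - ρ * v a) → (#T' : ℝ) ≤ M) :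
    (#T : ℝ) ≤ Nat.card (rootsOfUnity k (ZMod q)) * M := by
  classical
  have : NeZero q := ⟨hq⟩
  have exists_unit : ∀ w : α → ℤ, (∀ a ∈ T, IsCoprime (w a) q) →
      ∀ a ∈ T, ∃ U : (ZMod q)ˣ, (U : ZMod q) = w a := fun w hw a ha =>
    (ZMod.coe_int_isUnit_iff_isCoprime _ _).2 (hw a ha).symm
  choose! U hU using exists_unit u hu
  choose! V hV using exists_unit v hv
  refine card_le_mul_of_fiber_card_le (fun a => U a / V a) hM
    (Nat.cast_le.2 (card_image_le_card_rootsOfUnity fun a ha b hb => ?_)) fun b _ => ?_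
  · rw [div_pow, div_pow, div_eq_div_iff_mul_eq_mul, Units.ext_iff]
    push_cast
    rw [hU a ha, hU b hb, hV a ha, hV b hb, ← sub_eq_zero]
    exact_mod_cast (ZMod.intCast_zmod_eq_zero_iff_dvd _ q).2 (hk a ha b hb)
  · refine hlattice _ (filter_subset _ _) (b : ZMod q).cast fun a ha => ?_
    obtain ⟨haT, rfl⟩ := mem_filter.1 ha
    rw [← ZMod.intCast_zmod_eq_zero_iff_dvd]
    push_cast
    rw [← hU a haT, ← hV a haT, ← Units.val_mul, div_mul_cancel, sub_self]

end DivisorBound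

/-! ### Interpolation determinants -/

section Determinant

open Polynomial Finset

theorem exists_newton_interpolation {R : Type*} [CommRing R] (s : ℕ) (f : R[X]) (n : ℕ → R) :
    ∃ w : ℕ → R, ∀ i < s, f.eval (n i) = ∑ k ∈ range s, w k * ∏ l ∈ range k, (n i - n l) := by
  induction s generalizing f n with
  | zero => exact ⟨0, by simp⟩
  | succ s ih =>
    obtain ⟨g, hg⟩ : X - C (n 0) ∣ f - C (f.eval (n 0)) := by
      rw [dvd_iff_isRoot]; simp
    obtain ⟨w, hw⟩ := ih g fun i => n (i + 1)
    refine ⟨fun k => k.casesOn (f.eval (n 0)) w, fun i hi => ?_⟩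
    rw [sum_range_succ']
    rcases i with _ | i
    · simp [prod_range_succ']
    · have hfg : f.eval (n (i + 1)) = f.eval (n 0) + (n (i + 1) - n 0) * g.eval (n (i + 1)) := by
        have := congrArg (eval (n (i + 1))) hg
        simp only [eval_sub, eval_mul, eval_X, eval_C] at this
        linear_combination this
      rw [hfg, hw i (by omega), mul_sum, add_comm]
      simp only [prod_range_succ', prod_range_zero, mul_one]
      congr 1
      exact sum_congr rfl fun k _ => by ring

/-- The Vandermonde-like matrix of values factors through the matrix of Newton basis values, which
is lower triangular with `k`-th diagonal entry a product of `k` differences of nodes. -/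
theorem pow_dvd_det_eval {R : Type*} [CommRing R] {s : ℕ} (f : Fin s → R[X]) (n : Fin s → R)
    {p : R} (hn : ∀ i j, p ∣ n i - n j) :
    p ^ (s * (s - 1) / 2) ∣ (Matrix.of fun i j => (f j).eval (n i)).det := by
  obtain ⟨n', hn'⟩ : ∃ n' : ℕ → R, ∀ i : Fin s, n' i = n i :=
    ⟨fun i => if h : i < s then n ⟨i, h⟩ else 0, fun i => by simp⟩
  choose w hw using fun j => exists_newton_interpolation s (f j) n'
  have hfactor : (Matrix.of fun i j => (f j).eval (n i)) =
      (Matrix.of fun i k : Fin s => ∏ l ∈ range k, (n' i - n' l)) *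
        Matrix.of fun k j : Fin s => w j k := by
    ext i j
    simp only [Matrix.mul_apply, Matrix.of_apply]
    rw [← hn', hw j i i.2, sum_range]
    exact sum_congr rfl fun k _ => mul_comm _ _
  have hexp : p ^ (s * (s - 1) / 2) = ∏ k : Fin s, ∏ _l ∈ range (k : ℕ), p := by
    simp only [prod_const, card_range]
    rw [prod_pow_eq_pow_sum, Fin.sum_univ_eq_sum_range (fun i => i), sum_range_id]
  rw [hfactor, Matrix.det_mul, Matrix.det_of_isLowerTriangular, hexp]
  · refine Dvd.dvd.mul_right (prod_dvd_prod_of_dvd _ _ fun k _ =>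
      prod_dvd_prod_of_dvd _ _ fun l hl => ?_) _
    rw [hn' k, hn' ⟨l, (mem_range.1 hl).trans k.2⟩]
    exact hn _ _
  · intro i k hik
    exact prod_eq_zero (mem_range.2 (Fin.lt_def.1 hik)) (sub_self _)

theorem pow_dvd_det_of_forall_dvd_sub_eval {R : Type*} [CommRing R] {s : ℕ} (f : Fin s → R[X])
    (n : Fin s → R) {p : R} (hn : ∀ i j, p ∣ n i - n j) (M : Matrix (Fin s) (Fin s) R)
    (hM : ∀ i j, p ^ (s * (s - 1) / 2) ∣ M i j - (f j).eval (n i)) :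
    p ^ (s * (s - 1) / 2) ∣ M.det := by
  have hdvd := pow_dvd_det_eval f n hn
  set Q := p ^ (s * (s - 1) / 2)
  rw [← Ideal.mem_span_singleton, ← Ideal.Quotient.eq_zero_iff_mem, RingHom.map_det] at hdvd ⊢
  rw [← hdvd]
  congr 1
  ext i j
  exact (Ideal.Quotient.eq.2 (Ideal.mem_span_singleton.2 (hM i j)) :)

/-- Newton iteration: `v` approximates the inverse of the derivative of `c x²` at `x₀`. -/
theorem exists_polynomial_sqrt_mod_pow {R : Type*} [CommRing R] {p c x₀ v : R} (f : R[X])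
    (hv : p ∣ 1 - 2 * c * x₀ * v) (k : ℕ) :
    ∃ g : R[X], ∀ n x : R, p ∣ x - x₀ → c * x ^ 2 = f.eval n → p ^ (k + 1) ∣ x - g.eval n := by
  induction k with
  | zero => exact ⟨C x₀, fun n x hx _ => by simpa using hx⟩
  | succ k ih =>
    obtain ⟨g, hg⟩ := ih
    refine ⟨g + C v * (f - C c * g ^ 2), fun n x hx hf => ?_⟩
    have hxg := hg n x hx hf
    have herror : x - (g + C v * (f - C c * g ^ 2)).eval n =
        (x - g.eval n) * (1 - c * v * (x + g.eval n)) := by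
      simp only [eval_add, eval_mul, eval_C, eval_sub, eval_pow, ← hf]
      ring
    have hderiv : 1 - c * v * (x + g.eval n) =
        (1 - 2 * c * x₀ * v) - c * v * 2 * (x - x₀) + c * v * (x - g.eval n) := by ring
    rw [herror, pow_succ, hderiv]
    exact mul_dvd_mul hxg (dvd_add (dvd_sub hv (hx.mul_left _))
      (((dvd_pow_self p k.succ_ne_zero).trans hxg).mul_left _))

theorem exists_linearIndependent_of_span_eq_top {K ι : Type*} [Field K] {s : ℕ} {S : Set ι}
    {ψ : ι → Fin s → K} (h : Submodule.span K (ψ '' S) = ⊤) :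
    ∃ t : Fin s → ι, (∀ i, t i ∈ S) ∧ LinearIndependent K fun i => ψ (t i) := by
  obtain ⟨b, hbS, hspan, hli⟩ := exists_linearIndependent K (ψ '' S)
  let basis := Module.Basis.mk hli (by rw [Subtype.range_coe, hspan, h])
  have : Fintype b := FiniteDimensional.fintypeBasisIndex basis
  have hcard : Fintype.card b = s := by
    rw [← Module.finrank_eq_card_basis basis, Module.finrank_fin_fun]
  let e : Fin s ≃ b := (Fintype.equivFinOfCardEq hcard).symm
  choose t ht hψ using fun i => hbS (e i).2
  refine ⟨t, ht, ?_⟩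
  simp only [hψ]
  exact hli.comp e e.injective

theorem exists_linear_relation_of_det_eq_zero {α : Type*} {s : ℕ} {S : Set α}
    (φ : α → Fin s → ℤ)
    (h : ∀ t : Fin s → α, (∀ i, t i ∈ S) → (Matrix.of fun i j => φ (t i) j).det = 0) :
    ∃ v : Fin s → ℚ, v ≠ 0 ∧ ∀ t ∈ S, ∑ j, v j * (φ t j : ℚ) = 0 := by
  let ψ : α → Fin s → ℚ := fun t j => φ t j
  have hspan : Submodule.span ℚ (ψ '' S) < ⊤ := by
    refine lt_top_iff_ne_top.2 fun htop => ?_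
    obtain ⟨t, ht, hli⟩ := exists_linearIndependent_of_span_eq_top htop
    have hunit := Matrix.linearIndependent_rows_iff_isUnit.1
      (show LinearIndependent ℚ (Matrix.of fun i => ψ (t i)).row from hli)
    refine (Matrix.isUnit_iff_isUnit_det _ |>.1 hunit).ne_zero ?_
    have := congrArg (Int.castRingHom ℚ) (h t ht)
    rwa [RingHom.map_det, map_zero] at this
  obtain ⟨F, hF0, hF⟩ := Submodule.exists_le_ker_of_lt_top _ hspan
  refine ⟨fun j => F (Pi.single j 1), fun h0 => hF0 ?_, fun t ht => ?_⟩
  · exact LinearMap.pi_ext' fun j => LinearMap.ext_ring (by simpa using congrFun h0 j)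
  · have hFt : F (ψ t) = 0 := hF (Submodule.subset_span ⟨t, ht, rfl⟩)
    rw [LinearMap.pi_apply_eq_sum_univ] at hFt
    rw [← hFt]
    refine sum_congr rfl fun j _ => ?_
    have hsingle : (Pi.single j 1 : Fin s → ℚ) = fun k => if j = k then 1 else 0 :=
      funext fun k => by simp only [Pi.single_apply, eq_comm]
    simp only [hsingle, smul_eq_mul, mul_comm, ψ]

theorem abs_det_le_factorial_mul_prod {ι R : Type*} [Fintype ι] [DecidableEq ι] [CommRing R]
    [LinearOrder R] [IsStrictOrderedRing R] (M : Matrix ι ι R) {b : ι → R}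
    (hb : ∀ i j, |M i j| ≤ b j) :
    |M.det| ≤ (Fintype.card ι).factorial * ∏ j, b j := by
  rw [Matrix.det_apply]
  calc |∑ σ : Equiv.Perm ι, Equiv.Perm.sign σ • ∏ i, M (σ i) i|
      ≤ ∑ σ : Equiv.Perm ι, |Equiv.Perm.sign σ • ∏ i, M (σ i) i| := abs_sum_le_sum_abs _ _
    _ = ∑ σ : Equiv.Perm ι, ∏ i, |M (σ i) i| := sum_congr rfl fun σ _ => by
      rw [← abs_prod]
      exact AbsoluteValue.abs.map_units_int_smul _ _
    _ ≤ ∑ _σ : Equiv.Perm ι, ∏ j, b j :=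
      sum_le_sum fun σ _ => prod_le_prod (fun _ _ => abs_nonneg _) fun i _ => hb _ i
    _ = (Fintype.card ι).factorial * ∏ j, b j := by
      rw [sum_const, card_univ, Fintype.card_perm, nsmul_eq_mul]

end Determinant

/-! ### Integral points on curves -/

section CurvePoints

open Polynomial Finset

/-- The monomials `1, n, …, n^(r-1), x, x n, …, x n^(r-1)` used in the determinant method on
curves `c x² = f n`. -/
def curveMonomials {R : Type*} [CommRing R] (r : ℕ) (n x : R) : Fin (r + r) → R :=
  Fin.append (fun i : Fin r => n ^ (i : ℕ)) fun i : Fin r => x * n ^ (i : ℕ)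

theorem map_curveMonomials {R S : Type*} [CommRing R] [CommRing S] (φ : R →+* S) (r : ℕ)
    (n x : R) (j : Fin (r + r)) :
    φ (curveMonomials r n x j) = curveMonomials r (φ n) (φ x) j := by
  refine Fin.addCases (fun i => ?_) (fun i => ?_) j <;>
    simp only [curveMonomials, Fin.append_left, Fin.append_right, map_mul, map_pow]

theorem prod_curveMonomials {R : Type*} [CommRing R] (r : ℕ) (n x : R) :
    ∏ j, curveMonomials r n x j = n ^ (r * (r - 1)) * x ^ r := by
  simp only [curveMonomials, Fin.prod_univ_add, Fin.append_left, Fin.append_right,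
    prod_mul_distrib, prod_const, card_univ, Fintype.card_fin, prod_pow_eq_pow_sum]
  rw [Fin.sum_univ_eq_sum_range fun i => i, ← sum_range_id_mul_two]
  ring

theorem dvd_curveMonomials_sub {R : Type*} [CommRing R] {q x x' : R} (r : ℕ) (n : R)
    (h : q ∣ x - x') (j : Fin (r + r)) :
    q ∣ curveMonomials r n x j - curveMonomials r n x' j := by
  refine Fin.addCases (fun i => ?_) (fun i => ?_) j
  · simp [curveMonomials]
  · simpa only [curveMonomials, Fin.append_right, ← sub_mul] using h.mul_right _

theorem abs_curveMonomials_le {R : Type*} [CommRing R] [LinearOrder R] [IsStrictOrderedRing R]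
    {n x N W : R} (r : ℕ) (hn : |n| ≤ N) (hx : |x| ≤ W) (j : Fin (r + r)) :
    |curveMonomials r n x j| ≤ curveMonomials r N W j := by
  have hW : 0 ≤ W := (abs_nonneg x).trans hx
  refine Fin.addCases (fun i => ?_) (fun i => ?_) j
  · simpa only [curveMonomials, Fin.append_left, abs_pow] using
      pow_le_pow_left₀ (abs_nonneg n) hn _
  · simpa only [curveMonomials, Fin.append_right, abs_mul, abs_pow] using
      mul_le_mul hx (pow_le_pow_left₀ (abs_nonneg n) hn _) (by positivity) hW

theorem add_self_mul_pred_div_two (r : ℕ) : (r + r) * (r + r - 1) / 2 = r * (2 * r - 1) := by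
  rw [← two_mul, mul_assoc, Nat.mul_div_cancel_left _ two_pos]

/-- The matrix entries are, modulo a high power of `p`, polynomials in `n` alone, so that the
determinant is divisible by a power of `p` exceeding its trivial upper bound. -/
theorem det_curveMonomials_eq_zero {r : ℕ} {p c x₀ v : ℤ} {f : ℤ[X]} {N W : ℝ}
    (hv : p ∣ 1 - 2 * c * x₀ * v)
    (hp : ((r + r).factorial : ℝ) * (N ^ (r * (r - 1)) * W ^ r) < (p : ℝ) ^ (r * (2 * r - 1)))
    (t : Fin (r + r) → ℤ × ℤ) (hn : ∀ i, |((t i).1 : ℝ)| ≤ N) (hx : ∀ i, |((t i).2 : ℝ)| ≤ W)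
    (hcurve : ∀ i, c * (t i).2 ^ 2 = f.eval (t i).1)
    (hpn : ∀ i j, p ∣ (t i).1 - (t j).1) (hpx : ∀ i, p ∣ (t i).2 - x₀) :
    (Matrix.of fun i j => curveMonomials r (t i).1 (t i).2 j).det = 0 := by
  obtain ⟨g, hg⟩ := exists_polynomial_sqrt_mod_pow f hv (r * (2 * r - 1))
  have hdvd : p ^ (r * (2 * r - 1)) ∣
      (Matrix.of fun i j => curveMonomials r (t i).1 (t i).2 j).det := by
    rw [← add_self_mul_pred_div_two]
    refine pow_dvd_det_of_forall_dvd_sub_eval (curveMonomials r X g) (fun i => (t i).1) hpn _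
      fun i j => ?_
    have heval : (curveMonomials r X g j).eval (t i).1 =
        curveMonomials r (t i).1 (g.eval (t i).1) j := by
      simpa using map_curveMonomials (evalRingHom (t i).1) r X g j
    rw [heval, add_self_mul_pred_div_two]
    exact dvd_curveMonomials_sub r _ ((pow_dvd_pow p (Nat.le_succ _)).trans
      (hg _ _ (hpx i) (hcurve i))) j
  by_contra hdet
  have hlower : (p : ℝ) ^ (r * (2 * r - 1)) ≤
      |((Matrix.of fun i j => curveMonomials r (t i).1 (t i).2 j).det : ℝ)| := by
    exact_mod_cast Int.le_of_dvd (abs_pos.2 hdet) ((dvd_abs _ _).2 hdvd)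
  have hupper := abs_det_le_factorial_mul_prod
    ((Matrix.of fun i j => curveMonomials r (t i).1 (t i).2 j).map (Int.castRingHom ℝ))
    (b := curveMonomials r N W) fun i j => by
      rw [Matrix.map_apply, Matrix.of_apply, map_curveMonomials]
      exact abs_curveMonomials_le r (hn i) (hx i) j
  rw [prod_curveMonomials, Fintype.card_fin, ← RingHom.mapMatrix_apply, ← RingHom.map_det]
    at hupper
  exact absurd (hlower.trans hupper) hp.not_ge

/-- `√(f / c)` is not a rational function over `ℚ`, the standing assumption on a curve
`c x² = f(n)`. Clearing denominators lets the definition also exclude `c = 0`. -/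
def SqrtIrrational (c : ℤ) (f : ℤ[X]) : Prop :=
  ∀ A B : ℚ[X], C (c : ℚ) * A ^ 2 = f.map (Int.castRingHom ℚ) * B ^ 2 → A = 0 ∧ B = 0

theorem SqrtIrrational.ne_zero {c : ℤ} {f : ℤ[X]} (h : SqrtIrrational c f) : c ≠ 0 := by
  rintro rfl
  exact one_ne_zero (h 1 0 (by simp)).1

theorem curve_injOn_fst {c : ℤ} {f : ℤ[X]} (hc : c ≠ 0) {T : Set (ℤ × ℤ)}
    (hx : ∀ t ∈ T, 0 < t.2) (hcurve : ∀ t ∈ T, c * t.2 ^ 2 = f.eval t.1) :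
    Set.InjOn Prod.fst T := by
  intro t ht u hu htu
  have hsq : t.2 ^ 2 = u.2 ^ 2 :=
    mul_left_cancel₀ hc (by rw [hcurve t ht, hcurve u hu, htu])
  exact Prod.ext htu ((pow_left_inj₀ (hx t ht).le (hx u hu).le two_ne_zero).1 hsq)

theorem coeff_sum_C_mul_X_pow {R : Type*} [Semiring R] {r : ℕ} (w : Fin r → R) (i : Fin r) :
    (∑ k : Fin r, C (w k) * X ^ (k : ℕ)).coeff i = w i := by
  simp [finsetSum_coeff, Fin.val_inj]

theorem natDegree_sum_C_mul_X_pow_le {R : Type*} [Semiring R] {r : ℕ} (w : Fin r → R) :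
    (∑ k : Fin r, C (w k) * X ^ (k : ℕ)).natDegree ≤ r - 1 :=
  natDegree_sum_le_of_forall_le _ _ fun i _ =>
    (natDegree_C_mul_X_pow_le _ _).trans (Nat.le_sub_one_of_lt i.2)

theorem exists_polynomial_relation_of_curveMonomials {r : ℕ} {w : Fin (r + r) → ℚ} (hw : w ≠ 0) :
    ∃ A B : ℚ[X], A.natDegree ≤ r - 1 ∧ B.natDegree ≤ r - 1 ∧ ¬ (A = 0 ∧ B = 0) ∧
      ∀ n x : ℤ, ∑ j, w j * ((curveMonomials r n x j : ℤ) : ℚ) = 0 →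
        A.eval (n : ℚ) + x * B.eval (n : ℚ) = 0 := by
  refine ⟨∑ k : Fin r, C (w (Fin.castAdd r k)) * X ^ (k : ℕ),
    ∑ k : Fin r, C (w (Fin.natAdd r k)) * X ^ (k : ℕ), natDegree_sum_C_mul_X_pow_le _,
    natDegree_sum_C_mul_X_pow_le _, fun ⟨hA, hB⟩ => hw ?_, fun n x hrel => ?_⟩
  · refine funext fun j => Fin.addCases (fun i => ?_) (fun i => ?_) j
    · simpa only [hA, coeff_zero, Pi.zero_apply] using
        (coeff_sum_C_mul_X_pow (fun k => w (Fin.castAdd r k)) i).symm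
    · simpa only [hB, coeff_zero, Pi.zero_apply] using
        (coeff_sum_C_mul_X_pow (fun k => w (Fin.natAdd r k)) i).symm
  · rw [← hrel, Fin.sum_univ_add]
    simp only [curveMonomials, Fin.append_left, Fin.append_right, eval_finsetSum, eval_mul,
      eval_C, eval_pow, eval_X, mul_sum, Int.cast_pow, Int.cast_mul, mul_left_comm]

/-- Eliminating `x` from the relation `A(n) + x B(n) = 0` leaves a non-zero polynomial
`c A² - f B²` in `n`. -/
theorem SqrtIrrational.card_le_of_relation {c : ℤ} {f : ℤ[X]} (h : SqrtIrrational c f)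
    {A B : ℚ[X]} {m : ℕ} (hA : A.natDegree ≤ m) (hB : B.natDegree ≤ m) (hAB : ¬ (A = 0 ∧ B = 0))
    {T : Finset (ℤ × ℤ)} (hx : ∀ t ∈ T, 0 < t.2) (hcurve : ∀ t ∈ T, c * t.2 ^ 2 = f.eval t.1)
    (hrel : ∀ t ∈ T, A.eval (t.1 : ℚ) + t.2 * B.eval (t.1 : ℚ) = 0) :
    #T ≤ 2 * m + f.natDegree := by
  set G : ℚ[X] := C (c : ℚ) * A ^ 2 - f.map (Int.castRingHom ℚ) * B ^ 2 with hG
  have hG0 : G ≠ 0 := fun h0 => hAB (h A B (sub_eq_zero.1 h0))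
  have hdegree : G.natDegree ≤ 2 * m + f.natDegree := by
    have hA2 : (A ^ 2).natDegree ≤ 2 * A.natDegree := natDegree_pow_le
    have hB2 : (B ^ 2).natDegree ≤ 2 * B.natDegree := natDegree_pow_le
    have hf : (f.map (Int.castRingHom ℚ)).natDegree ≤ f.natDegree := natDegree_map_le
    refine (natDegree_sub_le _ _).trans (max_le ?_ ?_)
    · exact (natDegree_C_mul_le _ _).trans (by lia)
    · exact natDegree_mul_le.trans (by lia)
  have hroot : ∀ t ∈ T, G.eval (t.1 : ℚ) = 0 := by
    intro t ht
    have hf : (f.map (Int.castRingHom ℚ)).eval (t.1 : ℚ) = c * (t.2 : ℚ) ^ 2 := by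
      rw [eval_intCast_map, Int.cast_id, ← hcurve t ht]
      simp
    rw [hG, eval_sub, eval_mul, eval_mul, hf, eval_C, eval_pow, eval_pow,
      eq_neg_of_add_eq_zero_left (hrel t ht)]
    ring
  have hinj : Set.InjOn (fun t : ℤ × ℤ => (t.1 : ℚ)) T :=
    Int.cast_injective.comp_injOn (curve_injOn_fst h.ne_zero hx hcurve)
  calc #T = #(T.image fun t : ℤ × ℤ => (t.1 : ℚ)) := (card_image_of_injOn hinj).symm
    _ ≤ #G.roots.toFinset := card_le_card <| image_subset_iff.2 fun t ht =>
      Multiset.mem_toFinset.2 ((mem_roots hG0).2 (hroot t ht))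
    _ ≤ G.natDegree := (Multiset.toFinset_card_le _).trans (card_roots' G)
    _ ≤ 2 * m + f.natDegree := hdegree

theorem SqrtIrrational.card_residue_class_le {r : ℕ} {p c x₀ v : ℤ} {f : ℤ[X]}
    (h : SqrtIrrational c f) {N W : ℝ} (hv : p ∣ 1 - 2 * c * x₀ * v)
    (hp : ((r + r).factorial : ℝ) * (N ^ (r * (r - 1)) * W ^ r) < (p : ℝ) ^ (r * (2 * r - 1)))
    {T : Finset (ℤ × ℤ)} (hcurve : ∀ t ∈ T, c * t.2 ^ 2 = f.eval t.1)
    (hN : ∀ t ∈ T, |(t.1 : ℝ)| ≤ N) (hW : ∀ t ∈ T, 0 < t.2 ∧ (t.2 : ℝ) ≤ W)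
    (hpn : ∀ t ∈ T, ∀ u ∈ T, p ∣ t.1 - u.1) (hpx : ∀ t ∈ T, p ∣ t.2 - x₀) :
    #T ≤ 2 * (r - 1) + f.natDegree := by
  obtain ⟨w, hw0, hw⟩ := exists_linear_relation_of_det_eq_zero (S := (T : Set (ℤ × ℤ)))
    (fun t => curveMonomials r t.1 t.2) fun t ht =>
      det_curveMonomials_eq_zero hv hp t (fun i => hN _ (ht i))
        (fun i => by
          have hpos : (0 : ℝ) < (t i).2 := by exact_mod_cast (hW _ (ht i)).1
          rw [abs_of_pos hpos]
          exact (hW _ (ht i)).2)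
        (fun i => hcurve _ (ht i)) (fun i j => hpn _ (ht i) _ (ht j)) fun i => hpx _ (ht i)
  obtain ⟨A, B, hA, hB, hAB, hrel⟩ := exists_polynomial_relation_of_curveMonomials hw0
  exact h.card_le_of_relation hA hB hAB (fun t ht => (hW t ht).1) hcurve
    fun t ht => hrel _ _ (hw t ht)

theorem exists_card_eq_and_forall_prime_mem_Ioc (m : ℕ) {n : ℕ} (hn : n ≠ 0) :
    ∃ S : Finset ℕ, #S = m ∧ ∀ p ∈ S, p.Prime ∧ n < p ∧ p ≤ 2 ^ m * n := by
  induction m generalizing n with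
  | zero => exact ⟨∅, by simp⟩
  | succ m ih =>
    obtain ⟨p, hp, hnp, hpn⟩ := Nat.exists_prime_lt_and_le_two_mul n hn
    obtain ⟨S, hS, hmem⟩ := ih hp.ne_zero
    have hpS : p ∉ S := fun h => lt_irrefl _ (hmem p h).2.1
    refine ⟨insert p S, by rw [card_insert_of_notMem hpS, hS], fun q hq => ?_⟩
    rcases mem_insert.1 hq with rfl | hq
    · exact ⟨hp, hnp, hpn.trans (Nat.mul_le_mul_right n (Nat.le_self_pow m.succ_ne_zero 2))⟩
    · obtain ⟨hprime, hpq, hqp⟩ := hmem q hq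
      refine ⟨hprime, hnp.trans hpq, hqp.trans ?_⟩
      rw [pow_succ, mul_assoc]
      exact Nat.mul_le_mul_left _ hpn

/-- Modulo `p` the ordinate of a point is determined up to sign by its abscissa. -/
theorem SqrtIrrational.card_le_of_forall_dvd_sub {r : ℕ} {p c : ℤ} (hprime : Prime p) {f : ℤ[X]}
    (h : SqrtIrrational c f) {N W : ℝ}
    (hp : ((r + r).factorial : ℝ) * (N ^ (r * (r - 1)) * W ^ r) < (p : ℝ) ^ (r * (2 * r - 1)))
    {T : Finset (ℤ × ℤ)} (hcurve : ∀ t ∈ T, c * t.2 ^ 2 = f.eval t.1)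
    (hN : ∀ t ∈ T, |(t.1 : ℝ)| ≤ N) (hW : ∀ t ∈ T, 0 < t.2 ∧ (t.2 : ℝ) ≤ W)
    (hunit : ∀ t ∈ T, ¬ p ∣ 2 * c * t.2) (hpn : ∀ t ∈ T, ∀ u ∈ T, p ∣ t.1 - u.1) :
    #T ≤ 2 * (2 * (r - 1) + f.natDegree) := by
  obtain rfl | ⟨t₀, ht₀⟩ := T.eq_empty_or_nonempty
  · simp
  obtain ⟨w, v, hv⟩ := (Prime.coprime_iff_not_dvd hprime).2 (hunit t₀ ht₀)
  have hclass : ∀ x₀ v : ℤ, p ∣ 1 - 2 * c * x₀ * v →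
      #{t ∈ T | p ∣ t.2 - x₀} ≤ 2 * (r - 1) + f.natDegree := by
    intro x₀ v hv
    have hsub : ∀ t ∈ {t ∈ T | p ∣ t.2 - x₀}, t ∈ T := fun t ht => (mem_filter.1 ht).1
    exact h.card_residue_class_le hv hp (fun t ht => hcurve t (hsub t ht))
      (fun t ht => hN t (hsub t ht)) (fun t ht => hW t (hsub t ht))
      (fun t ht u hu => hpn t (hsub t ht) u (hsub u hu)) fun t ht => (mem_filter.1 ht).2
  have hcover : T ⊆ {t ∈ T | p ∣ t.2 - t₀.2} ∪ {t ∈ T | p ∣ t.2 - -t₀.2} := by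
    intro t ht
    have hdvd := (hpn t ht t₀ ht₀).trans (sub_dvd_eval_sub t.1 t₀.1 f)
    rw [← hcurve t ht, ← hcurve t₀ ht₀, show c * t.2 ^ 2 - c * t₀.2 ^ 2 =
      c * ((t.2 - t₀.2) * (t.2 - -t₀.2)) by ring] at hdvd
    rcases (hprime.dvd_or_dvd hdvd).imp_right hprime.dvd_or_dvd with hc | hsub | hadd
    · exact absurd ((hc.mul_left 2).mul_right _) (hunit t ht)
    · exact mem_union_left _ (mem_filter.2 ⟨ht, hsub⟩)
    · exact mem_union_right _ (mem_filter.2 ⟨ht, hadd⟩)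
  have hplus := hclass t₀.2 v ⟨w, by linear_combination -hv⟩
  have hminus := hclass (-t₀.2) (-v) ⟨w, by linear_combination -hv⟩
  have := (card_le_card hcover).trans (card_union_le _ _)
  lia

theorem SqrtIrrational.card_le_of_prime {r p : ℕ} (hprime : p.Prime) {c : ℤ} {f : ℤ[X]}
    (h : SqrtIrrational c f) {N W : ℝ}
    (hp : ((r + r).factorial : ℝ) * (N ^ (r * (r - 1)) * W ^ r) < (p : ℝ) ^ (r * (2 * r - 1)))
    {T : Finset (ℤ × ℤ)} (hcurve : ∀ t ∈ T, c * t.2 ^ 2 = f.eval t.1)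
    (hN : ∀ t ∈ T, |(t.1 : ℝ)| ≤ N) (hW : ∀ t ∈ T, 0 < t.2 ∧ (t.2 : ℝ) ≤ W)
    (hunit : ∀ t ∈ T, ¬ (p : ℤ) ∣ 2 * c * t.2) :
    #T ≤ 2 * (2 * (r - 1) + f.natDegree) * p := by
  have : NeZero p := ⟨hprime.ne_zero⟩
  have hfiber : ∀ n ∈ (univ : Finset (ZMod p)),
      #{t ∈ T | (t.1 : ZMod p) = n} ≤ 2 * (2 * (r - 1) + f.natDegree) := by
    intro n _
    have hmem : ∀ t ∈ {t ∈ T | (t.1 : ZMod p) = n}, t ∈ T := fun t ht => (mem_filter.1 ht).1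
    exact h.card_le_of_forall_dvd_sub (Nat.prime_iff_prime_int.1 hprime) (by simpa using hp)
      (fun t ht => hcurve t (hmem t ht)) (fun t ht => hN t (hmem t ht))
      (fun t ht => hW t (hmem t ht)) (fun t ht => hunit t (hmem t ht))
      fun t ht u hu => (ZMod.intCast_eq_intCast_iff_dvd_sub _ _ _).1
        ((mem_filter.1 hu).2.trans (mem_filter.1 ht).2.symm)
  simpa only [card_univ, ZMod.card] using
    card_le_mul_card_image_of_maps_to (fun t _ => mem_coe.2 (mem_univ _)) _ hfiber

end CurvePoints

section CurvePointCount

open Polynomial Finset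

theorem card_le_sum_card_filter_not_dvd {α : Type*} {S : Finset ℕ} (hS : ∀ p ∈ S, p.Prime)
    {T : Finset α} {g : α → ℤ} (hg : ∀ a ∈ T, g a ≠ 0)
    (hlt : ∀ a ∈ T, (g a).natAbs < ∏ p ∈ S, p) :
    #T ≤ ∑ p ∈ S, #{a ∈ T | ¬ (p : ℤ) ∣ g a} := by
  classical
  refine (card_le_card fun a ha => ?_).trans
    (card_biUnion_le (t := fun p : ℕ => {a ∈ T | ¬ (p : ℤ) ∣ g a}))
  by_contra hcon
  simp only [mem_biUnion, mem_filter, not_exists, not_and, not_not] at hcon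
  have hprod : ∏ p ∈ S, p ∣ (g a).natAbs := prod_primes_dvd _ (fun p hp => (hS p hp).prime)
    fun p hp => Int.natCast_dvd.1 (hcon p hp ha)
  exact (Nat.le_of_dvd (Int.natAbs_pos.2 (hg a ha)) hprod).not_gt (hlt a ha)

theorem mul_pow_mul_pow_lt_pow {F ν w p : ℝ} (hF : 1 ≤ F) (hν : 1 ≤ ν) (hw : 1 ≤ w)
    (hp : F * ν * w < p) {r : ℕ} (hr : 1 ≤ r) :
    F * ((ν ^ 2) ^ (r * (r - 1)) * (w ^ (2 * r - 1)) ^ r) < p ^ (r * (2 * r - 1)) := by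
  have he : r * (2 * r - 1) ≠ 0 := Nat.mul_ne_zero (by lia) (by lia)
  have hexp : 2 * (r * (r - 1)) ≤ r * (2 * r - 1) := by
    rw [mul_left_comm]
    exact Nat.mul_le_mul_left _ (by lia)
  calc F * ((ν ^ 2) ^ (r * (r - 1)) * (w ^ (2 * r - 1)) ^ r)
      ≤ F ^ (r * (2 * r - 1)) * (ν ^ (r * (2 * r - 1)) * w ^ (r * (2 * r - 1))) := by
        rw [← pow_mul, ← pow_mul, mul_comm (2 * r - 1) r]
        gcongr
        exact le_self_pow₀ hF he
    _ = (F * ν * w) ^ (r * (2 * r - 1)) := by rw [mul_pow, mul_pow, mul_assoc]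
    _ < p ^ (r * (2 * r - 1)) := pow_lt_pow_left₀ hp (by positivity) he

/-- Any `3 (2r - 1)` primes exceeding `w` have product larger than `2 |c| x ≤ (w ^ (2r - 1)) ^ 3`,
so every point of the curve is a non-singular point modulo one of them. -/
theorem SqrtIrrational.card_le_mul_mul {c : ℤ} {f : ℤ[X]} (h : SqrtIrrational c f) {r : ℕ}
    (hr : 1 ≤ r) {ν w : ℝ} (hν : 1 ≤ ν) (hw : 1 ≤ w) (hw2 : 2 ≤ w ^ (2 * r - 1))
    (hc : |(c : ℝ)| ≤ w ^ (2 * r - 1)) {T : Finset (ℤ × ℤ)}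
    (hcurve : ∀ t ∈ T, c * t.2 ^ 2 = f.eval t.1) (hN : ∀ t ∈ T, |(t.1 : ℝ)| ≤ ν ^ 2)
    (hW : ∀ t ∈ T, 0 < t.2 ∧ (t.2 : ℝ) ≤ w ^ (2 * r - 1)) :
    (#T : ℝ) ≤ (3 * (2 * r - 1) : ℕ) * ((2 * (2 * (r - 1) + f.natDegree) : ℕ) *
      (2 ^ (3 * (2 * r - 1)) * (2 * ((r + r).factorial * ν * w)))) := by
  have hF : (1 : ℝ) ≤ (r + r).factorial := mod_cast (r + r).factorial_pos
  set Q : ℝ := (r + r).factorial * ν * w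
  have hwQ : w ≤ Q := le_mul_of_one_le_left (by linarith) (one_le_mul_of_one_le_of_one_le hF hν)
  obtain ⟨S, hcard, hS⟩ := exists_card_eq_and_forall_prime_mem_Ioc (3 * (2 * r - 1))
    (Nat.ceil_pos.2 (by linarith : 0 < Q)).ne'
  have hQp : ∀ p ∈ S, Q < p := fun p hp =>
    (Nat.le_ceil Q).trans_lt (by exact_mod_cast (hS p hp).2.1)
  have hprod : (w ^ (2 * r - 1)) ^ 3 < ((∏ p ∈ S, p : ℕ) : ℝ) := by
    rw [← pow_mul, mul_comm _ 3, ← hcard, ← prod_const, Nat.cast_prod]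
    exact prod_lt_prod_of_nonempty (fun _ _ => by linarith)
      (fun p hp => hwQ.trans_lt (hQp p hp)) (card_pos.1 (by lia))
  have hcount := card_le_sum_card_filter_not_dvd (g := fun t => 2 * c * t.2)
    (fun p hp => (hS p hp).1) (T := T)
    (fun t ht => mul_ne_zero (mul_ne_zero two_ne_zero h.ne_zero) (hW t ht).1.ne') fun t ht => by
      have hpos : (0 : ℝ) < t.2 := mod_cast (hW t ht).1
      have hle : |2 * (c : ℝ) * t.2| ≤ (w ^ (2 * r - 1)) ^ 3 := by
        rw [abs_mul, abs_mul, abs_of_pos hpos, abs_two, pow_three, mul_assoc]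
        gcongr
        exact (hW t ht).2
      rw [← Nat.cast_lt (α := ℝ), Nat.cast_natAbs]
      push_cast at hprod ⊢
      exact hle.trans_lt hprod
  refine (Nat.cast_le.2 hcount).trans ?_
  rw [Nat.cast_sum, ← hcard, ← nsmul_eq_mul]
  refine sum_le_card_nsmul _ _ _ fun p hp => ?_
  have hle := h.card_le_of_prime (hS p hp).1 (mul_pow_mul_pow_lt_pow hF hν hw (hQp p hp) hr)
    (fun t ht => hcurve t (mem_filter.1 ht).1) (fun t ht => hN t (mem_filter.1 ht).1)
    (fun t ht => hW t (mem_filter.1 ht).1) fun t ht => (mem_filter.1 ht).2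
  refine (Nat.cast_le.2 hle).trans ?_
  rw [Nat.cast_mul]
  gcongr
  calc (p : ℝ) ≤ 2 ^ #S * (⌈Q⌉₊ : ℝ) := by rw [hcard]; exact_mod_cast (hS p hp).2.2
    _ ≤ 2 ^ #S * (2 * Q) := by
      gcongr
      linarith [Nat.ceil_lt_add_one (by linarith : 0 ≤ Q)]

theorem exists_card_curvePoints_le (D : ℕ) {η : ℝ} (hη : 0 < η) :
    ∃ K : ℝ, 1 ≤ K ∧ ∀ (W N : ℝ) (c : ℤ) (f : ℤ[X]) (T : Finset (ℤ × ℤ)), 2 ≤ W → 1 ≤ N →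
      |(c : ℝ)| ≤ W → f.natDegree ≤ D → SqrtIrrational c f →
      (∀ t ∈ T, c * t.2 ^ 2 = f.eval t.1) → (∀ t ∈ T, |(t.1 : ℝ)| ≤ N) →
      (∀ t ∈ T, 0 < t.2 ∧ (t.2 : ℝ) ≤ W) → (#T : ℝ) ≤ K * W ^ η * √N := by
  obtain ⟨r, hr⟩ := exists_nat_gt (1 / η)
  have hr0 : (0 : ℝ) < r := (by positivity : (0 : ℝ) < 1 / η).trans hr
  have hr1 : 1 ≤ r := by exact_mod_cast hr0
  have hd : 0 < 2 * r - 1 := by lia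
  have hdη : ((2 * r - 1 : ℕ) : ℝ)⁻¹ ≤ η := by
    rw [inv_le_comm₀ (by exact_mod_cast hd) hη, ← one_div]
    exact hr.le.trans (by exact_mod_cast (by lia : r ≤ 2 * r - 1))
  have hK : (1 : ℝ) ≤ ((3 * (2 * r - 1)) * (2 * (2 * r + D) * (2 ^ (3 * (2 * r - 1)) *
      (2 * (r + r).factorial))) : ℕ) := by
    exact_mod_cast Nat.pos_of_ne_zero (by positivity)
  refine ⟨_, hK, fun W N c f T hW hN hc hf h hcurve hTN hTW => ?_⟩
  have hwd : (W ^ ((2 * r - 1 : ℕ) : ℝ)⁻¹) ^ (2 * r - 1) = W :=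
    Real.rpow_inv_natCast_pow (by linarith) hd.ne'
  have hcount := h.card_le_mul_mul hr1 (ν := √N) (w := W ^ ((2 * r - 1 : ℕ) : ℝ)⁻¹)
    (Real.one_le_sqrt.2 hN) (Real.one_le_rpow (by linarith) (by positivity))
    (by rwa [hwd]) (by rwa [hwd]) hcurve (by rwa [Real.sq_sqrt (by linarith)]) (by rwa [hwd])
  calc (#T : ℝ) ≤ _ := hcount
    _ ≤ (3 * (2 * r - 1) : ℕ) * ((2 * (2 * r + D) : ℕ) *
      (2 ^ (3 * (2 * r - 1)) * (2 * ((r + r).factorial * √N * W ^ η)))) := by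
        gcongr
        · exact Nat.sub_le r 1
        · linarith
    _ = _ := by
      push_cast
      ring

theorem eq_zero_of_C_mul_sq_eq_mul_sq {K : Type*} [Field K] {c : K} (hc : c ≠ 0) {F : K[X]}
    (hF : Squarefree F) (hunit : ¬ IsUnit F) {A B : K[X]} (h : C c * A ^ 2 = F * B ^ 2) :
    A = 0 ∧ B = 0 := by
  have hF0 : F ≠ 0 := hF.ne_zero
  by_cases hA : A = 0
  · subst hA
    simpa [hF0, eq_comm] using h
  exfalso
  have hsq : A ^ 2 ∣ (F * B) ^ 2 := ⟨C c * F, by linear_combination -F * h⟩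
  obtain ⟨D, hD⟩ := (IsIntegrallyClosed.pow_dvd_pow_iff two_ne_zero).1 hsq
  have hDD : D * D = C c * F := by
    refine mul_left_cancel₀ (pow_ne_zero 2 hA) ?_
    linear_combination -(F * B + A * D) * hD - F * h
  have hDunit : IsUnit D :=
    hF D ((IsUnit.dvd_mul_left (isUnit_C.2 (isUnit_iff_ne_zero.2 hc))).1 (dvd_of_eq hDD))
  exact hunit (isUnit_of_mul_isUnit_right (hDD ▸ hDunit.mul hDunit))

theorem sqrtIrrational_of_separable {c : ℤ} (hc : c ≠ 0) {f : ℤ[X]}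
    (hf : (f.map (Int.castRingHom ℚ)).Separable) (hunit : ¬ IsUnit (f.map (Int.castRingHom ℚ))) :
    SqrtIrrational c f := fun _ _ h =>
  eq_zero_of_C_mul_sq_eq_mul_sq (Int.cast_ne_zero.2 hc) hf.squarefree hunit h

/-- A binary diagonal cubic form restricted to a line `n ↦ (u₁ n + w₁, u₂ n + w₂)`. -/
noncomputable def cubicOnLine {R : Type*} [CommRing R] (α β u₁ w₁ u₂ w₂ : R) : R[X] :=
  C α * (C u₁ * X + C w₁) ^ 3 + C β * (C u₂ * X + C w₂) ^ 3

theorem natDegree_cubicOnLine_le {R : Type*} [CommRing R] (α β u₁ w₁ u₂ w₂ : R) :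
    (cubicOnLine α β u₁ w₁ u₂ w₂).natDegree ≤ 3 := by
  unfold cubicOnLine
  compute_degree

theorem eval_cubicOnLine {R : Type*} [CommRing R] (α β u₁ w₁ u₂ w₂ n : R) :
    (cubicOnLine α β u₁ w₁ u₂ w₂).eval n = α * (u₁ * n + w₁) ^ 3 + β * (u₂ * n + w₂) ^ 3 := by
  simp [cubicOnLine]

theorem map_cubicOnLine {R S : Type*} [CommRing R] [CommRing S] (φ : R →+* S)
    (α β u₁ w₁ u₂ w₂ : R) : (cubicOnLine α β u₁ w₁ u₂ w₂).map φ =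
      cubicOnLine (φ α) (φ β) (φ u₁) (φ w₁) (φ u₂) (φ w₂) := by
  simp [cubicOnLine, Polynomial.map_pow]

theorem derivative_cubicOnLine {R : Type*} [CommRing R] (α β u₁ w₁ u₂ w₂ : R) :
    derivative (cubicOnLine α β u₁ w₁ u₂ w₂) = 3 * (C α * C u₁ * (C u₁ * X + C w₁) ^ 2 +
      C β * C u₂ * (C u₂ * X + C w₂) ^ 2) := by
  simp only [cubicOnLine, derivative_add, derivative_mul, derivative_C, derivative_pow,
    derivative_X, Nat.cast_ofNat, C_ofNat]
  ring

section

variable {K : Type*} [Field K] {α β u₁ w₁ u₂ w₂ : K}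

theorem isCoprime_linear (hdet : u₁ * w₂ - u₂ * w₁ ≠ 0) :
    IsCoprime (C u₁ * X + C w₁) (C u₂ * X + C w₂) := by
  refine ⟨-(C (u₁ * w₂ - u₂ * w₁)⁻¹ * C u₂), C (u₁ * w₂ - u₂ * w₁)⁻¹ * C u₁, ?_⟩
  have hinv : C (u₁ * w₂ - u₂ * w₁)⁻¹ * (C u₁ * C w₂ - C u₂ * C w₁) = 1 := by
    rw [← C_mul, ← C_mul, ← C_sub, ← C_mul, inv_mul_cancel₀ hdet, C_1]
  linear_combination hinv

theorem separable_cubicOnLine [CharZero K] (hα : α ≠ 0) (hβ : β ≠ 0)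
    (hdet : u₁ * w₂ - u₂ * w₁ ≠ 0) : (cubicOnLine α β u₁ w₁ u₂ w₂).Separable := by
  obtain ⟨a, b, hab⟩ := (isCoprime_linear hdet).pow (m := 2) (n := 2)
  have hunit : ∀ γ : K, γ ≠ 0 → C (3 * γ * (u₁ * w₂ - u₂ * w₁))⁻¹ *
      (3 * C γ * (C u₁ * C w₂ - C u₂ * C w₁)) = 1 := by
    intro γ hγ
    have h0 : 3 * γ * (u₁ * w₂ - u₂ * w₁) ≠ 0 := mul_ne_zero (mul_ne_zero three_ne_zero hγ) hdet
    rw [← C_mul, ← C_mul, ← C_sub, show (3 : K[X]) = C 3 from rfl, ← C_mul, ← C_mul, ← C_mul,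
      inv_mul_cancel₀ h0, C_1]
  refine ⟨b * C (3 * β * (u₁ * w₂ - u₂ * w₁))⁻¹ * (3 * C u₁) -
      a * C (3 * α * (u₁ * w₂ - u₂ * w₁))⁻¹ * (3 * C u₂),
    -b * C (3 * β * (u₁ * w₂ - u₂ * w₁))⁻¹ * (C u₁ * X + C w₁) +
      a * C (3 * α * (u₁ * w₂ - u₂ * w₁))⁻¹ * (C u₂ * X + C w₂), ?_⟩
  rw [derivative_cubicOnLine, cubicOnLine]
  linear_combination hab + b * (C u₂ * X + C w₂) ^ 2 * hunit β hβ +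
    a * (C u₁ * X + C w₁) ^ 2 * hunit α hα

theorem not_isUnit_cubicOnLine [CharZero K] (hα : α ≠ 0) (hβ : β ≠ 0)
    (hdet : u₁ * w₂ - u₂ * w₁ ≠ 0) : ¬ IsUnit (cubicOnLine α β u₁ w₁ u₂ w₂) := by
  intro hunit
  have hderiv : ∀ z : K, α * u₁ * (u₁ * z + w₁) ^ 2 + β * u₂ * (u₂ * z + w₂) ^ 2 = 0 := by
    intro z
    obtain ⟨k, -, hk⟩ := isUnit_iff.1 hunit
    have h0 := derivative_cubicOnLine α β u₁ w₁ u₂ w₂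
    rw [← hk, derivative_C] at h0
    simpa using congrArg (eval z) h0.symm
  have hcubic : α * u₁ ^ 3 + β * u₂ ^ 3 = 0 :=
    mul_left_cancel₀ (two_ne_zero (α := K))
      (by linear_combination hderiv 1 + hderiv (-1) - 2 * hderiv 0)
  have hquadratic : α * u₁ ^ 2 * w₁ + β * u₂ ^ 2 * w₂ = 0 :=
    mul_left_cancel₀ (OfNat.ofNat_ne_zero 4 : (4 : K) ≠ 0)
      (by linear_combination hderiv 1 - hderiv (-1))
  have hu₁ : α * u₁ ^ 2 * (u₁ * w₂ - u₂ * w₁) = 0 := by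
    linear_combination w₂ * hcubic - u₂ * hquadratic
  have hu₂ : β * u₂ ^ 2 * (u₁ * w₂ - u₂ * w₁) = 0 := by
    linear_combination u₁ * hquadratic - w₁ * hcubic
  simp only [mul_eq_zero, hα, hβ, hdet, false_or, or_false] at hu₁ hu₂
  refine hdet ?_
  rw [pow_eq_zero_iff two_ne_zero |>.1 hu₁, pow_eq_zero_iff two_ne_zero |>.1 hu₂]
  ring

end

theorem sqrtIrrational_cubicOnLine {c α β u₁ w₁ u₂ w₂ : ℤ} (hc : c ≠ 0) (hα : α ≠ 0)
    (hβ : β ≠ 0) (hdet : u₁ * w₂ - u₂ * w₁ ≠ 0) :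
    SqrtIrrational c (cubicOnLine α β u₁ w₁ u₂ w₂) := by
  have hα' : (α : ℚ) ≠ 0 := Int.cast_ne_zero.2 hα
  have hβ' : (β : ℚ) ≠ 0 := Int.cast_ne_zero.2 hβ
  have hdet' : (u₁ : ℚ) * w₂ - u₂ * w₁ ≠ 0 := by exact_mod_cast hdet
  refine sqrtIrrational_of_separable hc ?_ ?_ <;> rw [map_cubicOnLine]
  · exact separable_cubicOnLine hα' hβ' hdet'
  · exact not_isUnit_cubicOnLine hα' hβ' hdet'

end CurvePointCount

/-! ### Cubic curves on lattices -/

section LatticeCubic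

open Polynomial Finset

theorem exists_ne_zero_dvd_sub_mul_of_mul_eq {q : ℤ} (hq : 0 < q) (ρ : ℤ) {Y Z : ℝ} (hY : 0 < Y)
    (hZ : 0 < Z) (h : Y * Z = q) :
    ∃ e : ℤ × ℤ, e ≠ 0 ∧ q ∣ e.1 - ρ * e.2 ∧ |(e.1 : ℝ)| ≤ Y ∧ |(e.2 : ℝ)| ≤ Z := by
  have hq' : (0 : ℝ) < q := by exact_mod_cast hq
  rcases lt_or_ge Z 1 with hZ1 | hZ1
  · refine ⟨(q, 0), by simp [hq.ne'], by simp, ?_, by simpa using hZ.le⟩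
    rw [abs_of_pos hq', ← h]
    exact mul_le_of_le_one_right hY.le hZ1.le
  · obtain ⟨j, k, hk0, hk, hjk⟩ :=
      Real.exists_int_int_abs_mul_sub_le ((ρ : ℝ) / q) (Nat.floor_pos.2 hZ1)
    refine ⟨(k * ρ - j * q, k), by simp [hk0.ne'], ⟨-j, by ring⟩, ?_, ?_⟩
    · have hfactor : ((k * ρ - j * q : ℤ) : ℝ) = q * (k * (ρ / q) - j) := by
        push_cast
        field_simp
      calc |((k * ρ - j * q : ℤ) : ℝ)| = q * |(k : ℝ) * (ρ / q) - j| := by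
            rw [hfactor, abs_mul, abs_of_pos hq']
        _ ≤ q * (1 / Z) := by
          gcongr
          exact hjk.trans (one_div_le_one_div_of_le hZ (Nat.lt_floor_add_one Z).le)
        _ = Y := by rw [← h, mul_one_div, mul_div_cancel_right₀ _ hZ.ne']
    · rw [abs_of_pos (by exact_mod_cast hk0)]
      exact (by exact_mod_cast hk : (k : ℝ) ≤ ⌊Z⌋₊).trans (Nat.floor_le hZ.le)

theorem exists_forall_dvd_mul_iff (q t : ℤ) : ∃ m₀ : ℤ, ∀ m, q ∣ m * t ↔ m₀ ∣ m := by
  let I : Ideal ℤ := Submodule.comap (LinearMap.toSpanSingleton ℤ ℤ t) (Ideal.span {q})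
  refine ⟨Submodule.IsPrincipal.generator I, fun m => ?_⟩
  rw [← Submodule.IsPrincipal.mem_iff_generator_dvd, Submodule.mem_comap,
    LinearMap.toSpanSingleton_apply, smul_eq_mul, Ideal.mem_span_singleton]

theorem exists_eq_mul_of_isCoprime_of_mul_eq {u₁ u₂ v₁ v₂ : ℤ} (hu : IsCoprime u₁ u₂)
    (h : v₁ * u₂ = v₂ * u₁) : ∃ m : ℤ, v₁ = m * u₁ ∧ v₂ = m * u₂ := by
  obtain ⟨a, b, hab⟩ := hu
  exact ⟨a * v₁ + b * v₂, by linear_combination (-v₁) * hab + b * h,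
    by linear_combination (-v₂) * hab - a * h⟩

/-- The points of the lattice `q ∣ v₁ - ρ v₂` on the line through `e` are the multiples of a
single lattice vector. -/
theorem exists_generator_of_parallel {q ρ : ℤ} {e : ℤ × ℤ} (he0 : e ≠ 0)
    (he : q ∣ e.1 - ρ * e.2) :
    ∃ g : ℤ × ℤ, q ∣ g.1 - ρ * g.2 ∧ (∃ d : ℤ, e.1 = d * g.1 ∧ e.2 = d * g.2) ∧
      ∀ v : ℤ × ℤ, q ∣ v.1 - ρ * v.2 → v.1 * g.2 = v.2 * g.1 →
        ∃ n : ℤ, v.1 = n * g.1 ∧ v.2 = n * g.2 := by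
  have hgcd : (Int.gcd e.1 e.2 : ℤ) ≠ 0 := by
    simpa [Int.gcd_eq_zero_iff, Prod.ext_iff] using he0
  obtain ⟨u₁, hu₁⟩ := Int.gcd_dvd_left e.1 e.2
  obtain ⟨u₂, hu₂⟩ := Int.gcd_dvd_right e.1 e.2
  obtain ⟨a, b, hab⟩ : IsCoprime u₁ u₂ := by
    have hbezout := Int.gcd_eq_gcd_ab e.1 e.2
    refine ⟨Int.gcdA e.1 e.2, Int.gcdB e.1 e.2, mul_left_cancel₀ hgcd ?_⟩
    linear_combination -hbezout - Int.gcdA e.1 e.2 * hu₁ - Int.gcdB e.1 e.2 * hu₂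
  obtain ⟨m₀, hm₀⟩ := exists_forall_dvd_mul_iff q (u₁ - ρ * u₂)
  have hmul : ∀ m : ℤ, q ∣ m * u₁ - ρ * (m * u₂) ↔ m₀ ∣ m := fun m => by
    rw [← hm₀, mul_sub, mul_left_comm]
  obtain ⟨d, hd⟩ := (hmul (Int.gcd e.1 e.2)).1 (by rwa [← hu₁, ← hu₂])
  have hm₀0 : m₀ ≠ 0 := fun h0 => hgcd (by rw [hd, h0, zero_mul])
  refine ⟨(m₀ * u₁, m₀ * u₂), (hmul m₀).2 dvd_rfl, ⟨d, ?_, ?_⟩, fun v hv hpar => ?_⟩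
  · linear_combination hu₁ + u₁ * hd
  · linear_combination hu₂ + u₂ * hd
  · obtain ⟨m, hm₁, hm₂⟩ := exists_eq_mul_of_isCoprime_of_mul_eq ⟨a, b, hab⟩
      (mul_left_cancel₀ hm₀0 (by linear_combination hpar) : v.1 * u₂ = v.2 * u₁)
    obtain ⟨n, rfl⟩ := (hmul m).1 (by rwa [← hm₁, ← hm₂])
    exact ⟨n, by linear_combination hm₁, by linear_combination hm₂⟩

/-- The norm on the plane whose unit ball is the box `[-Y, Y] × [-Z, Z]`. -/
noncomputable def boxNorm (Y Z : ℝ) (e : ℤ × ℤ) : ℝ :=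
  max (|(e.1 : ℝ)| / Y) (|(e.2 : ℝ)| / Z)

section BoxNorm

variable {Y Z : ℝ} {e : ℤ × ℤ}

theorem abs_fst_le_boxNorm_mul (hY : 0 < Y) : |(e.1 : ℝ)| ≤ boxNorm Y Z e * Y :=
  (div_le_iff₀ hY).1 (le_max_left _ _)

theorem abs_snd_le_boxNorm_mul (hZ : 0 < Z) : |(e.2 : ℝ)| ≤ boxNorm Y Z e * Z :=
  (div_le_iff₀ hZ).1 (le_max_right _ _)

theorem boxNorm_pos (hY : 0 < Y) (hZ : 0 < Z) (he : e ≠ 0) : 0 < boxNorm Y Z e := by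
  by_contra! hle
  have h1 := (abs_fst_le_boxNorm_mul hY).trans (mul_nonpos_of_nonpos_of_nonneg hle hY.le)
  have h2 := (abs_snd_le_boxNorm_mul hZ).trans (mul_nonpos_of_nonpos_of_nonneg hle hZ.le)
  exact he (Prod.ext (by simpa using h1) (by simpa using h2))

theorem abs_mul_boxNorm_le_one {n : ℤ} (hY : 0 < Y) (hZ : 0 < Z) (h1 : |(n * e.1 : ℝ)| ≤ Y)
    (h2 : |(n * e.2 : ℝ)| ≤ Z) : |(n : ℝ)| * boxNorm Y Z e ≤ 1 := by
  rw [boxNorm, mul_max_of_nonneg _ _ (abs_nonneg _), ← mul_div_assoc, ← mul_div_assoc, ← abs_mul,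
    ← abs_mul]
  exact max_le ((div_le_one hY).2 h1) ((div_le_one hZ).2 h2)

/-- A short generator, in the sense of Minkowski's first theorem, of a line in the lattice
`q ∣ v₁ - ρ v₂`. -/
theorem exists_generator_boxNorm_sq_mul_le {q : ℤ} (hq : 0 < q) (ρ : ℤ) (hY : 0 < Y)
    (hZ : 0 < Z) :
    ∃ g : ℤ × ℤ, g ≠ 0 ∧ q ∣ g.1 - ρ * g.2 ∧ boxNorm Y Z g ^ 2 * (Y * Z) ≤ q ∧
      ∀ v : ℤ × ℤ, q ∣ v.1 - ρ * v.2 → v.1 * g.2 = v.2 * g.1 →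
        ∃ n : ℤ, v.1 = n * g.1 ∧ v.2 = n * g.2 := by
  set l := √(q / (Y * Z))
  have hl : 0 < l := Real.sqrt_pos.2 (by positivity)
  have hl2 : l ^ 2 * (Y * Z) = q := by
    rw [Real.sq_sqrt (by positivity), div_mul_cancel₀ _ (by positivity)]
  obtain ⟨e, he0, he, he1, he2⟩ := exists_ne_zero_dvd_sub_mul_of_mul_eq hq ρ (mul_pos hl hY)
    (mul_pos hl hZ) (by rw [← hl2]; ring)
  obtain ⟨g, hg, ⟨d, hd1, hd2⟩, hgen⟩ := exists_generator_of_parallel he0 he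
  have hg0 : g ≠ 0 := by
    rintro rfl
    exact he0 (Prod.ext (by simpa using hd1) (by simpa using hd2))
  have hd0 : d ≠ 0 := by
    rintro rfl
    exact he0 (Prod.ext (by simpa using hd1) (by simpa using hd2))
  have hdvd : ∀ x y : ℤ, x = d * y → |(y : ℝ)| ≤ |(x : ℝ)| := by
    rintro _ y rfl
    rw [Int.cast_mul, abs_mul]
    exact le_mul_of_one_le_left (abs_nonneg _) (by exact_mod_cast Int.one_le_abs hd0)
  have hgl : boxNorm Y Z g ≤ l := max_le ((div_le_iff₀ hY).2 ((hdvd _ _ hd1).trans he1))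
    ((div_le_iff₀ hZ).2 ((hdvd _ _ hd2).trans he2))
  refine ⟨g, hg0, hg, ?_, hgen⟩
  rw [← hl2]
  gcongr
  exact (boxNorm_pos hY hZ hg0).le

end BoxNorm

/-- A positive integral solution `t = (y, z, x)` of `c x² = α y³ + β z³` with `y ≤ Y`, `z ≤ Z`
and `x ≤ W`. -/
structure IsCubicPoint (c α β : ℤ) (Y Z W : ℝ) (t : ℤ × ℤ × ℤ) : Prop where
  y_pos : 0 < t.1
  z_pos : 0 < t.2.1
  x_pos : 0 < t.2.2
  y_le : (t.1 : ℝ) ≤ Y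
  z_le : (t.2.1 : ℝ) ≤ Z
  x_le : (t.2.2 : ℝ) ≤ W
  eq : c * t.2.2 ^ 2 = α * t.1 ^ 3 + β * t.2.1 ^ 3

section CubicPoints

variable {c α β : ℤ} {Y Z W : ℝ} {t u : ℤ × ℤ × ℤ}

theorem IsCubicPoint.ext (hc : c ≠ 0) (ht : IsCubicPoint c α β Y Z W t)
    (hu : IsCubicPoint c α β Y Z W u) (hy : t.1 = u.1) (hz : t.2.1 = u.2.1) : t = u := by
  have hsq : t.2.2 ^ 2 = u.2.2 ^ 2 := mul_left_cancel₀ hc (by rw [ht.eq, hu.eq, hy, hz])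
  exact Prod.ext hy (Prod.ext hz ((pow_left_inj₀ ht.x_pos.le hu.x_pos.le two_ne_zero).1 hsq))

theorem IsCubicPoint.abs_sub_le (ht : IsCubicPoint c α β Y Z W t)
    (hu : IsCubicPoint c α β Y Z W u) :
    |((t.1 - u.1 : ℤ) : ℝ)| ≤ Y ∧ |((t.2.1 - u.2.1 : ℤ) : ℝ)| ≤ Z := by
  obtain ⟨hty, htz, -, hty', htz', -⟩ := ht
  obtain ⟨huy, huz, -, huy', huz', -⟩ := hu
  rify at hty htz huy huz
  push_cast
  constructor <;> rw [abs_le] <;> constructor <;> linarith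

theorem IsCubicPoint.abs_det_le (ht : IsCubicPoint c α β Y Z W t) (g : ℤ × ℤ) :
    |((t.1 * g.2 - t.2.1 * g.1 : ℤ) : ℝ)| ≤ 2 * boxNorm Y Z g * (Y * Z) := by
  have hy : (0 : ℝ) < t.1 := by exact_mod_cast ht.y_pos
  have hz : (0 : ℝ) < t.2.1 := by exact_mod_cast ht.z_pos
  have hY := hy.trans_le ht.y_le
  have hZ := hz.trans_le ht.z_le
  push_cast
  calc |(t.1 : ℝ) * g.2 - t.2.1 * g.1| ≤ |(t.1 : ℝ) * g.2| + |(t.2.1 : ℝ) * g.1| := abs_sub _ _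
    _ = t.1 * |(g.2 : ℝ)| + t.2.1 * |(g.1 : ℝ)| := by
      rw [abs_mul, abs_mul, abs_of_pos hy, abs_of_pos hz]
    _ ≤ Y * (boxNorm Y Z g * Z) + Z * (boxNorm Y Z g * Y) := by
      gcongr
      exacts [ht.y_le, abs_snd_le_boxNorm_mul hZ, ht.z_le, abs_fst_le_boxNorm_mul hY]
    _ = 2 * boxNorm Y Z g * (Y * Z) := by ring

theorem eq_and_eq_of_isCoprime_of_mul_eq {y z y' z' : ℤ} (hy : 0 < y) (hy' : 0 < y')
    (hyz : IsCoprime y z) (hyz' : IsCoprime y' z') (h : y * z' = y' * z) : y = y' ∧ z = z' := by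
  obtain rfl : y = y' := Int.dvd_antisymm hy.le hy'.le
    (hyz.dvd_of_dvd_mul_right (Dvd.intro _ h)) (hyz'.dvd_of_dvd_mul_right (Dvd.intro _ h.symm))
  exact ⟨rfl, (mul_left_cancel₀ hy.ne' h).symm⟩

theorem card_cubicPoints_parallel_le_one (hc : c ≠ 0) {g : ℤ × ℤ} (hg : g ≠ 0)
    {T : Finset (ℤ × ℤ × ℤ)} (hT : ∀ t ∈ T, IsCubicPoint c α β Y Z W t)
    (hcop : ∀ t ∈ T, IsCoprime t.1 t.2.1) (hpar : ∀ t ∈ T, t.1 * g.2 - t.2.1 * g.1 = 0) :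
    #T ≤ 1 := by
  refine card_le_one.2 fun t ht u hu => ?_
  have hg2 : g.2 ≠ 0 := fun h0 => hg <| Prod.ext
    (by simpa [h0, (hT t ht).z_pos.ne'] using hpar t ht) h0
  have hcross : t.1 * u.2.1 = u.1 * t.2.1 := mul_left_cancel₀ hg2
    (by linear_combination u.2.1 * hpar t ht - t.2.1 * hpar u hu)
  obtain ⟨hy, hz⟩ := eq_and_eq_of_isCoprime_of_mul_eq (hT t ht).y_pos (hT u hu).y_pos
    (hcop t ht) (hcop u hu) hcross
  exact (hT t ht).ext hc (hT u hu) hy hz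

end CubicPoints

theorem exists_card_cubicPoints_line_le {η : ℝ} (hη : 0 < η) :
    ∃ K : ℝ, 1 ≤ K ∧ ∀ (Y Z W : ℝ) (c α β : ℤ) (g : ℤ × ℤ) (T : Finset (ℤ × ℤ × ℤ)), 2 ≤ W →
      c ≠ 0 → α ≠ 0 → β ≠ 0 → |(c : ℝ)| ≤ W → (∀ t ∈ T, IsCubicPoint c α β Y Z W t) →
      (∀ t ∈ T, t.1 * g.2 - t.2.1 * g.1 ≠ 0) →
      (∀ t ∈ T, ∀ u ∈ T, ∃ n : ℤ, t.1 - u.1 = n * g.1 ∧ t.2.1 - u.2.1 = n * g.2) →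
      (#T : ℝ) ≤ K * W ^ η * √(max 1 (1 / boxNorm Y Z g)) := by
  obtain ⟨K, hK, hcount⟩ := exists_card_curvePoints_le 3 hη
  refine ⟨K, hK, fun Y Z W c α β g T hW hc hα hβ hcW hT hdet hline => ?_⟩
  obtain rfl | ⟨u, hu⟩ := T.eq_empty_or_nonempty
  · rw [card_empty, Nat.cast_zero]
    positivity
  have hY : 0 < Y := (Int.cast_pos.2 (hT u hu).y_pos).trans_le (hT u hu).y_le
  have hZ : 0 < Z := (Int.cast_pos.2 (hT u hu).z_pos).trans_le (hT u hu).z_le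
  have hg : g ≠ 0 := by
    rintro rfl
    simpa using hdet u hu
  choose! n hn1 hn2 using fun t ht => hline t ht u hu
  have hinj : Set.InjOn (fun t : ℤ × ℤ × ℤ => (n t, t.2.2)) T := by
    intro t ht t' ht' htt'
    obtain ⟨hnn, -⟩ := Prod.ext_iff.1 htt'
    dsimp only at hnn
    exact (hT t ht).ext hc (hT t' ht') (by linear_combination hn1 t ht - hn1 t' ht' + g.1 * hnn)
      (by linear_combination hn2 t ht - hn2 t' ht' + g.2 * hnn)
  rw [← card_image_of_injOn hinj]
  refine hcount W _ c (cubicOnLine α β g.1 u.1 g.2 u.2.1) _ hW (le_max_left _ _) hcW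
    (natDegree_cubicOnLine_le _ _ _ _ _ _) (sqrtIrrational_cubicOnLine hc hα hβ ?_) ?_ ?_ ?_
  · exact fun h0 => hdet u hu (by linear_combination -h0)
  all_goals refine forall_mem_image.2 fun t ht => ?_
  · have hy : g.1 * n t + u.1 = t.1 := by linear_combination -hn1 t ht
    have hz : g.2 * n t + u.2.1 = t.2.1 := by linear_combination -hn2 t ht
    rw [eval_cubicOnLine, hy, hz, (hT t ht).eq]
  · refine le_max_of_le_right ((le_div_iff₀ (boxNorm_pos hY hZ hg)).2 ?_)
    obtain ⟨hy, hz⟩ := (hT t ht).abs_sub_le (hT u hu)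
    rw [hn1 t ht, Int.cast_mul] at hy
    rw [hn2 t ht, Int.cast_mul] at hz
    exact abs_mul_boxNorm_le_one hY hZ hy hz
  · exact ⟨(hT t ht).x_pos, (hT t ht).x_le⟩

theorem mul_mul_sqrt_max_le {R l : ℝ} (hR : 0 ≤ R) (hl : 0 < l) (h : l ^ 2 * R ≤ 1) :
    R * l * √(max 1 (1 / l)) ≤ 1 + R ^ (3 / 4 : ℝ) := by
  have hpow : 0 ≤ R ^ (3 / 4 : ℝ) := Real.rpow_nonneg hR _
  rcases le_total 1 l with h1 | h1
  · rw [max_eq_left ((div_le_one hl).2 h1), Real.sqrt_one]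
    nlinarith [mul_nonneg (mul_nonneg hl.le hR) (sub_nonneg.2 h1)]
  · have hl4 : √l ^ 4 = l ^ 2 := by rw [← Real.sq_sqrt hl.le, ← pow_mul, Real.sq_sqrt hl.le]
    have hR4 : (R ^ (3 / 4 : ℝ)) ^ 4 = R ^ 3 := by
      rw [← Real.rpow_mul_natCast hR, ← Real.rpow_natCast]
      norm_num
    have hle : R * √l ≤ R ^ (3 / 4 : ℝ) := by
      rw [← pow_le_pow_iff_left₀ (by positivity) hpow four_ne_zero, mul_pow, hl4, hR4]
      nlinarith [mul_nonneg (pow_nonneg hR 3) (sub_nonneg.2 h)]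
    rw [max_eq_right ((one_le_div hl).2 h1), Real.sqrt_div zero_le_one, Real.sqrt_one, mul_assoc,
      mul_one_div, Real.div_sqrt]
    linarith

theorem exists_card_cubicPoints_lattice_nonparallel_le {η : ℝ} (hη : 0 < η) :
    ∃ K : ℝ, 1 ≤ K ∧ ∀ (Y Z W : ℝ) (c α β q ρ : ℤ) (g : ℤ × ℤ) (T : Finset (ℤ × ℤ × ℤ)), 2 ≤ W →
      0 < Y → 0 < Z → c ≠ 0 → α ≠ 0 → β ≠ 0 → 0 < q → |(c : ℝ)| ≤ W → g ≠ 0 →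
      q ∣ g.1 - ρ * g.2 →
      (∀ v : ℤ × ℤ, q ∣ v.1 - ρ * v.2 → v.1 * g.2 = v.2 * g.1 →
        ∃ n : ℤ, v.1 = n * g.1 ∧ v.2 = n * g.2) →
      (∀ t ∈ T, IsCubicPoint c α β Y Z W t) → (∀ t ∈ T, q ∣ t.1 - ρ * t.2.1) →
      (∀ t ∈ T, t.1 * g.2 - t.2.1 * g.1 ≠ 0) →
      (#T : ℝ) ≤ 2 * (2 * (Y * Z / q) * boxNorm Y Z g) *
        (K * W ^ η * √(max 1 (1 / boxNorm Y Z g))) := by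
  obtain ⟨K, hK, hline⟩ := exists_card_cubicPoints_line_le hη
  refine ⟨K, hK, fun Y Z W c α β q ρ g T hW hY hZ hc hα hβ hq hcW hg0 hg hgen hT hlat hdet => ?_⟩
  have hq' : (0 : ℝ) < q := by exact_mod_cast hq
  have hl := boxNorm_pos hY hZ hg0
  have hdvd : ∀ t ∈ T, q ∣ t.1 * g.2 - t.2.1 * g.1 := by
    intro t ht
    rw [show t.1 * g.2 - t.2.1 * g.1 =
      (t.1 - ρ * t.2.1) * g.2 - (g.1 - ρ * g.2) * t.2.1 by ring]
    exact dvd_sub ((hlat t ht).mul_right _) (hg.mul_right _)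
  refine card_le_mul_of_fiber_card_le (fun t => (t.1 * g.2 - t.2.1 * g.1) / q)
    (by positivity) (card_le_two_mul_of_abs_le (by positivity) (forall_mem_image.2 ?_)) ?_
  · intro t ht
    obtain ⟨k, hk⟩ := hdvd t ht
    have hle := (hT t ht).abs_det_le g
    rw [hk, Int.mul_ediv_cancel_left _ hq.ne']
    refine ⟨fun h0 => hdet t ht (by rw [hk, h0, mul_zero]), le_of_mul_le_mul_right ?_ hq'⟩
    rw [hk, Int.cast_mul, abs_mul, abs_of_pos hq'] at hle
    calc |(k : ℝ)| * q = q * |(k : ℝ)| := mul_comm _ _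
      _ ≤ 2 * boxNorm Y Z g * (Y * Z) := hle
      _ = 2 * (Y * Z / q) * boxNorm Y Z g * q := by field_simp
  · refine forall_mem_image.2 fun t₀ _ => hline Y Z W c α β g _ hW hc hα hβ hcW
      (fun t ht => hT t (mem_filter.1 ht).1) (fun t ht => hdet t (mem_filter.1 ht).1)
      fun t ht u hu => ?_
    obtain ⟨htT, htk⟩ := mem_filter.1 ht
    obtain ⟨huT, huk⟩ := mem_filter.1 hu
    have heq := (Int.ediv_left_inj (hdvd t htT) (hdvd u huT)).1 (htk.trans huk.symm)
    refine hgen (t.1 - u.1, t.2.1 - u.2.1) ?_ (by linear_combination heq)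
    exact (dvd_sub (hlat t htT) (hlat u huT)).trans (dvd_of_eq (by ring))

theorem exists_card_cubicPoints_lattice_le {η : ℝ} (hη : 0 < η) :
    ∃ K : ℝ, 1 ≤ K ∧ ∀ (Y Z W : ℝ) (c α β q ρ : ℤ) (T : Finset (ℤ × ℤ × ℤ)), 2 ≤ W →
      0 < Y → 0 < Z → c ≠ 0 → α ≠ 0 → β ≠ 0 → 0 < q → |(c : ℝ)| ≤ W →
      (∀ t ∈ T, IsCubicPoint c α β Y Z W t) → (∀ t ∈ T, IsCoprime t.1 t.2.1) →
      (∀ t ∈ T, q ∣ t.1 - ρ * t.2.1) →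
      (#T : ℝ) ≤ K * W ^ η * (1 + (Y * Z / q) ^ (3 / 4 : ℝ)) := by
  obtain ⟨K, hK, hnonparallel⟩ := exists_card_cubicPoints_lattice_nonparallel_le hη
  refine ⟨5 * K, by linarith, fun Y Z W c α β q ρ T hW hY hZ hc hα hβ hq hcW hT hcop hlat => ?_⟩
  have hq' : (0 : ℝ) < q := by exact_mod_cast hq
  obtain ⟨g, hg0, hg, hshort, hgen⟩ := exists_generator_boxNorm_sq_mul_le hq ρ hY hZ
  set l := boxNorm Y Z g
  set R := Y * Z / q with hR
  have hparallel : (#{t ∈ T | t.1 * g.2 - t.2.1 * g.1 = 0} : ℝ) ≤ 1 := by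
    exact_mod_cast card_cubicPoints_parallel_le_one hc hg0
      (fun t ht => hT t (mem_filter.1 ht).1) (fun t ht => hcop t (mem_filter.1 ht).1)
      fun t ht => (mem_filter.1 ht).2
  have hrest : (#{t ∈ T | ¬ t.1 * g.2 - t.2.1 * g.1 = 0} : ℝ) ≤
      2 * (2 * R * l) * (K * W ^ η * √(max 1 (1 / l))) :=
    hnonparallel Y Z W c α β q ρ g _ hW hY hZ hc hα hβ hq hcW hg0 hg hgen
      (fun t ht => hT t (mem_filter.1 ht).1) (fun t ht => hlat t (mem_filter.1 ht).1)
      fun t ht => (mem_filter.1 ht).2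
  have hlR : l ^ 2 * R ≤ 1 := by rwa [hR, ← mul_div_assoc, div_le_one hq']
  have hnum := mul_mul_sqrt_max_le (by positivity) (boxNorm_pos hY hZ hg0) hlR
  have hKW : 1 ≤ K * W ^ η :=
    one_le_mul_of_one_le_of_one_le hK (Real.one_le_rpow (by linarith) hη.le)
  have hR34 : 0 ≤ R ^ (3 / 4 : ℝ) := by positivity
  rw [← card_filter_add_card_filter_not (fun t => t.1 * g.2 - t.2.1 * g.1 = 0), Nat.cast_add]
  calc _ ≤ 1 + 2 * (2 * R * l) * (K * W ^ η * √(max 1 (1 / l))) := add_le_add hparallel hrest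
    _ = 1 + 4 * (K * W ^ η) * (R * l * √(max 1 (1 / l))) := by ring
    _ ≤ K * W ^ η * (1 + R ^ (3 / 4 : ℝ)) + 4 * (K * W ^ η) * (1 + R ^ (3 / 4 : ℝ)) := by
      gcongr
      nlinarith
    _ = 5 * K * W ^ η * (1 + R ^ (3 / 4 : ℝ)) := by ring

end LatticeCubic

/-! ### Solutions in a dyadic box -/

section Solutions

open Finset

/-- A box for solutions of `a₀x₀²y₀³ + a₁x₁²y₁³ + a₂x₂²y₂³ = 0`: the sides are at least `1` and
each of the three terms is at most `W` on it. -/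
structure IsBox (a : Fin 3 → ℤ) (X Y : Fin 3 → ℝ) (W : ℝ) : Prop where
  two_le : 2 ≤ W
  coeff_ne_zero : ∀ i, a i ≠ 0
  one_le_x : ∀ i, 1 ≤ X i
  one_le_y : ∀ i, 1 ≤ Y i
  height_le : ∀ i, |(a i : ℝ)| * (X i ^ 2 * Y i ^ 3) ≤ W

/-- The permutation-invariant form of membership in `S0 a X Y`: the properties of its members,
phrased so as to be invariant under permutations of the three indices. -/
structure IsSolution (a : Fin 3 → ℤ) (X Y : Fin 3 → ℝ) (p : (Fin 3 → ℤ) × (Fin 3 → ℤ)) :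
    Prop where
  x_pos : ∀ i, 0 < p.1 i
  y_pos : ∀ i, 0 < p.2 i
  lt_x : ∀ i, X i / 2 < p.1 i
  x_le : ∀ i, (p.1 i : ℝ) ≤ X i
  lt_y : ∀ i, Y i / 2 < p.2 i
  y_le : ∀ i, (p.2 i : ℝ) ≤ Y i
  sum_eq_zero : ∑ i, a i * p.1 i ^ 2 * p.2 i ^ 3 = 0
  isCoprime : ∀ i j, i ≠ j → IsCoprime (p.1 i * p.2 i) (p.1 j * p.2 j)
  isCoprime_coeff : ∀ i j, IsCoprime (a i) (p.1 j * p.2 j)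
  squarefree : ∀ i, Squarefree (p.2 i)

variable {a : Fin 3 → ℤ} {X Y : Fin 3 → ℝ} {W : ℝ} {p : (Fin 3 → ℤ) × (Fin 3 → ℤ)}
  {T : Finset ((Fin 3 → ℤ) × (Fin 3 → ℤ))}

namespace IsBox

theorem comp (h : IsBox a X Y W) (σ : Equiv.Perm (Fin 3)) : IsBox (a ∘ σ) (X ∘ σ) (Y ∘ σ) W :=
  ⟨h.two_le, fun _ => h.coeff_ne_zero _, fun _ => h.one_le_x _, fun _ => h.one_le_y _,
    fun _ => h.height_le _⟩

theorem x_pos (h : IsBox a X Y W) (i : Fin 3) : 0 < X i := one_pos.trans_le (h.one_le_x i)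

theorem y_pos (h : IsBox a X Y W) (i : Fin 3) : 0 < Y i := one_pos.trans_le (h.one_le_y i)

theorem pos (h : IsBox a X Y W) : 0 < W := two_pos.trans_le h.two_le

theorem one_le (h : IsBox a X Y W) : 1 ≤ W := one_le_two.trans h.two_le

theorem abs_coeff_mul_y_pow_le (h : IsBox a X Y W) (i : Fin 3) : |(a i : ℝ)| * Y i ^ 3 ≤ W := by
  have hY := h.y_pos i
  refine le_trans ?_ (h.height_le i)
  gcongr
  exact le_mul_of_one_le_left (by positivity) (one_le_pow₀ (h.one_le_x i))

theorem x_sq_mul_y_pow_le (h : IsBox a X Y W) (i : Fin 3) : X i ^ 2 * Y i ^ 3 ≤ W := by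
  have hY := h.y_pos i
  have ha : (1 : ℝ) ≤ |(a i : ℝ)| := by exact_mod_cast Int.one_le_abs (h.coeff_ne_zero i)
  exact (le_mul_of_one_le_left (by positivity) ha).trans (h.height_le i)

theorem x_sq_le (h : IsBox a X Y W) (i : Fin 3) : X i ^ 2 ≤ W :=
  (le_mul_of_one_le_right (sq_nonneg _) (one_le_pow₀ (h.one_le_y i))).trans
    (h.x_sq_mul_y_pow_le i)

theorem x_le (h : IsBox a X Y W) (i : Fin 3) : X i ≤ W :=
  (le_self_pow₀ (h.one_le_x i) two_ne_zero).trans (h.x_sq_le i)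

theorem y_le (h : IsBox a X Y W) (i : Fin 3) : Y i ≤ W :=
  (le_self_pow₀ (h.one_le_y i) three_ne_zero).trans <|
    (le_mul_of_one_le_left (pow_nonneg (h.y_pos i).le 3) (one_le_pow₀ (h.one_le_x i))).trans
      (h.x_sq_mul_y_pow_le i)

end IsBox

namespace IsSolution

theorem comp (h : IsSolution a X Y p) (σ : Equiv.Perm (Fin 3)) :
    IsSolution (a ∘ σ) (X ∘ σ) (Y ∘ σ) (p.1 ∘ σ, p.2 ∘ σ) where
  x_pos _ := h.x_pos _
  y_pos _ := h.y_pos _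
  lt_x _ := h.lt_x _
  x_le _ := h.x_le _
  lt_y _ := h.lt_y _
  y_le _ := h.y_le _
  sum_eq_zero := (Equiv.sum_comp σ fun i => a i * p.1 i ^ 2 * p.2 i ^ 3).trans h.sum_eq_zero
  isCoprime _ _ hij := h.isCoprime _ _ (σ.injective.ne hij)
  isCoprime_coeff _ _ := h.isCoprime_coeff _ _
  squarefree _ := h.squarefree _

theorem equation (h : IsSolution a X Y p) :
    a 0 * p.1 0 ^ 2 * p.2 0 ^ 3 + a 1 * p.1 1 ^ 2 * p.2 1 ^ 3 + a 2 * p.1 2 ^ 2 * p.2 2 ^ 3 = 0 :=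
  (Fin.sum_univ_three fun i => a i * p.1 i ^ 2 * p.2 i ^ 3).symm.trans h.sum_eq_zero

theorem isCoprime_x_x (h : IsSolution a X Y p) {i j : Fin 3} (hij : i ≠ j) :
    IsCoprime (p.1 i) (p.1 j) :=
  (h.isCoprime i j hij).of_mul_left_left.of_mul_right_left

theorem isCoprime_x_y (h : IsSolution a X Y p) {i j : Fin 3} (hij : i ≠ j) :
    IsCoprime (p.1 i) (p.2 j) :=
  (h.isCoprime i j hij).of_mul_left_left.of_mul_right_right

theorem isCoprime_y_y (h : IsSolution a X Y p) {i j : Fin 3} (hij : i ≠ j) :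
    IsCoprime (p.2 i) (p.2 j) :=
  (h.isCoprime i j hij).of_mul_left_right.of_mul_right_right

theorem isCoprime_coeff_y (h : IsSolution a X Y p) (i j : Fin 3) : IsCoprime (a i) (p.2 j) :=
  (h.isCoprime_coeff i j).of_mul_right_right

theorem coeff_mul_sq_ne_zero (h : IsSolution a X Y p) (hbox : IsBox a X Y W) (i : Fin 3) :
    a i * p.1 i ^ 2 ≠ 0 :=
  mul_ne_zero (hbox.coeff_ne_zero i) (pow_ne_zero 2 (h.x_pos i).ne')

end IsSolution

theorem funext_fin_three {α : Type*} {f g : Fin 3 → α} (h0 : f 0 = g 0) (h1 : f 1 = g 1)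
    (h2 : f 2 = g 2) : f = g := by
  ext i
  fin_cases i <;> assumption

theorem card_image_x_le (hT : ∀ p ∈ T, IsSolution a X Y p) (hX : ∀ i, 0 ≤ X i) (i : Fin 3) :
    (#(T.image fun p => p.1 i) : ℝ) ≤ X i :=
  card_le_of_pos_of_le (hX i) (forall_mem_image.2 fun p hp =>
    ⟨(hT p hp).x_pos i, (hT p hp).x_le i⟩)

theorem card_image_y_le (hT : ∀ p ∈ T, IsSolution a X Y p) (hY : ∀ i, 0 ≤ Y i) (i : Fin 3) :
    (#(T.image fun p => p.2 i) : ℝ) ≤ Y i :=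
  card_le_of_pos_of_le (hY i) (forall_mem_image.2 fun p hp =>
    ⟨(hT p hp).y_pos i, (hT p hp).y_le i⟩)

theorem card_image_prodMk_le {α β γ : Type*} [DecidableEq β] [DecidableEq γ] {T : Finset α}
    {f : α → β} {g : α → γ} {M N : ℝ} (hf : (#(T.image f) : ℝ) ≤ M)
    (hg : (#(T.image g) : ℝ) ≤ N) : (#(T.image fun x => (f x, g x)) : ℝ) ≤ M * N := by
  have hsub : (T.image fun x => (f x, g x)) ⊆ T.image f ×ˢ T.image g := fun b hb => by
    obtain ⟨x, hx, rfl⟩ := mem_image.1 hb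
    exact mk_mem_product (mem_image_of_mem f hx) (mem_image_of_mem g hx)
  calc (#(T.image fun x => (f x, g x)) : ℝ) ≤ #(T.image f ×ˢ T.image g) := by
        exact_mod_cast card_le_card hsub
    _ = #(T.image f) * #(T.image g) := by rw [card_product, Nat.cast_mul]
    _ ≤ M * N := mul_le_mul hf hg (Nat.cast_nonneg _) ((Nat.cast_nonneg _).trans hf)

-- The congruence forces `u / v` to be one of boundedly many roots modulo `y ^ 3`, and each root
-- confines `(u, v)` to a lattice.
theorem exists_card_le_mul_of_lattice_classes (α : Type*) {η : ℝ} (hη : 0 < η) :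
    ∃ C : ℝ, 1 ≤ C ∧ ∀ (k : ℕ) (y : ℤ) (W M : ℝ) (T : Finset α) (u v : α → ℤ), 0 < k → k ≤ 4 →
      0 < y → Squarefree y → (y : ℝ) ≤ W → 0 ≤ M →
      (∀ s ∈ T, IsCoprime (u s) y) → (∀ s ∈ T, IsCoprime (v s) y) →
      (∀ s ∈ T, ∀ t ∈ T, y ^ 3 ∣ u s ^ k * v t ^ k - u t ^ k * v s ^ k) →
      (∀ T' ⊆ T, ∀ ρ : ℤ, (∀ s ∈ T', y ^ 3 ∣ u s - ρ * v s) → (#T' : ℝ) ≤ M) →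
      (#T : ℝ) ≤ C * W ^ η * M := by
  obtain ⟨C, hC, hroots⟩ := exists_card_rootsOfUnity_zmod_cube_le_rpow hη
  refine ⟨C, hC, fun k y W M T u v hk hk4 hy hysq hyW hM hu hv hpow hlattice => ?_⟩
  lift y to ℕ using hy.le
  have hy' : 0 < y := by exact_mod_cast hy
  have hcast : ((y ^ 3 : ℕ) : ℤ) = (y : ℤ) ^ 3 := Nat.cast_pow ..
  calc (#T : ℝ) ≤ Nat.card (rootsOfUnity k (ZMod (y ^ 3))) * M :=
        card_le_card_rootsOfUnity_zmod_mul (by positivity)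
          (fun s hs => hcast ▸ (hu s hs).pow_right) (fun s hs => hcast ▸ (hv s hs).pow_right)
          (fun s hs t ht => hcast ▸ hpow s hs t ht) hM
          fun T' hT' ρ hρ => hlattice T' hT' ρ (hcast ▸ hρ)
    _ ≤ C * W ^ η * M := by
      gcongr
      refine (hroots k y hk hk4 (Int.squarefree_natCast.1 hysq)).trans ?_
      gcongr
      exact_mod_cast hyW

end Solutions

/-! ### The lattice bound -/

section LatticeBound

open Finset

variable {a : Fin 3 → ℤ} {X Y : Fin 3 → ℝ} {W : ℝ} {T : Finset ((Fin 3 → ℤ) × (Fin 3 → ℤ))}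

theorem div_cube_rpow_le {s y Y θ : ℝ} (hs : 0 ≤ s) (hY : 0 < Y) (hy : Y / 2 < y) (hθ : 0 ≤ θ)
    (hθ1 : θ ≤ 1) : (s / y ^ 3) ^ θ ≤ 8 * (s / Y ^ 3) ^ θ := by
  have hy' : 0 < y := (half_pos hY).trans hy
  calc (s / y ^ 3) ^ θ ≤ (s / (Y / 2) ^ 3) ^ θ := by gcongr
    _ = (8 * (s / Y ^ 3)) ^ θ := by congr 1; field_simp; norm_num
    _ = 8 ^ θ * (s / Y ^ 3) ^ θ := Real.mul_rpow (by norm_num) (by positivity)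
    _ ≤ 8 ^ (1 : ℝ) * (s / Y ^ 3) ^ θ := by gcongr; norm_num
    _ = 8 * (s / Y ^ 3) ^ θ := by rw [Real.rpow_one]

theorem cube_dvd_sub_of_isSolution {p q : (Fin 3 → ℤ) × (Fin 3 → ℤ)} (hp : IsSolution a X Y p)
    (hq : IsSolution a X Y q) (h1 : p.1 1 = q.1 1) (h2 : p.1 2 = q.1 2) (h0 : p.2 0 = q.2 0) :
    p.2 0 ^ 3 ∣ p.2 1 ^ 3 * q.2 2 ^ 3 - q.2 1 ^ 3 * p.2 2 ^ 3 := by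
  have hcop : IsCoprime (p.2 0 ^ 3) (a 1 * p.1 1 ^ 2) :=
    ((hp.isCoprime_coeff_y 1 0).mul_left (hp.isCoprime_x_y one_ne_zero).pow_left).symm.pow_left
  refine hcop.dvd_of_dvd_mul_left ⟨a 0 * q.1 0 ^ 2 * p.2 2 ^ 3 - a 0 * p.1 0 ^ 2 * q.2 2 ^ 3, ?_⟩
  have heq := hq.equation
  rw [← h0, ← h1, ← h2] at heq
  linear_combination q.2 2 ^ 3 * hp.equation - p.2 2 ^ 3 * heq

theorem IsSolution.isCubicPoint {p : (Fin 3 → ℤ) × (Fin 3 → ℤ)} (hp : IsSolution a X Y p)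
    (hbox : IsBox a X Y W) :
    IsCubicPoint (a 0 * p.2 0 ^ 3) (-(a 1 * p.1 1 ^ 2)) (-(a 2 * p.1 2 ^ 2)) (Y 1) (Y 2) W
      (p.2 1, p.2 2, p.1 0) :=
  ⟨hp.y_pos 1, hp.y_pos 2, hp.x_pos 0, hp.y_le 1, hp.y_le 2, (hp.x_le 0).trans (hbox.x_le 0),
    by linear_combination hp.equation⟩

theorem exists_card_solutions_lattice_le {η : ℝ} (hη : 0 < η) :
    ∃ K : ℝ, 1 ≤ K ∧ ∀ (a : Fin 3 → ℤ) (X Y : Fin 3 → ℝ) (W : ℝ)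
      (T : Finset ((Fin 3 → ℤ) × (Fin 3 → ℤ))) (x₁ x₂ y₀ ρ : ℤ), IsBox a X Y W →
      (∀ p ∈ T, IsSolution a X Y p) → (∀ p ∈ T, p.1 1 = x₁ ∧ p.1 2 = x₂ ∧ p.2 0 = y₀) →
      (∀ p ∈ T, y₀ ^ 3 ∣ p.2 1 - ρ * p.2 2) →
      (#T : ℝ) ≤ K * W ^ η * (1 + (Y 1 * Y 2 / Y 0 ^ 3) ^ (3 / 4 : ℝ)) := by
  obtain ⟨K, hK, hcubic⟩ := exists_card_cubicPoints_lattice_le hη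
  refine ⟨8 * K, by linarith, fun a X Y W T x₁ x₂ y₀ ρ hbox hT hfix hlat => ?_⟩
  have hW := hbox.pos
  have hY := hbox.y_pos
  rcases T.eq_empty_or_nonempty with rfl | ⟨p₀, hp₀⟩
  · have := hY 0; have := hY 1; have := hY 2
    rw [card_empty, Nat.cast_zero]
    positivity
  obtain ⟨rfl, rfl, rfl⟩ := hfix p₀ hp₀
  have h₀ := hT p₀ hp₀
  have hy₀ : (0 : ℝ) < p₀.2 0 := by exact_mod_cast h₀.y_pos 0
  have hinj : Set.InjOn (fun p : (Fin 3 → ℤ) × (Fin 3 → ℤ) => (p.2 1, p.2 2, p.1 0)) T := by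
    intro p hp q hq hpq
    obtain ⟨h1, h2, h0⟩ := hfix p hp
    obtain ⟨h1', h2', h0'⟩ := hfix q hq
    simp only [Prod.mk.injEq] at hpq
    exact Prod.ext (funext_fin_three hpq.2.2 (h1.trans h1'.symm) (h2.trans h2'.symm))
      (funext_fin_three (h0.trans h0'.symm) hpq.1 hpq.2.1)
  have hpoint : ∀ t ∈ T.image fun p => (p.2 1, p.2 2, p.1 0),
      IsCubicPoint (a 0 * p₀.2 0 ^ 3) (-(a 1 * p₀.1 1 ^ 2)) (-(a 2 * p₀.1 2 ^ 2))
        (Y 1) (Y 2) W t := by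
    refine forall_mem_image.2 fun p hp => ?_
    obtain ⟨h1, h2, h0⟩ := hfix p hp
    rw [← h0, ← h1, ← h2]
    exact (hT p hp).isCubicPoint hbox
  rw [← card_image_of_injOn hinj]
  calc _ ≤ K * W ^ η * (1 + (Y 1 * Y 2 / ((p₀.2 0 ^ 3 : ℤ) : ℝ)) ^ (3 / 4 : ℝ)) := by
        refine hcubic _ _ W _ _ _ (p₀.2 0 ^ 3) ρ _ hbox.two_le (hY 1) (hY 2)
          (mul_ne_zero (hbox.coeff_ne_zero 0) (pow_ne_zero 3 (h₀.y_pos 0).ne'))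
          (neg_ne_zero.2 (h₀.coeff_mul_sq_ne_zero hbox 1))
          (neg_ne_zero.2 (h₀.coeff_mul_sq_ne_zero hbox 2)) (pow_pos (h₀.y_pos 0) 3) ?_ hpoint
          (forall_mem_image.2 fun p hp => (hT p hp).isCoprime_y_y (by decide))
          (forall_mem_image.2 hlat)
        rw [Int.cast_mul, Int.cast_pow, abs_mul, abs_of_pos (pow_pos hy₀ 3)]
        refine le_trans ?_ (hbox.abs_coeff_mul_y_pow_le 0)
        gcongr
        exact h₀.y_le 0
    _ ≤ K * W ^ η * (8 + 8 * (Y 1 * Y 2 / Y 0 ^ 3) ^ (3 / 4 : ℝ)) := by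
      push_cast
      gcongr
      · norm_num
      · exact div_cube_rpow_le (mul_pos (hY 1) (hY 2)).le (hY 0) (h₀.lt_y 0) (by norm_num)
          (by norm_num)
    _ = 8 * K * W ^ η * (1 + (Y 1 * Y 2 / Y 0 ^ 3) ^ (3 / 4 : ℝ)) := by ring

theorem exists_card_le_of_cube_classes {η : ℝ} (hη : 0 < η) :
    ∃ C : ℝ, 1 ≤ C ∧ ∀ (a : Fin 3 → ℤ) (X Y : Fin 3 → ℝ) (W M : ℝ)
      (p₀ : (Fin 3 → ℤ) × (Fin 3 → ℤ)) (T : Finset ((Fin 3 → ℤ) × (Fin 3 → ℤ))),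
      IsBox a X Y W → IsSolution a X Y p₀ → (∀ p ∈ T, IsSolution a X Y p) →
      (∀ p ∈ T, p.1 1 = p₀.1 1 ∧ p.1 2 = p₀.1 2 ∧ p.2 0 = p₀.2 0) → 0 ≤ M →
      (∀ T' ⊆ T, ∀ ρ, (∀ p ∈ T', p₀.2 0 ^ 3 ∣ p.2 1 - ρ * p.2 2) → (#T' : ℝ) ≤ M) →
      (#T : ℝ) ≤ C * W ^ η * M := by
  obtain ⟨C, hC, hclasses⟩ :=
    exists_card_le_mul_of_lattice_classes ((Fin 3 → ℤ) × (Fin 3 → ℤ)) hη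
  refine ⟨C, hC, fun a X Y W M p₀ T hbox h₀ hT hfix hM hlat => ?_⟩
  refine hclasses 3 (p₀.2 0) W M T (fun p => p.2 1) (fun p => p.2 2) three_pos (by norm_num)
    (h₀.y_pos 0) (h₀.squarefree 0) ((h₀.y_le 0).trans (hbox.y_le 0)) hM
    (fun p hp => ?_) (fun p hp => ?_) (fun p hp q hq => ?_) hlat
  · rw [← (hfix p hp).2.2]
    exact (hT p hp).isCoprime_y_y (by decide)
  · rw [← (hfix p hp).2.2]
    exact (hT p hp).isCoprime_y_y (by decide)
  · obtain ⟨h1, h2, h0⟩ := hfix p hp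
    obtain ⟨hq1, hq2, hq0⟩ := hfix q hq
    rw [← h0]
    exact cube_dvd_sub_of_isSolution (hT p hp) (hT q hq) (h1.trans hq1.symm) (h2.trans hq2.symm)
      (h0.trans hq0.symm)

/-- Once `x₁`, `x₂` and `y₀` are fixed, `(y₁, y₂, x₀)` lies on a cubic and `y₁ / y₂` is a cube root
of a fixed residue modulo `y₀ ^ 3`. -/
theorem exists_card_le_lattice_bound {ε : ℝ} (hε : 0 < ε) :
    ∃ C : ℝ, 1 ≤ C ∧ ∀ (a : Fin 3 → ℤ) (X Y : Fin 3 → ℝ) (W : ℝ)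
      (T : Finset ((Fin 3 → ℤ) × (Fin 3 → ℤ))), IsBox a X Y W → (∀ p ∈ T, IsSolution a X Y p) →
      (#T : ℝ) ≤ C * W ^ ε *
        (X 1 * X 2 * Y 0 * (1 + (Y 1 * Y 2 / Y 0 ^ 3) ^ (3 / 4 : ℝ))) := by
  obtain ⟨C, hC, hclasses⟩ := exists_card_le_of_cube_classes (half_pos hε)
  obtain ⟨K, hK, hlat⟩ := exists_card_solutions_lattice_le (half_pos hε)
  refine ⟨C * K, one_le_mul_of_one_le_of_one_le hC hK, fun a X Y W T hbox hT => ?_⟩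
  have hW := hbox.pos
  have hX i : 0 ≤ X i := (hbox.x_pos i).le
  have hY i : 0 ≤ Y i := (hbox.y_pos i).le
  set R := (Y 1 * Y 2 / Y 0 ^ 3) ^ (3 / 4 : ℝ)
  have hR : 0 ≤ R := by
    have := hY 0; have := hY 1; have := hY 2
    positivity
  have hcoords : (#(T.image fun p => (p.1 1, p.1 2, p.2 0)) : ℝ) ≤ X 1 * (X 2 * Y 0) :=
    card_image_prodMk_le (card_image_x_le hT hX 1)
      (card_image_prodMk_le (card_image_x_le hT hX 2) (card_image_y_le hT hY 0))
  have hfibers : (#T : ℝ) ≤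
      X 1 * (X 2 * Y 0) * (C * W ^ (ε / 2) * (K * W ^ (ε / 2) * (1 + R))) := by
    refine card_le_mul_of_fiber_card_le (fun p => (p.1 1, p.1 2, p.2 0)) (by positivity) hcoords
      (forall_mem_image.2 fun p₀ hp₀ => ?_)
    have hsol : ∀ p ∈ T.filter fun p => (p.1 1, p.1 2, p.2 0) = (p₀.1 1, p₀.1 2, p₀.2 0),
        IsSolution a X Y p := fun p hp => hT p (mem_filter.1 hp).1
    have hfix : ∀ p ∈ T.filter fun p => (p.1 1, p.1 2, p.2 0) = (p₀.1 1, p₀.1 2, p₀.2 0),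
        p.1 1 = p₀.1 1 ∧ p.1 2 = p₀.1 2 ∧ p.2 0 = p₀.2 0 := fun p hp => by
      simpa using (mem_filter.1 hp).2
    exact hclasses a X Y W _ p₀ _ hbox (hT p₀ hp₀) hsol hfix (by positivity)
      fun T' hT' ρ => hlat a X Y W T' _ _ _ ρ hbox (fun p hp => hsol p (hT' hp))
        fun p hp => hfix p (hT' hp)
  calc (#T : ℝ) ≤ X 1 * (X 2 * Y 0) * (C * W ^ (ε / 2) * (K * W ^ (ε / 2) * (1 + R))) := hfibers
    _ = C * K * (W ^ (ε / 2) * W ^ (ε / 2)) * (X 1 * X 2 * Y 0 * (1 + R)) := by ring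
    _ = C * K * W ^ ε * (X 1 * X 2 * Y 0 * (1 + R)) := by
      rw [← Real.rpow_add hW, add_halves]

end LatticeBound

/-! ### The conic bound -/

section RealConic

open Finset

/-- Twice the signed area of the triangle `u`, `v`, `w`. -/
def triangleDet (u v w : ℝ × ℝ) : ℝ :=
  (v.1 - u.1) * (w.2 - u.2) - (w.1 - u.1) * (v.2 - u.2)

variable {A c h : ℝ} {u v w : ℝ × ℝ} {T : Finset (ℝ × ℝ)}

theorem triangleDet_swap (u v w : ℝ × ℝ) :
    triangleDet u.swap v.swap w.swap = -triangleDet u v w := by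
  simp only [triangleDet, Prod.fst_swap, Prod.snd_swap]
  ring

theorem abs_snd_sub_snd_le_of_conic (hA : |A| ≤ 1) (hu : A * u.1 ^ 2 + u.2 ^ 2 = c)
    (hv : A * v.1 ^ 2 + v.2 ^ 2 = c) (hu1 : u.1 ∈ Set.Icc (1 / 2) 2) (hu2 : 1 / 2 ≤ u.2)
    (hv1 : v.1 ∈ Set.Icc (1 / 2) 2) (hv2 : 1 / 2 ≤ v.2) :
    |u.2 - v.2| ≤ 4 * |v.1 - u.1| := by
  obtain ⟨hu1, hu1'⟩ := hu1
  obtain ⟨hv1, hv1'⟩ := hv1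
  have hfactor : (u.2 - v.2) * (u.2 + v.2) = A * ((v.1 - u.1) * (v.1 + u.1)) := by
    linear_combination hu - hv
  calc |u.2 - v.2| ≤ |u.2 - v.2| * |u.2 + v.2| :=
        le_mul_of_one_le_right (abs_nonneg _) (by rw [abs_of_pos] <;> linarith)
    _ = |A| * (|v.1 - u.1| * |v.1 + u.1|) := by rw [← abs_mul, hfactor, abs_mul, abs_mul]
    _ ≤ 1 * (|v.1 - u.1| * 4) := by
      gcongr
      rw [abs_of_pos] <;> linarith
    _ = 4 * |v.1 - u.1| := by ring

theorem abs_triangleDet_le_of_conic (hA : |A| ≤ 1)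
    (hu : A * u.1 ^ 2 + u.2 ^ 2 = c) (hv : A * v.1 ^ 2 + v.2 ^ 2 = c)
    (hw : A * w.1 ^ 2 + w.2 ^ 2 = c)
    (hubox : u.1 ∈ Set.Icc (1 / 2) 2 ∧ u.2 ∈ Set.Icc (1 / 2) 2)
    (hvbox : v.1 ∈ Set.Icc (1 / 2) 2 ∧ v.2 ∈ Set.Icc (1 / 2) 2)
    (hwbox : w.1 ∈ Set.Icc (1 / 2) 2 ∧ w.2 ∈ Set.Icc (1 / 2) 2)
    (hvu : |v.1 - u.1| ≤ h) (hwu : |w.1 - u.1| ≤ h) (hwv : |w.1 - v.1| ≤ h) :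
    |triangleDet u v w| ≤ 20 * h ^ 3 := by
  have hh : 0 ≤ h := (abs_nonneg _).trans hvu
  have hsnd := abs_snd_sub_snd_le_of_conic hA hv hw hvbox.1 hvbox.2.1 hwbox.1 hwbox.2.1
  obtain ⟨⟨hu1, hu1'⟩, hu2, hu2'⟩ := hubox
  obtain ⟨⟨hv1, hv1'⟩, hv2, hv2'⟩ := hvbox
  obtain ⟨-, hw2, -⟩ := hwbox
  have hfactor : triangleDet u v w * ((w.2 + u.2) * (v.2 + u.2)) =
      -A * ((v.1 - u.1) * (w.1 - u.1) *
        ((w.1 - v.1) * (v.2 + u.2) + (v.1 + u.1) * (v.2 - w.2))) := by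
    rw [triangleDet]
    linear_combination
      (v.1 - u.1) * (v.2 + u.2) * (hw - hu) - (w.1 - u.1) * (w.2 + u.2) * (hv - hu)
  have hlast : |(w.1 - v.1) * (v.2 + u.2) + (v.1 + u.1) * (v.2 - w.2)| ≤ 20 * h := by
    calc _ ≤ |(w.1 - v.1) * (v.2 + u.2)| + |(v.1 + u.1) * (v.2 - w.2)| := abs_add_le _ _
      _ = |w.1 - v.1| * (v.2 + u.2) + (v.1 + u.1) * |v.2 - w.2| := by
        rw [abs_mul, abs_mul, abs_of_pos (show 0 < v.2 + u.2 by linarith),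
          abs_of_pos (show 0 < v.1 + u.1 by linarith)]
      _ ≤ h * 4 + 4 * (4 * h) := by gcongr <;> linarith
      _ = 20 * h := by ring
  have hone : 1 ≤ (w.2 + u.2) * (v.2 + u.2) :=
    one_le_mul_of_one_le_of_one_le (by linarith) (by linarith)
  calc |triangleDet u v w| ≤ |triangleDet u v w| * ((w.2 + u.2) * (v.2 + u.2)) :=
        le_mul_of_one_le_right (abs_nonneg _) hone
    _ = |A| * (|v.1 - u.1| * |w.1 - u.1| *
        |(w.1 - v.1) * (v.2 + u.2) + (v.1 + u.1) * (v.2 - w.2)|) := by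
      rw [← abs_of_pos (one_pos.trans_le hone), ← abs_mul, hfactor, abs_mul, abs_mul, abs_mul,
        abs_neg]
    _ ≤ 1 * (h * h * (20 * h)) := by gcongr
    _ = 20 * h ^ 3 := by ring

-- A smooth conic contains no three collinear points.
theorem triangleDet_ne_zero_of_conic (hA : A ≠ 0) (hc : c ≠ 0)
    (hu : A * u.1 ^ 2 + u.2 ^ 2 = c) (hv : A * v.1 ^ 2 + v.2 ^ 2 = c)
    (hw : A * w.1 ^ 2 + w.2 ^ 2 = c) (hvu : v.1 ≠ u.1) (hwu : w.1 ≠ u.1) (hwv : w.1 ≠ v.1) :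
    triangleDet u v w ≠ 0 := by
  intro hdet
  have hvu' := sub_ne_zero.2 hvu
  obtain ⟨m, hm⟩ : ∃ m, v.2 - u.2 = m * (v.1 - u.1) :=
    ⟨(v.2 - u.2) / (v.1 - u.1), (div_mul_cancel₀ _ hvu').symm⟩
  have hm' : w.2 - u.2 = m * (w.1 - u.1) :=
    mul_left_cancel₀ hvu' (by rw [triangleDet] at hdet; linear_combination hdet + (w.1 - u.1) * hm)
  have hslope : A * (v.1 + u.1) + m * (v.2 + u.2) = 0 :=
    mul_left_cancel₀ hvu' (by linear_combination hv - hu - (v.2 + u.2) * hm)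
  have hslope' : A * (w.1 + u.1) + m * (w.2 + u.2) = 0 :=
    mul_left_cancel₀ (sub_ne_zero.2 hwu) (by linear_combination hw - hu - (w.2 + u.2) * hm')
  have hasymptote : A + m ^ 2 = 0 :=
    mul_left_cancel₀ (sub_ne_zero.2 hwv)
      (by linear_combination hslope' - hslope - m * hm' + m * hm)
  have hm0 : m ≠ 0 := by
    rintro rfl
    exact hA (by linarith)
  have horigin : u.2 - m * u.1 = 0 := mul_left_cancel₀ hm0 (by
    linear_combination (1 / 2) * hslope - (v.1 + u.1) / 2 * hasymptote - m / 2 * hm)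
  exact hc (by rw [← hu]; linear_combination u.1 ^ 2 * hasymptote + (u.2 + m * u.1) * horigin)

theorem card_conic_le_of_abs_le_one (hA0 : A ≠ 0) (hA : |A| ≤ 1) (hc : c ≠ 0) (hh : 0 < h)
    (hbox : ∀ u ∈ T, u.1 ∈ Set.Icc (1 / 2) 2 ∧ u.2 ∈ Set.Icc (1 / 2) 2)
    (hconic : ∀ u ∈ T, A * u.1 ^ 2 + u.2 ^ 2 = c)
    (hrigid : ∀ u ∈ T, ∀ v ∈ T, ∀ w ∈ T,
      |triangleDet u v w| ≤ 20 * h ^ 3 → triangleDet u v w = 0) :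
    (#T : ℝ) ≤ (2 / h + 1) * 2 := by
  have hinj : ∀ u ∈ T, ∀ v ∈ T, u ≠ v → v.1 ≠ u.1 := by
    intro u hu v hv huv hfst
    have hsq : u.2 ^ 2 = v.2 ^ 2 := by
      linear_combination hconic u hu - hconic v hv + A * (v.1 + u.1) * hfst
    have hu2 := (hbox u hu).2.1
    have hv2 := (hbox v hv).2.1
    exact huv (Prod.ext hfst.symm
      ((pow_left_inj₀ (by linarith) (by linarith) two_ne_zero).1 hsq))
  refine card_le_mul_of_fiber_card_le (fun u => ⌊u.1 / h⌋) zero_le_two ?_ fun b _ => ?_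
  · have := card_le_sub_add_one (T := T.image fun u => ⌊u.1 / h⌋) (a := 0) (b := 2 / h)
      (by positivity) (forall_mem_image.2 fun u hu => ?_)
    · linarith
    · obtain ⟨h1, h2⟩ := (hbox u hu).1
      exact ⟨by exact_mod_cast Int.floor_nonneg.2 (div_nonneg (by linarith) hh.le),
        (Int.floor_le _).trans (by gcongr)⟩
  · by_contra! hcard
    obtain ⟨u, hu, v, hv, w, hw, huv, huw, hvw⟩ := two_lt_card.1 (by exact_mod_cast hcard)
    have hclose : ∀ u ∈ T.filter fun u => ⌊u.1 / h⌋ = b,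
        ∀ v ∈ T.filter fun u => ⌊u.1 / h⌋ = b, |v.1 - u.1| ≤ h := by
      intro u hu v hv
      have := Int.abs_sub_lt_one_of_floor_eq_floor
        ((mem_filter.1 hv).2.trans (mem_filter.1 hu).2.symm)
      rw [← sub_div, abs_div, abs_of_pos hh, div_lt_one hh] at this
      exact this.le
    have huT := (mem_filter.1 hu).1
    have hvT := (mem_filter.1 hv).1
    have hwT := (mem_filter.1 hw).1
    exact triangleDet_ne_zero_of_conic hA0 hc (hconic u huT) (hconic v hvT) (hconic w hwT)
      (hinj u huT v hvT huv) (hinj u huT w hwT huw) (hinj v hvT w hwT hvw) <|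
      hrigid u huT v hvT w hwT <| abs_triangleDet_le_of_conic hA (hconic u huT) (hconic v hvT)
        (hconic w hwT) (hbox u huT) (hbox v hvT) (hbox w hwT) (hclose u hu v hv)
        (hclose u hu w hw) (hclose v hv w hw)

theorem card_conic_le (hA : A ≠ 0) (hc : c ≠ 0) (hh : 0 < h)
    (hbox : ∀ u ∈ T, u.1 ∈ Set.Icc (1 / 2) 2 ∧ u.2 ∈ Set.Icc (1 / 2) 2)
    (hconic : ∀ u ∈ T, A * u.1 ^ 2 + u.2 ^ 2 = c)
    (hrigid : ∀ u ∈ T, ∀ v ∈ T, ∀ w ∈ T,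
      |triangleDet u v w| ≤ 20 * h ^ 3 → triangleDet u v w = 0) :
    (#T : ℝ) ≤ (2 / h + 1) * 2 := by
  rcases le_total |A| 1 with hA1 | hA1
  · exact card_conic_le_of_abs_le_one hA hA1 hc hh hbox hconic hrigid
  · rw [← card_image_of_injective T Prod.swap_injective]
    refine card_conic_le_of_abs_le_one (inv_ne_zero hA) ?_ (div_ne_zero hc hA) hh
      (forall_mem_image.2 fun u hu => (hbox u hu).symm) (forall_mem_image.2 fun u hu => ?_)
      (forall_mem_image.2 fun u hu => forall_mem_image.2 fun v hv => forall_mem_image.2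
        fun w hw => ?_)
    · rw [abs_inv]
      exact inv_le_one_of_one_le₀ hA1
    · rw [← hconic u hu, Prod.fst_swap, Prod.snd_swap]
      field_simp
      ring
    · rw [triangleDet_swap, abs_neg, neg_eq_zero]
      exact hrigid u hu v hv w hw

end RealConic

section ConicPoints

open Finset

variable {X : Fin 3 → ℝ} {x y z : Fin 3 → ℤ}

/-- The affine coordinates `(x₀ / x₂, x₁ / x₂)` of a point of the projective plane, rescaled by the
sides of the box `X`. -/
noncomputable def scaledAffine (X : Fin 3 → ℝ) (x : Fin 3 → ℤ) : ℝ × ℝ :=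
  (x 0 / X 0 / (x 2 / X 2), x 1 / X 1 / (x 2 / X 2))

theorem scaledAffine_mem (hX : ∀ i, 0 < X i) (hx : ∀ i, X i / 2 < x i ∧ x i ≤ X i) :
    (scaledAffine X x).1 ∈ Set.Icc (1 / 2) 2 ∧ (scaledAffine X x).2 ∈ Set.Icc (1 / 2) 2 := by
  have hscaled : ∀ i, 1 / 2 < x i / X i ∧ x i / X i ≤ 1 := fun i => by
    rw [lt_div_iff₀ (hX i), div_le_one (hX i)]
    exact ⟨by linarith [(hx i).1], (hx i).2⟩
  have hratio : ∀ i, x i / X i / (x 2 / X 2) ∈ Set.Icc (1 / 2) 2 := fun i => by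
    obtain ⟨h1, h1'⟩ := hscaled i
    obtain ⟨h2, h2'⟩ := hscaled 2
    rw [Set.mem_Icc, le_div_iff₀ (by linarith), div_le_iff₀ (by linarith)]
    constructor <;> linarith
  exact ⟨hratio 0, hratio 1⟩

theorem det_eq_mul_triangleDet_scaledAffine (hX : ∀ i, 0 < X i) (hx : x 2 ≠ 0) (hy : y 2 ≠ 0)
    (hz : z 2 ≠ 0) : ((Matrix.of ![x, y, z]).det : ℝ) =
      (∏ i, X i) * (x 2 / X 2 * (y 2 / X 2) * (z 2 / X 2)) *
        triangleDet (scaledAffine X x) (scaledAffine X y) (scaledAffine X z) := by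
  have h0 := (hX 0).ne'
  have h1 := (hX 1).ne'
  have h2 := (hX 2).ne'
  have hx' : (x 2 : ℝ) ≠ 0 := by exact_mod_cast hx
  have hy' : (y 2 : ℝ) ≠ 0 := by exact_mod_cast hy
  have hz' : (z 2 : ℝ) ≠ 0 := by exact_mod_cast hz
  rw [Matrix.det_fin_three, Fin.prod_univ_three]
  simp only [triangleDet, scaledAffine, Matrix.of_apply, Matrix.cons_val]
  push_cast
  field_simp
  ring

theorem scaledAffine_injOn {T : Finset (Fin 3 → ℤ)} (hX : ∀ i, 0 < X i)
    (hpos : ∀ x ∈ T, ∀ i, 0 < x i) (hcop : ∀ x ∈ T, IsCoprime (x 0) (x 2)) :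
    Set.InjOn (scaledAffine X) T := by
  intro x hx y hy hxy
  have hx2 : (x 2 : ℝ) ≠ 0 := by exact_mod_cast (hpos x hx 2).ne'
  have hy2 : (y 2 : ℝ) ≠ 0 := by exact_mod_cast (hpos y hy 2).ne'
  have h0 := (hX 0).ne'
  have h1 := (hX 1).ne'
  have h2 := (hX 2).ne'
  obtain ⟨hfst, hsnd⟩ := Prod.ext_iff.1 hxy
  simp only [scaledAffine] at hfst hsnd
  field_simp at hfst hsnd
  obtain ⟨e0, e2⟩ := eq_and_eq_of_isCoprime_of_mul_eq (hpos x hx 0) (hpos y hy 0) (hcop x hx)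
    (hcop y hy) (by exact_mod_cast hfst.trans (mul_comm _ _))
  rw [e2] at hsnd
  exact funext_fin_three e0
    (by exact_mod_cast (mul_left_cancel₀ hy2 hsnd : (x 1 : ℝ) = y 1)) e2

theorem triangleDet_scaledAffine_eq_zero (hX : ∀ i, 0 < X i) (hx : 0 < x 2 ∧ (x 2 : ℝ) ≤ X 2)
    (hy : 0 < y 2 ∧ (y 2 : ℝ) ≤ X 2) (hz : 0 < z 2 ∧ (z 2 : ℝ) ≤ X 2) {Q : ℤ}
    (hdvd : Q ∣ (Matrix.of ![x, y, z]).det)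
    (hlt : |triangleDet (scaledAffine X x) (scaledAffine X y) (scaledAffine X z)| <
      Q / ∏ i, X i) :
    triangleDet (scaledAffine X x) (scaledAffine X y) (scaledAffine X z) = 0 := by
  have hP : 0 < ∏ i, X i := prod_pos fun i _ => hX i
  have hfrac : ∀ {n : ℤ}, 0 < n ∧ (n : ℝ) ≤ X 2 → 0 < n / X 2 ∧ n / X 2 ≤ 1 := fun hn =>
    ⟨div_pos (by exact_mod_cast hn.1) (hX 2), (div_le_one (hX 2)).2 hn.2⟩
  obtain ⟨hx2, hx2'⟩ := hfrac hx
  obtain ⟨hy2, hy2'⟩ := hfrac hy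
  obtain ⟨hz2, hz2'⟩ := hfrac hz
  have heq := det_eq_mul_triangleDet_scaledAffine hX hx.1.ne' hy.1.ne' hz.1.ne'
  have hlt' : |((Matrix.of ![x, y, z]).det : ℝ)| < Q := by
    rw [lt_div_iff₀ hP] at hlt
    rw [heq, abs_mul, abs_of_pos (by positivity)]
    refine lt_of_le_of_lt ?_ hlt
    calc _ ≤ (∏ i, X i) * (1 * 1 * 1) *
          |triangleDet (scaledAffine X x) (scaledAffine X y) (scaledAffine X z)| := by gcongr
      _ = _ := by ring
  have hzero := Int.eq_zero_of_abs_lt_dvd hdvd (by exact_mod_cast hlt')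
  rw [hzero, Int.cast_zero] at heq
  exact (mul_eq_zero.1 heq.symm).resolve_left (by positivity)

theorem card_conicPoints_le (hX : ∀ i, 0 < X i) {c : Fin 3 → ℤ} (hc : ∀ i, c i ≠ 0) {Q : ℤ}
    (hQ : 0 < Q) {T : Finset (Fin 3 → ℤ)} (hbox : ∀ x ∈ T, ∀ i, X i / 2 < x i ∧ x i ≤ X i)
    (hcop : ∀ x ∈ T, IsCoprime (x 0) (x 2)) (hconic : ∀ x ∈ T, ∑ i, c i * x i ^ 2 = 0)
    (hdet : ∀ x ∈ T, ∀ y ∈ T, ∀ z ∈ T, Q ∣ (Matrix.of ![x, y, z]).det) :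
    (#T : ℝ) ≤ 16 * (1 + ((∏ i, X i) / Q) ^ (1 / 3 : ℝ)) := by
  have hQ' : (0 : ℝ) < Q := by exact_mod_cast hQ
  have hP : 0 < ∏ i, X i := prod_pos fun i _ => hX i
  have hc' : ∀ i, (c i : ℝ) ≠ 0 := fun i => by exact_mod_cast hc i
  have hX' : ∀ i, X i ≠ 0 := fun i => (hX i).ne'
  have hpos : ∀ x ∈ T, ∀ i, 0 < x i := fun x hx i => by
    exact_mod_cast (half_pos (hX i)).trans (hbox x hx i).1
  set g := ((∏ i, X i) / Q) ^ (1 / 3 : ℝ)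
  have hg : 0 < g := by positivity
  have hg3 : g ^ 3 = (∏ i, X i) / Q := by
    rw [← Real.rpow_natCast, ← Real.rpow_mul (by positivity)]
    norm_num
  rw [← card_image_of_injOn (scaledAffine_injOn hX hpos hcop)]
  calc _ ≤ (2 / (1 / (3 * g)) + 1) * 2 := by
        refine card_conic_le (A := c 0 * X 0 ^ 2 / (c 1 * X 1 ^ 2))
          (c := -(c 2 * X 2 ^ 2) / (c 1 * X 1 ^ 2)) ?_ ?_ (by positivity)
          (forall_mem_image.2 fun x hx => scaledAffine_mem hX (hbox x hx))
          (forall_mem_image.2 fun x hx => ?_)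
          (forall_mem_image.2 fun x hx => forall_mem_image.2 fun y hy => forall_mem_image.2
            fun z hz hsmall => ?_)
        · have := hc' 0; have := hc' 1; have := hX' 0; have := hX' 1
          positivity
        · have := hc' 2; have := hc' 1; have := hX' 2; have := hX' 1
          exact div_ne_zero (neg_ne_zero.2 (by positivity)) (by positivity)
        · have hx2 : (x 2 : ℝ) ≠ 0 := by exact_mod_cast (hpos x hx 2).ne'
          have heq : (c 0 : ℝ) * x 0 ^ 2 + c 1 * x 1 ^ 2 + c 2 * x 2 ^ 2 = 0 := by
            exact_mod_cast (Fin.sum_univ_three fun i => c i * x i ^ 2).symm.trans (hconic x hx)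
          have := hc' 1; have := hX' 0; have := hX' 1; have := hX' 2
          simp only [scaledAffine]
          field_simp
          linear_combination heq
        · have hfrac : ∀ x ∈ T, 0 < x 2 ∧ (x 2 : ℝ) ≤ X 2 := fun x hx =>
            ⟨hpos x hx 2, (hbox x hx 2).2⟩
          refine triangleDet_scaledAffine_eq_zero hX (hfrac x hx) (hfrac y hy) (hfrac z hz)
            (hdet x hx y hy z hz) (hsmall.trans_lt ?_)
          calc 20 * (1 / (3 * g)) ^ 3 = 20 / 27 * (1 / g ^ 3) := by field_simp; norm_num
            _ = 20 / 27 * (Q / ∏ i, X i) := by rw [hg3, one_div_div]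
            _ < Q / ∏ i, X i := by linarith [div_pos hQ' hP]
    _ = 12 * g + 2 := by field_simp; ring
    _ ≤ 16 * (1 + g) := by linarith

theorem dvd_det_of_forall_dvd_sub {n R : Type*} [Fintype n] [DecidableEq n] [CommRing R]
    (M : Matrix n n R) {j k : n} (hjk : j ≠ k) {q ρ : R} (h : ∀ i, q ∣ M i j - ρ * M i k) :
    q ∣ M.det := by
  choose u hu using h
  have hcol : (fun i => M i j + -ρ * M i k) = q • u := by
    ext i
    simp only [Pi.smul_apply, smul_eq_mul, ← hu]
    ring
  rw [← Matrix.det_updateCol_add_smul_self M hjk (-ρ)]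
  simp only [smul_eq_mul]
  rw [hcol, Matrix.det_updateCol_smul]
  exact dvd_mul_right _ _

end ConicPoints

section ConicBound

open Finset

variable {a : Fin 3 → ℤ} {X Y : Fin 3 → ℝ} {W : ℝ} {T : Finset ((Fin 3 → ℤ) × (Fin 3 → ℤ))}

theorem card_image_snd_le (hT : ∀ p ∈ T, IsSolution a X Y p) (hY : ∀ i, 0 ≤ Y i) :
    (#(T.image Prod.snd) : ℝ) ≤ ∏ i, Y i := by
  have hsub : T.image Prod.snd ⊆ Fintype.piFinset fun i => T.image fun p => p.2 i :=
    image_subset_iff.2 fun p hp => Fintype.mem_piFinset.2 fun i => mem_image_of_mem _ hp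
  calc (#(T.image Prod.snd) : ℝ) ≤ #(Fintype.piFinset fun i => T.image fun p => p.2 i) := by
        exact_mod_cast card_le_card hsub
    _ = ∏ i, (#(T.image fun p => p.2 i) : ℝ) := by rw [Fintype.card_piFinset, Nat.cast_prod]
    _ ≤ ∏ i, Y i := prod_le_prod (fun _ _ => Nat.cast_nonneg _) fun i _ => card_image_y_le hT hY i

theorem card_solutions_conic_le (hbox : IsBox a X Y W) {p₀ : (Fin 3 → ℤ) × (Fin 3 → ℤ)}
    (h₀ : IsSolution a X Y p₀) (hT : ∀ p ∈ T, IsSolution a X Y p) (hy : ∀ p ∈ T, p.2 = p₀.2)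
    (hlat : ∀ i, ∃ j k ρ, j ≠ k ∧ ∀ p ∈ T, p₀.2 i ^ 3 ∣ p.1 j - ρ * p.1 k) :
    (#T : ℝ) ≤ 16 * (1 + 8 * ((∏ i, X i) ^ (1 / 3 : ℝ) / ∏ i, Y i)) := by
  have hX : 0 < ∏ i, X i := prod_pos fun i _ => hbox.x_pos i
  have hY : 0 < ∏ i, Y i := prod_pos fun i _ => hbox.y_pos i
  have hinj : Set.InjOn (Prod.fst : (Fin 3 → ℤ) × (Fin 3 → ℤ) → _) T := fun p hp q hq hpq =>
    Prod.ext hpq ((hy p hp).trans (hy q hq).symm)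
  have hQ : (∏ i, Y i / 2) ^ 3 ≤ ((∏ i, p₀.2 i ^ 3 : ℤ) : ℝ) := by
    push_cast
    rw [← prod_pow]
    refine prod_le_prod (fun i _ => by have := hbox.y_pos i; positivity) fun i _ => ?_
    have := hbox.y_pos i
    gcongr
    exact (h₀.lt_y i).le
  rw [← card_image_of_injOn hinj]
  calc _ ≤ 16 * (1 + ((∏ i, X i) / ((∏ i, p₀.2 i ^ 3 : ℤ) : ℝ)) ^ (1 / 3 : ℝ)) := by
        refine card_conicPoints_le hbox.x_pos (c := fun i => a i * p₀.2 i ^ 3)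
          (fun i => mul_ne_zero (hbox.coeff_ne_zero i) (pow_ne_zero 3 (h₀.y_pos i).ne'))
          (prod_pos fun i _ => pow_pos (h₀.y_pos i) 3)
          (forall_mem_image.2 fun p hp i => ⟨(hT p hp).lt_x i, (hT p hp).x_le i⟩)
          (forall_mem_image.2 fun p hp => (hT p hp).isCoprime_x_x (by decide))
          (forall_mem_image.2 fun p hp => ?_) (forall_mem_image.2 fun p hp =>
            forall_mem_image.2 fun q hq => forall_mem_image.2 fun r hr => ?_)
        · rw [← hy p hp, ← (hT p hp).sum_eq_zero]
          exact sum_congr rfl fun i _ => by ring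
        · refine Fintype.prod_dvd_of_coprime (fun i j hij => (h₀.isCoprime_y_y hij).pow)
            fun i => ?_
          obtain ⟨j, k, ρ, hjk, hdvd⟩ := hlat i
          refine dvd_det_of_forall_dvd_sub _ hjk (ρ := ρ) fun l => ?_
          fin_cases l
          exacts [hdvd p hp, hdvd q hq, hdvd r hr]
    _ ≤ 16 * (1 + ((∏ i, X i) / (∏ i, Y i / 2) ^ 3) ^ (1 / 3 : ℝ)) := by
      have hY2 : 0 < ∏ i, Y i / 2 := prod_pos fun i _ => half_pos (hbox.y_pos i)
      have hQ0 := (pow_pos hY2 3).trans_le hQ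
      gcongr
    _ = 16 * (1 + 8 * ((∏ i, X i) ^ (1 / 3 : ℝ) / ∏ i, Y i)) := by
      rw [prod_div_distrib, prod_const, card_univ, Fintype.card_fin,
        Real.div_rpow hX.le (by positivity), ← Real.rpow_natCast (_ / _),
        ← Real.rpow_mul (by positivity)]
      norm_num
      field_simp

theorem sq_dvd_sub_of_isSolution {p q : (Fin 3 → ℤ) × (Fin 3 → ℤ)} (hp : IsSolution a X Y p)
    (hq : IsSolution a X Y q) (h : p.2 = q.2) :
    p.2 0 ^ 3 ∣ p.1 1 ^ 2 * q.1 2 ^ 2 - q.1 1 ^ 2 * p.1 2 ^ 2 := by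
  have hcop : IsCoprime (p.2 0 ^ 3) (a 1 * p.2 1 ^ 3) :=
    ((hp.isCoprime_coeff_y 1 0).mul_left (hp.isCoprime_y_y one_ne_zero).pow_left).symm.pow_left
  refine hcop.dvd_of_dvd_mul_left ⟨a 0 * q.1 0 ^ 2 * p.1 2 ^ 2 - a 0 * p.1 0 ^ 2 * q.1 2 ^ 2, ?_⟩
  have heq := hq.equation
  rw [← h] at heq
  linear_combination q.1 2 ^ 2 * hp.equation - p.1 2 ^ 2 * heq

theorem exists_card_le_of_sq_classes {η : ℝ} (hη : 0 < η) :
    ∃ C : ℝ, 1 ≤ C ∧ ∀ (a : Fin 3 → ℤ) (X Y : Fin 3 → ℝ) (W M : ℝ)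
      (p₀ : (Fin 3 → ℤ) × (Fin 3 → ℤ)) (T : Finset ((Fin 3 → ℤ) × (Fin 3 → ℤ)))
      (σ : Equiv.Perm (Fin 3)), IsBox a X Y W → IsSolution a X Y p₀ →
      (∀ p ∈ T, IsSolution a X Y p) → (∀ p ∈ T, p.2 = p₀.2) → 0 ≤ M →
      (∀ T' ⊆ T, ∀ ρ, (∀ p ∈ T', p₀.2 (σ 0) ^ 3 ∣ p.1 (σ 1) - ρ * p.1 (σ 2)) → (#T' : ℝ) ≤ M) →
      (#T : ℝ) ≤ C * W ^ η * M := by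
  obtain ⟨C, hC, hclasses⟩ :=
    exists_card_le_mul_of_lattice_classes ((Fin 3 → ℤ) × (Fin 3 → ℤ)) hη
  refine ⟨C, hC, fun a X Y W M p₀ T σ hbox h₀ hT hy hM hlat => ?_⟩
  refine hclasses 2 (p₀.2 (σ 0)) W M T (fun p => p.1 (σ 1)) (fun p => p.1 (σ 2)) two_pos
    (by norm_num) (h₀.y_pos _) (h₀.squarefree _) ((h₀.y_le _).trans (hbox.y_le _)) hM
    (fun p hp => ?_) (fun p hp => ?_) (fun p hp q hq => ?_) hlat
  · rw [← hy p hp]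
    exact (hT p hp).isCoprime_x_y (σ.injective.ne (by decide))
  · rw [← hy p hp]
    exact (hT p hp).isCoprime_x_y (σ.injective.ne (by decide))
  · rw [← hy p hp]
    exact sq_dvd_sub_of_isSolution ((hT p hp).comp σ) ((hT q hq).comp σ)
      (congrArg (· ∘ σ) ((hy p hp).trans (hy q hq).symm))

/-- Modulo each `yᵢ ^ 3` the two coordinates of `x` of index different from `i` are proportional,
up to the choice of a square root. -/
theorem exists_card_solutions_fixed_y_le {η : ℝ} (hη : 0 < η) :
    ∃ C : ℝ, 1 ≤ C ∧ ∀ (a : Fin 3 → ℤ) (X Y : Fin 3 → ℝ) (W : ℝ)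
      (p₀ : (Fin 3 → ℤ) × (Fin 3 → ℤ)) (T : Finset ((Fin 3 → ℤ) × (Fin 3 → ℤ))),
      IsBox a X Y W → IsSolution a X Y p₀ → (∀ p ∈ T, IsSolution a X Y p) →
      (∀ p ∈ T, p.2 = p₀.2) →
      (#T : ℝ) ≤ C * W ^ η * (16 * (1 + 8 * ((∏ i, X i) ^ (1 / 3 : ℝ) / ∏ i, Y i))) := by
  obtain ⟨C, hC, hsplit⟩ := exists_card_le_of_sq_classes (div_pos hη three_pos)
  refine ⟨C ^ 3, one_le_pow₀ hC, fun a X Y W p₀ T hbox h₀ hT hy => ?_⟩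
  have hW := hbox.pos
  have hX : 0 < ∏ i, X i := prod_pos fun i _ => hbox.x_pos i
  have hY : 0 < ∏ i, Y i := prod_pos fun i _ => hbox.y_pos i
  set S := C * W ^ (η / 3) with hS
  set M := 16 * (1 + 8 * ((∏ i, X i) ^ (1 / 3 : ℝ) / ∏ i, Y i))
  have hS3 : S ^ 3 = C ^ 3 * W ^ η := by
    rw [hS, mul_pow, ← Real.rpow_natCast (W ^ _), ← Real.rpow_mul hW.le]
    norm_num
  have hsplits : (#T : ℝ) ≤ S * (S * (S * M)) := by
    refine hsplit a X Y W _ p₀ T 1 hbox h₀ hT hy (by positivity) fun T₁ hT₁ ρ₁ h1 => ?_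
    refine hsplit a X Y W _ p₀ T₁ (Equiv.swap 0 1) hbox h₀ (fun p hp => hT p (hT₁ hp))
      (fun p hp => hy p (hT₁ hp)) (by positivity) fun T₂ hT₂ ρ₂ h2 => ?_
    refine hsplit a X Y W _ p₀ T₂ (Equiv.swap 0 2) hbox h₀ (fun p hp => hT p (hT₁ (hT₂ hp)))
      (fun p hp => hy p (hT₁ (hT₂ hp))) (by positivity) fun T₃ hT₃ ρ₃ h3 => ?_
    refine card_solutions_conic_le hbox h₀ (fun p hp => hT p (hT₁ (hT₂ (hT₃ hp))))
      (fun p hp => hy p (hT₁ (hT₂ (hT₃ hp)))) fun i => ?_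
    fin_cases i
    · exact ⟨1, 2, ρ₁, by decide, fun p hp => h1 p (hT₂ (hT₃ hp))⟩
    · exact ⟨0, 2, ρ₂, by decide, fun p hp => h2 p (hT₃ hp)⟩
    · exact ⟨1, 0, ρ₃, by decide, h3⟩
  calc (#T : ℝ) ≤ S ^ 3 * M := hsplits.trans_eq (by ring)
    _ = C ^ 3 * W ^ η * M := by rw [hS3]

theorem IsBox.prod_x_rpow_one_third_le (hbox : IsBox a X Y W) :
    (∏ i, X i) ^ (1 / 3 : ℝ) ≤ W ^ (1 / 2 : ℝ) := by
  have hW := hbox.pos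
  calc (∏ i, X i) ^ (1 / 3 : ℝ) ≤ (∏ _i : Fin 3, W ^ (1 / 2 : ℝ)) ^ (1 / 3 : ℝ) := by
        gcongr with i
        · exact prod_nonneg fun i _ => (hbox.x_pos i).le
        · exact fun i _ => (hbox.x_pos i).le
        · rw [← Real.sqrt_eq_rpow]
          exact Real.le_sqrt_of_sq_le (hbox.x_sq_le i)
    _ = W ^ (1 / 2 : ℝ) := by
      rw [prod_const, card_univ, Fintype.card_fin, ← Real.rpow_natCast,
        ← Real.rpow_mul hW.le, ← Real.rpow_mul hW.le]
      norm_num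

theorem exists_card_le_conic_bound {ε : ℝ} (hε : 0 < ε) :
    ∃ C : ℝ, 1 ≤ C ∧ ∀ (a : Fin 3 → ℤ) (X Y : Fin 3 → ℝ) (W : ℝ)
      (T : Finset ((Fin 3 → ℤ) × (Fin 3 → ℤ))), IsBox a X Y W → (∀ p ∈ T, IsSolution a X Y p) →
      (#T : ℝ) ≤ C * W ^ ε * (∏ i, Y i + W ^ (1 / 2 : ℝ)) := by
  obtain ⟨C, hC, hfiber⟩ := exists_card_solutions_fixed_y_le hε
  refine ⟨128 * C, one_le_mul_of_one_le_of_one_le (by norm_num) hC,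
    fun a X Y W T hbox hT => ?_⟩
  have hW := hbox.pos
  have hX : 0 < ∏ i, X i := prod_pos fun i _ => hbox.x_pos i
  have hY : 0 < ∏ i, Y i := prod_pos fun i _ => hbox.y_pos i
  calc (#T : ℝ)
      ≤ (∏ i, Y i) * (C * W ^ ε * (16 * (1 + 8 * ((∏ i, X i) ^ (1 / 3 : ℝ) / ∏ i, Y i)))) :=
        card_le_mul_of_fiber_card_le Prod.snd (by positivity)
          (card_image_snd_le hT fun i => (hbox.y_pos i).le) <| forall_mem_image.2 fun p₀ hp₀ =>
          hfiber a X Y W p₀ _ hbox (hT p₀ hp₀) (fun p hp => hT p (mem_filter.1 hp).1)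
            fun p hp => (mem_filter.1 hp).2
    _ = C * W ^ ε * (16 * ∏ i, Y i + 128 * (∏ i, X i) ^ (1 / 3 : ℝ)) := by
      field_simp
      ring
    _ ≤ C * W ^ ε * (128 * ∏ i, Y i + 128 * W ^ (1 / 2 : ℝ)) := by
      gcongr
      · norm_num
      · exact hbox.prod_x_rpow_one_third_le
    _ = 128 * C * W ^ ε * (∏ i, Y i + W ^ (1 / 2 : ℝ)) := by ring

end ConicBound

/-! ### The collision bound -/

section CongruentPairs

open Finset

/-- A point `(x, y)` of the box `x ≤ X`, `Y / 2 < y ≤ Y` both of whose coordinates are units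
modulo `z`. -/
structure IsUnitPoint (X Y : ℝ) (z : ℤ) (p : ℤ × ℤ) : Prop where
  x_pos : 0 < p.1
  x_le : (p.1 : ℝ) ≤ X
  y_pos : 0 < p.2
  lt_y : Y / 2 < p.2
  y_le : (p.2 : ℝ) ≤ Y
  isCoprime_x : IsCoprime p.1 z
  isCoprime_y : IsCoprime p.2 z

/-- A pair of points `(x, y)`, `(x', y')` with `x² y³ ≡ x'² y'³` modulo `z³`. The number of such
pairs is the multiplicative energy that controls the collisions counted below. -/
structure IsCongruentPair (X Y : ℝ) (z : ℤ) (e : (ℤ × ℤ) × (ℤ × ℤ)) : Prop where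
  fst : IsUnitPoint X Y z e.1
  snd : IsUnitPoint X Y z e.2
  cube_dvd : z ^ 3 ∣ e.1.1 ^ 2 * e.1.2 ^ 3 - e.2.1 ^ 2 * e.2.2 ^ 3

variable {X Y W : ℝ} {z : ℤ} {d : ℕ} {T : Finset ((ℤ × ℤ) × (ℤ × ℤ))}

theorem eq_and_eq_of_gcd_eq_of_mul_eq {u v u' v' : ℤ} (hu : u ≠ 0) (hv : 0 < v) (hv' : 0 < v')
    (hgcd : Int.gcd u v = Int.gcd u' v') (h : u * v' = u' * v) : u = u' ∧ v = v' := by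
  have hmul : Int.gcd u v * v'.natAbs = Int.gcd u v * v.natAbs := by
    rw [← Int.gcd_mul_right, h, mul_comm v v', Int.gcd_mul_right, hgcd]
  have hvv : v'.natAbs = v.natAbs :=
    Nat.eq_of_mul_eq_mul_left (Int.gcd_pos_of_ne_zero_left _ hu) hmul
  obtain rfl : v = v' := by omega
  exact ⟨mul_right_cancel₀ hv.ne' h, rfl⟩

theorem sq_mul_dvd_of_gcd_eq {p r : ℤ × ℤ} {q ρ : ℤ} (hcop : IsCoprime p.1 q)
    (hp : Int.gcd p.1 p.2 = d) (hr : Int.gcd r.1 r.2 = d) (hpq : q ∣ p.1 - ρ * p.2)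
    (hrq : q ∣ r.1 - ρ * r.2) : (d : ℤ) ^ 2 * q ∣ p.1 * r.2 - r.1 * p.2 := by
  have hp1 : (d : ℤ) ∣ p.1 := hp ▸ Int.gcd_dvd_left ..
  have hp2 : (d : ℤ) ∣ p.2 := hp ▸ Int.gcd_dvd_right ..
  have hr1 : (d : ℤ) ∣ r.1 := hr ▸ Int.gcd_dvd_left ..
  have hr2 : (d : ℤ) ∣ r.2 := hr ▸ Int.gcd_dvd_right ..
  refine (hcop.of_isCoprime_of_dvd_left hp1).pow_left.mul_dvd ?_ ?_
  · rw [sq]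
    exact dvd_sub (mul_dvd_mul hp1 hr2) (mul_dvd_mul hr1 hp2)
  · convert dvd_sub (hpq.mul_right r.2) (hrq.mul_right p.2) using 1
    ring

theorem eq_of_gcd_eq_of_abs_div_sub_div_lt {p r : ℤ × ℤ} {q ρ : ℤ} (hp1 : 0 < p.1) (hp2 : 0 < p.2)
    (hr2 : 0 < r.2) (hpY : (p.2 : ℝ) ≤ Y) (hrY : (r.2 : ℝ) ≤ Y) (hcop : IsCoprime p.1 q)
    (hp : Int.gcd p.1 p.2 = d) (hr : Int.gcd r.1 r.2 = d) (hpq : q ∣ p.1 - ρ * p.2)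
    (hrq : q ∣ r.1 - ρ * r.2) (hq : 0 ≤ q)
    (hlt : |(p.1 / p.2 - r.1 / r.2 : ℝ)| < d ^ 2 * q / Y ^ 2) : p = r := by
  have hp2' : (0 : ℝ) < p.2 := Int.cast_pos.2 hp2
  have hr2' : (0 : ℝ) < r.2 := Int.cast_pos.2 hr2
  have hY : 0 < Y := hp2'.trans_le hpY
  have : (0 : ℝ) ≤ q := Int.cast_nonneg hq
  have hcross : |((p.1 * r.2 - r.1 * p.2 : ℤ) : ℝ)| < d ^ 2 * q := by
    calc |((p.1 * r.2 - r.1 * p.2 : ℤ) : ℝ)| = |(p.1 / p.2 - r.1 / r.2 : ℝ) * (p.2 * r.2)| := by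
          push_cast
          field_simp
      _ = |(p.1 / p.2 - r.1 / r.2 : ℝ)| * (p.2 * r.2) := by
        rw [abs_mul, abs_of_pos (mul_pos hp2' hr2')]
      _ < d ^ 2 * q / Y ^ 2 * (p.2 * r.2) := by gcongr
      _ ≤ d ^ 2 * q / Y ^ 2 * (Y * Y) := by gcongr
      _ = d ^ 2 * q := by field_simp
  have hzero := Int.eq_zero_of_abs_lt_dvd (sq_mul_dvd_of_gcd_eq hcop hp hr hpq hrq)
    (by exact_mod_cast hcross)
  exact Prod.ext_iff.2 <| eq_and_eq_of_gcd_eq_of_mul_eq hp1.ne' hp2 hr2 (hp.trans hr.symm)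
    (sub_eq_zero.1 hzero)

theorem card_le_of_gcd_eq_of_dvd_sub (hd : 0 < d) {q ρ : ℤ} (hq : 0 < q) {T : Finset (ℤ × ℤ)}
    (hfst : ∀ p ∈ T, 0 < p.1 ∧ (p.1 : ℝ) ≤ Y) (hsnd : ∀ p ∈ T, Y / 2 < p.2 ∧ (p.2 : ℝ) ≤ Y)
    (hcop : ∀ p ∈ T, IsCoprime p.1 q) (hgcd : ∀ p ∈ T, Int.gcd p.1 p.2 = d)
    (hlat : ∀ p ∈ T, q ∣ p.1 - ρ * p.2) : (#T : ℝ) ≤ 2 * Y ^ 2 / (d ^ 2 * q) + 1 := by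
  have : (0 : ℝ) < q := Int.cast_pos.2 hq
  rcases T.eq_empty_or_nonempty with rfl | ⟨p₀, hp₀⟩
  · rw [card_empty, Nat.cast_zero]
    positivity
  have hY : 0 < Y := (Int.cast_pos.2 (hfst p₀ hp₀).1).trans_le (hfst p₀ hp₀).2
  have hfst_pos : ∀ p ∈ T, 0 < (p.1 : ℝ) := fun p hp => Int.cast_pos.2 (hfst p hp).1
  have hsnd_pos : ∀ p ∈ T, 0 < (p.2 : ℝ) := fun p hp => (half_pos hY).trans (hsnd p hp).1
  set g := d ^ 2 * q / Y ^ 2 with hg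
  have hg0 : 0 < g := by positivity
  have hinj : Set.InjOn (fun p : ℤ × ℤ => ⌊(p.1 / p.2 : ℝ) / g⌋) T := by
    intro p hp r hr hpr
    have hclose := Int.abs_sub_lt_one_of_floor_eq_floor hpr
    rw [← sub_div, abs_div, abs_of_pos hg0, div_lt_one hg0] at hclose
    exact eq_of_gcd_eq_of_abs_div_sub_div_lt (hfst p hp).1 (Int.cast_pos.1 (hsnd_pos p hp))
      (Int.cast_pos.1 (hsnd_pos r hr)) (hsnd p hp).2 (hsnd r hr).2 (hcop p hp) (hgcd p hp)
      (hgcd r hr) (hlat p hp) (hlat r hr) hq.le hclose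
  rw [← card_image_of_injOn hinj]
  refine (card_le_sub_add_one (b := 2 / g) (a := 0) (by positivity)
    (forall_mem_image.2 fun p hp => ?_)).trans_eq (by rw [hg, sub_zero]; field_simp)
  have hp1 := hfst_pos p hp
  have hp2 := hsnd_pos p hp
  have hnonneg : 0 ≤ ⌊(p.1 / p.2 : ℝ) / g⌋ := Int.floor_nonneg.2 (by positivity)
  refine ⟨Int.cast_nonneg hnonneg, (Int.floor_le _).trans ?_⟩
  gcongr
  rw [div_le_iff₀ hp2]
  linarith [(hfst p hp).2, (hsnd p hp).1]

theorem exists_card_congruentPairs_le_of_fixed_x {η : ℝ} (hη : 0 < η) :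
    ∃ C : ℝ, 1 ≤ C ∧ ∀ (X Y W : ℝ) (z x x' : ℤ) (d : ℕ) (T : Finset ((ℤ × ℤ) × (ℤ × ℤ))), 0 < z →
      Squarefree z → (z : ℝ) ≤ W → 0 < d → (∀ e ∈ T, IsCongruentPair X Y z e) →
      (∀ e ∈ T, e.1.1 = x) → (∀ e ∈ T, e.2.1 = x') → (∀ e ∈ T, Int.gcd e.1.2 e.2.2 = d) →
      (#T : ℝ) ≤ C * W ^ η * (2 * Y ^ 2 / (d ^ 2 * z ^ 3) + 1) := by
  obtain ⟨C, hC, hclasses⟩ := exists_card_le_mul_of_lattice_classes ((ℤ × ℤ) × (ℤ × ℤ)) hη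
  refine ⟨C, hC, fun X Y W z x x' d T hz hzsq hzW hd hT hx hx' hgcd => ?_⟩
  refine hclasses 3 z W _ T (fun e => e.1.2) (fun e => e.2.2) three_pos (by norm_num) hz hzsq hzW
    (by positivity) (fun e he => (hT e he).fst.isCoprime_y)
    (fun e he => (hT e he).snd.isCoprime_y) (fun e he f hf => ?_) fun T' hT' ρ hρ => ?_
  · have hcop : IsCoprime (z ^ 3) (x ^ 2) := hx e he ▸ (hT e he).fst.isCoprime_x.symm.pow
    refine hcop.dvd_of_dvd_mul_left ?_
    have he3 := (hT e he).cube_dvd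
    have hf3 := (hT f hf).cube_dvd
    rw [hx e he, hx' e he] at he3
    rw [hx f hf, hx' f hf] at hf3
    convert dvd_sub (he3.mul_right (f.2.2 ^ 3)) (hf3.mul_right (e.2.2 ^ 3)) using 1
    ring
  · have hinj : Set.InjOn (fun e : (ℤ × ℤ) × (ℤ × ℤ) => (e.1.2, e.2.2)) T' := by
      intro e he f hf hef
      obtain ⟨h1, h2⟩ := Prod.ext_iff.1 hef
      exact Prod.ext (Prod.ext ((hx e (hT' he)).trans (hx f (hT' hf)).symm) h1)
        (Prod.ext ((hx' e (hT' he)).trans (hx' f (hT' hf)).symm) h2)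
    rw [← card_image_of_injOn hinj]
    have hcount := card_le_of_gcd_eq_of_dvd_sub (T := T'.image fun e => (e.1.2, e.2.2)) (Y := Y) hd
      (pow_pos hz 3) (ρ := ρ)
      (forall_mem_image.2 fun e he => ⟨(hT e (hT' he)).fst.y_pos, (hT e (hT' he)).fst.y_le⟩)
      (forall_mem_image.2 fun e he => ⟨(hT e (hT' he)).snd.lt_y, (hT e (hT' he)).snd.y_le⟩)
      (forall_mem_image.2 fun e he => (hT e (hT' he)).fst.isCoprime_y.pow_right)
      (forall_mem_image.2 fun e he => hgcd e (hT' he))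
      (forall_mem_image.2 fun e he => hρ e he)
    rwa [Int.cast_pow] at hcount

theorem exists_card_congruentPairs_le_of_fixed_y {η : ℝ} (hη : 0 < η) :
    ∃ C : ℝ, 1 ≤ C ∧ ∀ (X Y W : ℝ) (z y : ℤ) (p : ℤ × ℤ) (T : Finset ((ℤ × ℤ) × (ℤ × ℤ))), 0 ≤ X →
      0 < z → Squarefree z → (z : ℝ) ≤ W → (∀ e ∈ T, IsCongruentPair X Y z e) →
      (∀ e ∈ T, e.1.2 = y) → (∀ e ∈ T, e.2 = p) →
      (#T : ℝ) ≤ C * W ^ η * (X / z ^ 3 + 1) := by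
  obtain ⟨C, hC, hclasses⟩ := exists_card_le_mul_of_lattice_classes ((ℤ × ℤ) × (ℤ × ℤ)) hη
  refine ⟨C, hC, fun X Y W z y p T hX hz hzsq hzW hT hy hp => ?_⟩
  refine hclasses 2 z W _ T (fun e => e.1.1) (fun _ => 1) two_pos (by norm_num) hz hzsq hzW
    (by positivity) (fun e he => (hT e he).fst.isCoprime_x)
    (fun _ _ => isCoprime_one_left) (fun e he f hf => ?_) fun T' hT' ρ hρ => ?_
  · have hcop : IsCoprime (z ^ 3) (y ^ 3) := hy e he ▸ (hT e he).fst.isCoprime_y.symm.pow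
    refine hcop.dvd_of_dvd_mul_left ?_
    have he3 := (hT e he).cube_dvd
    have hf3 := (hT f hf).cube_dvd
    rw [hy e he, hp e he] at he3
    rw [hy f hf, hp f hf] at hf3
    convert dvd_sub he3 hf3 using 1
    ring
  · have hinj : Set.InjOn (fun e : (ℤ × ℤ) × (ℤ × ℤ) => e.1.1) T' := fun e he f hf hef =>
      Prod.ext (Prod.ext hef ((hy e (hT' he)).trans (hy f (hT' hf)).symm))
        ((hp e (hT' he)).trans (hp f (hT' hf)).symm)
    rw [← card_image_of_injOn hinj]
    have hcount := card_le_of_pairwise_dvd_sub (T := T'.image fun e => e.1.1) hX (pow_pos hz 3)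
      (forall_mem_image.2 fun e he => ⟨Int.cast_nonneg (hT e (hT' he)).fst.x_pos.le,
        (hT e (hT' he)).fst.x_le⟩)
      (forall_mem_image.2 fun e he => forall_mem_image.2 fun f hf =>
        sub_sub_sub_cancel_right e.1.1 f.1.1 (ρ * 1) ▸ dvd_sub (hρ e he) (hρ f hf))
    rwa [sub_zero, Int.cast_pow] at hcount

theorem card_le_div_of_forall_dvd (hd : 0 < d) (hY : 0 ≤ Y) {T : Finset ℤ}
    (hT : ∀ y ∈ T, 0 < y ∧ (y : ℝ) ≤ Y) (hdvd : ∀ y ∈ T, (d : ℤ) ∣ y) : (#T : ℝ) ≤ Y / d := by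
  have hdz : (0 : ℤ) < d := by exact_mod_cast hd
  have hdr : (0 : ℝ) < d := by exact_mod_cast hd
  have hinj : Set.InjOn (fun y : ℤ => y / d) T := fun y hy y' hy' h =>
    (Int.ediv_left_inj (hdvd y hy) (hdvd y' hy')).1 h
  rw [← card_image_of_injOn hinj]
  refine card_le_of_pos_of_le (by positivity) (forall_mem_image.2 fun y hy => ?_)
  obtain ⟨u, rfl⟩ := hdvd y hy
  obtain ⟨hpos, hle⟩ := hT _ hy
  rw [Int.mul_ediv_cancel_left _ hdz.ne', le_div_iff₀ hdr]
  refine ⟨pos_of_mul_pos_right hpos hdz.le, ?_⟩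
  push_cast at hle
  linarith

theorem card_image_x_x_le (hX : 0 ≤ X) (hT : ∀ e ∈ T, IsCongruentPair X Y z e) :
    (#(T.image fun e => (e.1.1, e.2.1)) : ℝ) ≤ X * X :=
  card_image_prodMk_le
    (card_le_of_pos_of_le hX (forall_mem_image.2 fun e he =>
      ⟨(hT e he).fst.x_pos, (hT e he).fst.x_le⟩))
    (card_le_of_pos_of_le hX (forall_mem_image.2 fun e he =>
      ⟨(hT e he).snd.x_pos, (hT e he).snd.x_le⟩))

theorem card_image_y_snd_le (hX : 0 ≤ X) (hY : 0 ≤ Y) (hd : 0 < d)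
    (hT : ∀ e ∈ T, IsCongruentPair X Y z e) (hgcd : ∀ e ∈ T, Int.gcd e.1.2 e.2.2 = d) :
    (#(T.image fun e => (e.1.2, e.2)) : ℝ) ≤ Y / d * (X * (Y / d)) :=
  card_image_prodMk_le
    (card_le_div_of_forall_dvd hd hY
      (forall_mem_image.2 fun e he => ⟨(hT e he).fst.y_pos, (hT e he).fst.y_le⟩)
      (forall_mem_image.2 fun e he => hgcd e he ▸ Int.gcd_dvd_left ..))
    (card_image_prodMk_le
      (card_le_of_pos_of_le hX
        (forall_mem_image.2 fun e he => ⟨(hT e he).snd.x_pos, (hT e he).snd.x_le⟩))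
      (card_le_div_of_forall_dvd hd hY
        (forall_mem_image.2 fun e he => ⟨(hT e he).snd.y_pos, (hT e he).snd.y_le⟩)
        (forall_mem_image.2 fun e he => hgcd e he ▸ Int.gcd_dvd_right ..)))

theorem exists_card_congruentPairs_le_of_gcd_eq {η : ℝ} (hη : 0 < η) :
    ∃ C : ℝ, 1 ≤ C ∧ ∀ (X Y W : ℝ) (z : ℤ) (d : ℕ) (T : Finset ((ℤ × ℤ) × (ℤ × ℤ))), 0 ≤ X →
      0 ≤ Y → 0 < z → Squarefree z → (z : ℝ) ≤ W → 0 < d → (∀ e ∈ T, IsCongruentPair X Y z e) →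
      (∀ e ∈ T, Int.gcd e.1.2 e.2.2 = d) →
      (#T : ℝ) ≤ C * W ^ η * (2 * (X ^ 2 * Y ^ 2 / (d ^ 2 * z ^ 3)) + √X ^ 3 * Y / d) := by
  obtain ⟨C₁, hC₁, hfixx⟩ := exists_card_congruentPairs_le_of_fixed_x hη
  obtain ⟨C₂, -, hfixy⟩ := exists_card_congruentPairs_le_of_fixed_y hη
  refine ⟨max C₁ C₂, hC₁.trans (le_max_left ..), fun X Y W z d T hX hY hz hzsq hzW hd hT hgcd => ?_⟩
  have hz0 : (0 : ℝ) < z := Int.cast_pos.2 hz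
  have hW : 0 ≤ W := hz0.le.trans hzW
  have : (0 : ℝ) < d := Nat.cast_pos.2 hd
  set R := max C₁ C₂ * W ^ η with hR
  have hR₁ : C₁ * W ^ η ≤ R := by rw [hR]; gcongr; exact le_max_left ..
  have hR₂ : C₂ * W ^ η ≤ R := by rw [hR]; gcongr; exact le_max_right ..
  have hsqrt : √X * √X = X := Real.mul_self_sqrt hX
  rcases le_total √X (Y / d) with hle | hle
  · have hT₁ : (#T : ℝ) ≤ X * X * (R * (2 * Y ^ 2 / (d ^ 2 * z ^ 3) + 1)) := by
      refine card_le_mul_of_fiber_card_le _ (by positivity) (card_image_x_x_le hX hT) fun b _ => ?_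
      refine (hfixx X Y W z b.1 b.2 d _ hz hzsq hzW hd ?_ ?_ ?_ ?_).trans (by gcongr)
      all_goals intro e he; obtain ⟨heT, rfl⟩ := mem_filter.1 he
      exacts [hT e heT, rfl, rfl, hgcd e heT]
    calc (#T : ℝ) ≤ X * X * (R * (2 * Y ^ 2 / (d ^ 2 * z ^ 3) + 1)) := hT₁
      _ = R * (2 * (X ^ 2 * Y ^ 2 / (d ^ 2 * z ^ 3)) + √X ^ 3 * √X) := by
        rw [show √X ^ 3 * √X = (√X * √X) * (√X * √X) by ring, hsqrt]
        ring
      _ ≤ R * (2 * (X ^ 2 * Y ^ 2 / (d ^ 2 * z ^ 3)) + √X ^ 3 * (Y / d)) := by gcongr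
      _ = _ := by ring
  · have hT₂ : (#T : ℝ) ≤ Y / d * (X * (Y / d)) * (R * (X / z ^ 3 + 1)) := by
      refine card_le_mul_of_fiber_card_le _ (by positivity)
        (card_image_y_snd_le hX hY hd hT hgcd) fun b _ => ?_
      refine (hfixy X Y W z b.1 b.2 _ hX hz hzsq hzW ?_ ?_ ?_).trans (by gcongr)
      all_goals intro e he; obtain ⟨heT, rfl⟩ := mem_filter.1 he
      exacts [hT e heT, rfl, rfl]
    calc (#T : ℝ) ≤ Y / d * (X * (Y / d)) * (R * (X / z ^ 3 + 1)) := hT₂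
      _ = R * (X ^ 2 * Y ^ 2 / (d ^ 2 * z ^ 3) + X * (Y / d) * (Y / d)) := by
        field_simp
      _ ≤ R * (2 * (X ^ 2 * Y ^ 2 / (d ^ 2 * z ^ 3)) + X * (Y / d) * √X) := by
        gcongr
        exact le_mul_of_one_le_left (by positivity) one_le_two
      _ = R * (2 * (X ^ 2 * Y ^ 2 / (d ^ 2 * z ^ 3)) + (√X * √X) * (Y / d) * √X) := by rw [hsqrt]
      _ = _ := by ring

theorem gcd_mem_Icc_floor {y y' : ℤ} (hy : 0 < y) (hyY : (y : ℝ) ≤ Y) :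
    Int.gcd y y' ∈ Icc 1 ⌊Y⌋₊ := by
  refine mem_Icc.2 ⟨Int.gcd_pos_of_ne_zero_left _ hy.ne', Nat.le_floor (le_trans ?_ hyY)⟩
  exact_mod_cast Int.le_of_dvd hy (Int.gcd_dvd_left ..)

theorem sum_one_div_le_rpow {η : ℝ} (hη : 0 < η) (hY : 1 ≤ Y) (hYW : Y ≤ W) :
    ∑ d ∈ Icc 1 ⌊Y⌋₊, (1 / d : ℝ) ≤ (1 + 1 / η) * W ^ η := by
  have hW : 1 ≤ W := hY.trans hYW
  have hfloor : (0 : ℝ) < ⌊Y⌋₊ := Nat.cast_pos.2 (Nat.floor_pos.2 hY)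
  have hharmonic : ∑ d ∈ Icc 1 ⌊Y⌋₊, (1 / d : ℝ) ≤ 1 + Real.log ⌊Y⌋₊ := by
    simpa [harmonic_eq_sum_Icc] using harmonic_le_one_add_log ⌊Y⌋₊
  calc ∑ d ∈ Icc 1 ⌊Y⌋₊, (1 / d : ℝ) ≤ 1 + Real.log ⌊Y⌋₊ := hharmonic
    _ ≤ 1 + Real.log W := by
      gcongr
      exact (Nat.floor_le (by linarith)).trans hYW
    _ ≤ W ^ η + W ^ η / η := by
      gcongr
      exacts [Real.one_le_rpow hW hη.le, Real.log_le_rpow_div (by linarith) hη]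
    _ = (1 + 1 / η) * W ^ η := by ring

theorem exists_card_congruentPairs_le {ε : ℝ} (hε : 0 < ε) :
    ∃ C : ℝ, 1 ≤ C ∧ ∀ (X Y W : ℝ) (z : ℤ) (T : Finset ((ℤ × ℤ) × (ℤ × ℤ))), 0 ≤ X →
      1 ≤ Y → Y ≤ W → 0 < z → Squarefree z → (z : ℝ) ≤ W → (∀ e ∈ T, IsCongruentPair X Y z e) →
      (#T : ℝ) ≤ C * W ^ ε * (X ^ 2 * Y ^ 2 / z ^ 3 + √X ^ 3 * Y) := by
  obtain ⟨C, hC, hgcd⟩ := exists_card_congruentPairs_le_of_gcd_eq (half_pos hε)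
  have hη : 0 < ε / 2 := half_pos hε
  refine ⟨2 * C * (1 + 1 / (ε / 2)), one_le_mul_of_one_le_of_one_le (by linarith)
    (le_add_of_nonneg_right (by positivity)), fun X Y W z T hX hY hYW hz hzsq hzW hT => ?_⟩
  have hz0 : (0 : ℝ) < z := Int.cast_pos.2 hz
  have hW : 0 < W := hz0.trans_le hzW
  set A := X ^ 2 * Y ^ 2 / z ^ 3 with hA
  have hfiber : ∀ d ∈ Icc 1 ⌊Y⌋₊, (#{e ∈ T | Int.gcd e.1.2 e.2.2 = d} : ℝ) ≤
      2 * C * W ^ (ε / 2) * (A + √X ^ 3 * Y) * (1 / d) := fun d hd => by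
    have hd1 : (1 : ℝ) ≤ d := Nat.one_le_cast.2 (mem_Icc.1 hd).1
    refine (hgcd X Y W z d _ hX (by linarith) hz hzsq hzW (mem_Icc.1 hd).1
      (fun e he => hT e (mem_filter.1 he).1) fun e he => (mem_filter.1 he).2).trans ?_
    calc C * W ^ (ε / 2) * (2 * (X ^ 2 * Y ^ 2 / (d ^ 2 * z ^ 3)) + √X ^ 3 * Y / d)
        = C * W ^ (ε / 2) * (2 * (A * (1 / d ^ 2)) + √X ^ 3 * Y / d) := by
          rw [hA]
          field_simp
      _ ≤ C * W ^ (ε / 2) * (2 * (A * (1 / d)) + 2 * (√X ^ 3 * Y / d)) := by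
        gcongr
        · exact le_self_pow₀ hd1 two_ne_zero
        · exact le_mul_of_one_le_left (by positivity) one_le_two
      _ = 2 * C * W ^ (ε / 2) * (A + √X ^ 3 * Y) * (1 / d) := by ring
  calc (#T : ℝ) = ∑ d ∈ Icc 1 ⌊Y⌋₊, (#{e ∈ T | Int.gcd e.1.2 e.2.2 = d} : ℝ) := by
        rw [card_eq_sum_card_fiberwise fun e he =>
          gcd_mem_Icc_floor (hT e he).fst.y_pos (hT e he).fst.y_le, Nat.cast_sum]
    _ ≤ 2 * C * W ^ (ε / 2) * (A + √X ^ 3 * Y) * ∑ d ∈ Icc 1 ⌊Y⌋₊, (1 / d : ℝ) := by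
      rw [mul_sum]
      exact sum_le_sum hfiber
    _ ≤ 2 * C * W ^ (ε / 2) * (A + √X ^ 3 * Y) * ((1 + 1 / (ε / 2)) * W ^ (ε / 2)) := by
      gcongr
      exact sum_one_div_le_rpow hη hY hYW
    _ = 2 * C * (1 + 1 / (ε / 2)) * (W ^ (ε / 2) * W ^ (ε / 2)) * (A + √X ^ 3 * Y) := by ring
    _ = 2 * C * (1 + 1 / (ε / 2)) * W ^ ε * (A + √X ^ 3 * Y) := by
      rw [← Real.rpow_add hW, add_halves]

end CongruentPairs

section Collisions

open Finset

theorem card_sq_le_card_image_mul {α β : Type*} [DecidableEq β] (T : Finset α) (w : α → β) :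
    (#T : ℝ) ^ 2 ≤ #(T.image w) * (#T + #{s ∈ T.offDiag | w s.1 = w s.2}) := by
  classical
  have hpairs : ∑ b ∈ T.image w, #{a ∈ T | w a = b} ^ 2 =
      #T + #{s ∈ T.offDiag | w s.1 = w s.2} := by
    calc ∑ b ∈ T.image w, #{a ∈ T | w a = b} ^ 2
        = ∑ b ∈ T.image w, #{s ∈ {s ∈ T ×ˢ T | w s.1 = w s.2} | w s.1 = b} := by
          refine sum_congr rfl fun b _ => ?_
          rw [sq, ← card_product]
          congr 1
          ext s
          simp only [mem_product, mem_filter]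
          grind
      _ = #{s ∈ T ×ˢ T | w s.1 = w s.2} := (card_eq_sum_card_fiberwise fun s hs =>
        mem_image_of_mem w (mem_product.1 (mem_filter.1 hs).1).1).symm
      _ = #{s ∈ T.diag | w s.1 = w s.2} + #{s ∈ T.offDiag | w s.1 = w s.2} := by
        rw [← diag_union_offDiag, filter_union, card_union_of_disjoint
          ((disjoint_diag_offDiag T).mono (filter_subset ..) (filter_subset ..))]
      _ = #T + #{s ∈ T.offDiag | w s.1 = w s.2} := by
        rw [filter_true_of_mem fun s hs => congrArg w (mem_diag.1 hs).2, diag_card]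
  calc (#T : ℝ) ^ 2 = (∑ b ∈ T.image w, (#{a ∈ T | w a = b} : ℝ)) ^ 2 := by
        rw [card_eq_sum_card_image w T, Nat.cast_sum]
    _ ≤ #(T.image w) * ∑ b ∈ T.image w, (#{a ∈ T | w a = b} : ℝ) ^ 2 := sq_sum_le_card_mul_sum_sq
    _ = #(T.image w) * (#T + #{s ∈ T.offDiag | w s.1 = w s.2}) := by
      congr 1
      exact_mod_cast hpairs

theorem le_add_sqrt_of_sq_le {N V P : ℝ} (hV : 0 ≤ V) (h : N ^ 2 ≤ V * N + P) : N ≤ V + √P := by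
  by_contra! hlt
  have hsqrt : √P < N - V := by linarith
  have hP : P < (N - V) ^ 2 := Real.lt_sq_of_sqrt_lt hsqrt
  have hVN : 0 ≤ V * (N - V) := mul_nonneg hV ((Real.sqrt_nonneg P).trans hsqrt.le)
  linarith

theorem eq_and_eq_of_sq_mul_cube_eq {x y x' y' : ℤ} (hx : 0 < x) (hy : 0 < y) (hx' : 0 < x')
    (hy' : 0 < y') (hsq : Squarefree y) (hsq' : Squarefree y')
    (h : x ^ 2 * y ^ 3 = x' ^ 2 * y' ^ 3) : x = x' ∧ y = y' := by
  have hsquare : y * y' * (x' * y') ^ 2 = (y * (x * y)) ^ 2 := by linear_combination -y * h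
  obtain ⟨k, hk⟩ : x' * y' ∣ y * (x * y) :=
    (Int.pow_dvd_pow_iff two_ne_zero).1 (Dvd.intro_left _ hsquare)
  have hyy : y * y' = k ^ 2 := by
    refine mul_right_cancel₀ (pow_ne_zero 2 (mul_pos hx' hy').ne') ?_
    rw [hsquare, hk]
    ring
  obtain ⟨l, rfl⟩ := (hsq.dvd_pow_iff_dvd two_ne_zero).1 (Dvd.intro _ hyy)
  have hyl : y' = l * l * y := mul_left_cancel₀ hy.ne' (hyy.trans (by ring))
  obtain rfl : y = y' := by
    rcases Int.isUnit_iff.1 (hsq' l ⟨y, hyl⟩) with rfl | rfl <;> simpa using hyl.symm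
  exact ⟨(pow_left_inj₀ hx.le hx'.le two_ne_zero).1 (mul_right_cancel₀ (pow_ne_zero 3 hy.ne') h),
    rfl⟩

variable {a : Fin 3 → ℤ} {X Y : Fin 3 → ℝ} {W : ℝ} {z : ℤ}
  {s r : ((Fin 3 → ℤ) × (Fin 3 → ℤ)) × ((Fin 3 → ℤ) × (Fin 3 → ℤ))}

theorem IsSolution.ext {p q : (Fin 3 → ℤ) × (Fin 3 → ℤ)} (hp : IsSolution a X Y p)
    (hq : IsSolution a X Y q) (hbox : IsBox a X Y W) (hx0 : p.1 0 = q.1 0) (hy0 : p.2 0 = q.2 0)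
    (hx1 : p.1 1 = q.1 1) (hy1 : p.2 1 = q.2 1) : p = q := by
  have hp' := hp.equation
  have hq' := hq.equation
  rw [hx0, hy0, hx1, hy1] at hp'
  have hterm : a 2 * (p.1 2 ^ 2 * p.2 2 ^ 3) = a 2 * (q.1 2 ^ 2 * q.2 2 ^ 3) := by
    linear_combination hp' - hq'
  obtain ⟨hx2, hy2⟩ := eq_and_eq_of_sq_mul_cube_eq (hp.x_pos 2) (hp.y_pos 2) (hq.x_pos 2)
    (hq.y_pos 2) (hp.squarefree 2) (hq.squarefree 2)
    (mul_left_cancel₀ (hbox.coeff_ne_zero 2) hterm)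
  exact Prod.ext (funext_fin_three hx0 hx1 hx2) (funext_fin_three hy0 hy1 hy2)

/-- Two distinct solutions that agree in `y₀ = z` and in the coordinates of index `2`. -/
structure IsCollision (a : Fin 3 → ℤ) (X Y : Fin 3 → ℝ) (z : ℤ)
    (s : ((Fin 3 → ℤ) × (Fin 3 → ℤ)) × ((Fin 3 → ℤ) × (Fin 3 → ℤ))) : Prop where
  fst : IsSolution a X Y s.1
  snd : IsSolution a X Y s.2
  ne : s.1 ≠ s.2
  fst_y : s.1.2 0 = z
  snd_y : s.2.2 0 = z
  x_eq : s.1.1 2 = s.2.1 2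
  y_eq : s.1.2 2 = s.2.2 2

/-- The coordinates of index `1` of two solutions. A collision is determined up to a divisor
function by this pair, which is a congruent pair. -/
def middlePair (s : ((Fin 3 → ℤ) × (Fin 3 → ℤ)) × ((Fin 3 → ℤ) × (Fin 3 → ℤ))) :
    (ℤ × ℤ) × (ℤ × ℤ) :=
  ((s.1.1 1, s.1.2 1), (s.2.1 1, s.2.2 1))

/-- The difference of the terms of index `1` at two points; its divisors parametrize the
collisions with a given middle pair. -/
def termDiff (c : ℤ) (e : (ℤ × ℤ) × (ℤ × ℤ)) : ℤ :=
  c * (e.1.1 ^ 2 * e.1.2 ^ 3 - e.2.1 ^ 2 * e.2.2 ^ 3)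

namespace IsCollision

theorem termDiff_middlePair (hs : IsCollision a X Y z s) :
    termDiff (a 1) (middlePair s) =
      -(a 0 * z ^ 3 * (s.1.1 0 - s.2.1 0)) * (s.1.1 0 + s.2.1 0) := by
  have hfst := hs.fst.equation
  have hsnd := hs.snd.equation
  rw [hs.fst_y, hs.x_eq, hs.y_eq] at hfst
  rw [hs.snd_y] at hsnd
  simp only [termDiff, middlePair]
  linear_combination hfst - hsnd

theorem isCongruentPair (hs : IsCollision a X Y z s) :
    IsCongruentPair (X 1) (Y 1) z (middlePair s) where
  fst := ⟨hs.fst.x_pos 1, hs.fst.x_le 1, hs.fst.y_pos 1, hs.fst.lt_y 1, hs.fst.y_le 1,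
    hs.fst_y ▸ hs.fst.isCoprime_x_y (by decide), hs.fst_y ▸ hs.fst.isCoprime_y_y (by decide)⟩
  snd := ⟨hs.snd.x_pos 1, hs.snd.x_le 1, hs.snd.y_pos 1, hs.snd.lt_y 1, hs.snd.y_le 1,
    hs.snd_y ▸ hs.snd.isCoprime_x_y (by decide), hs.snd_y ▸ hs.snd.isCoprime_y_y (by decide)⟩
  cube_dvd := by
    have hcop : IsCoprime (z ^ 3) (a 1) :=
      hs.fst_y ▸ (hs.fst.isCoprime_coeff_y 1 0).symm.pow_left
    refine hcop.dvd_of_dvd_mul_left (Dvd.intro (-a 0 * (s.1.1 0 - s.2.1 0) *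
      (s.1.1 0 + s.2.1 0)) (Eq.trans ?_ hs.termDiff_middlePair.symm))
    ring

theorem coeff_mul_cube_ne_zero (hs : IsCollision a X Y z s) (hbox : IsBox a X Y W) :
    a 0 * z ^ 3 ≠ 0 :=
  mul_ne_zero (hbox.coeff_ne_zero 0) (pow_ne_zero 3 (hs.fst_y ▸ (hs.fst.y_pos 0).ne'))

theorem x_add_x_ne_zero (hs : IsCollision a X Y z s) : s.1.1 0 + s.2.1 0 ≠ 0 :=
  (add_pos (hs.fst.x_pos 0) (hs.snd.x_pos 0)).ne'

theorem termDiff_ne_zero (hs : IsCollision a X Y z s) (hbox : IsBox a X Y W) :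
    termDiff (a 1) (middlePair s) ≠ 0 := by
  intro hzero
  obtain ⟨hx1, hy1⟩ := eq_and_eq_of_sq_mul_cube_eq (hs.fst.x_pos 1) (hs.fst.y_pos 1)
    (hs.snd.x_pos 1) (hs.snd.y_pos 1) (hs.fst.squarefree 1) (hs.snd.squarefree 1)
    (sub_eq_zero.1 ((mul_eq_zero.1 hzero).resolve_left (hbox.coeff_ne_zero 1)))
  rw [hs.termDiff_middlePair] at hzero
  have hx0 : s.1.1 0 = s.2.1 0 := by
    simpa [sub_eq_zero, hs.coeff_mul_cube_ne_zero hbox, hs.x_add_x_ne_zero] using hzero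
  exact hs.ne (Prod.ext (funext_fin_three hx0 hx1 hs.x_eq)
    (funext_fin_three (hs.fst_y.trans hs.snd_y.symm) hy1 hs.y_eq))

theorem natAbs_termDiff_le (hs : IsCollision a X Y z s) (hbox : IsBox a X Y W) :
    ((termDiff (a 1) (middlePair s)).natAbs : ℝ) ≤ W := by
  have hterm : ∀ p, IsSolution a X Y p → (p.1 1 : ℝ) ^ 2 * (p.2 1 : ℝ) ^ 3 ∈
      Set.Icc 0 (X 1 ^ 2 * Y 1 ^ 3) := fun p hp => by
    have hx : (0 : ℝ) < p.1 1 := Int.cast_pos.2 (hp.x_pos 1)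
    have hy : (0 : ℝ) < p.2 1 := Int.cast_pos.2 (hp.y_pos 1)
    refine ⟨by positivity, ?_⟩
    gcongr
    exacts [hp.x_le 1, hp.y_le 1]
  rw [Nat.cast_natAbs, Int.cast_abs]
  simp only [termDiff, middlePair]
  push_cast
  rw [abs_mul]
  refine le_trans ?_ (hbox.height_le 1)
  gcongr
  obtain ⟨h0, h1⟩ := hterm _ hs.fst
  obtain ⟨h0', h1'⟩ := hterm _ hs.snd
  exact abs_sub_le_of_nonneg_of_le h0 h1 h0' h1'

theorem eq_of_middlePair_eq (hs : IsCollision a X Y z s) (hr : IsCollision a X Y z r)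
    (hbox : IsBox a X Y W) (hpair : middlePair s = middlePair r)
    (hsum : s.1.1 0 + s.2.1 0 = r.1.1 0 + r.2.1 0) : s = r := by
  have hdiff : s.1.1 0 - s.2.1 0 = r.1.1 0 - r.2.1 0 := by
    have heq := hs.termDiff_middlePair.symm.trans (hpair ▸ hr.termDiff_middlePair)
    rw [hsum] at heq
    exact mul_left_cancel₀ (hs.coeff_mul_cube_ne_zero hbox)
      (neg_inj.1 (mul_right_cancel₀ hr.x_add_x_ne_zero heq))
  simp only [middlePair, Prod.mk.injEq] at hpair
  obtain ⟨⟨hx1, hy1⟩, hx1', hy1'⟩ := hpair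
  exact Prod.ext
    (hs.fst.ext hr.fst hbox (by omega) (hs.fst_y.trans hr.fst_y.symm) hx1 hy1)
    (hs.snd.ext hr.snd hbox (by omega) (hs.snd_y.trans hr.snd_y.symm) hx1' hy1')

end IsCollision

theorem exists_card_collisions_le_of_middlePair_eq {η : ℝ} (hη : 0 < η) :
    ∃ C : ℝ, 1 ≤ C ∧ ∀ (a : Fin 3 → ℤ) (X Y : Fin 3 → ℝ) (W : ℝ) (z : ℤ) (e : (ℤ × ℤ) × (ℤ × ℤ))
      (T : Finset (((Fin 3 → ℤ) × (Fin 3 → ℤ)) × ((Fin 3 → ℤ) × (Fin 3 → ℤ)))), IsBox a X Y W →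
      (∀ s ∈ T, IsCollision a X Y z s) → (∀ s ∈ T, middlePair s = e) → (#T : ℝ) ≤ C * W ^ η := by
  obtain ⟨C, hC, hdiv⟩ := exists_card_divisors_le_rpow hη
  refine ⟨C, hC, fun a X Y W z e T hbox hT he => ?_⟩
  have hW := hbox.pos
  rcases T.eq_empty_or_nonempty with rfl | ⟨s₀, hs₀⟩
  · rw [card_empty, Nat.cast_zero]
    positivity
  have hne : (termDiff (a 1) e).natAbs ≠ 0 :=
    Int.natAbs_ne_zero.2 (he s₀ hs₀ ▸ (hT s₀ hs₀).termDiff_ne_zero hbox)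
  let f (s : ((Fin 3 → ℤ) × (Fin 3 → ℤ)) × ((Fin 3 → ℤ) × (Fin 3 → ℤ))) : ℕ :=
    (s.1.1 0 + s.2.1 0).natAbs
  have hinj : Set.InjOn f T := fun s hs r hr hsr =>
    (hT s hs).eq_of_middlePair_eq (hT r hr) hbox ((he s hs).trans (he r hr).symm) <|
      (Int.natAbs_inj_of_nonneg_of_nonneg
        (add_pos ((hT s hs).fst.x_pos 0) ((hT s hs).snd.x_pos 0)).le
        (add_pos ((hT r hr).fst.x_pos 0) ((hT r hr).snd.x_pos 0)).le).1 hsr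
  have hsub : T.image f ⊆ (termDiff (a 1) e).natAbs.divisors := by
    refine image_subset_iff.2 fun s hs => Nat.mem_divisors.2 ⟨Int.natAbs_dvd_natAbs.2 ?_, hne⟩
    exact he s hs ▸ (hT s hs).termDiff_middlePair ▸ dvd_mul_left ..
  calc (#T : ℝ) ≤ #(termDiff (a 1) e).natAbs.divisors := by
        rw [← card_image_of_injOn hinj]
        exact_mod_cast card_le_card hsub
    _ ≤ C * (termDiff (a 1) e).natAbs ^ η := hdiv _ hne
    _ ≤ C * W ^ η := by
      gcongr
      exact he s₀ hs₀ ▸ (hT s₀ hs₀).natAbs_termDiff_le hbox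

theorem exists_card_collisions_le {ε : ℝ} (hε : 0 < ε) :
    ∃ C : ℝ, 1 ≤ C ∧ ∀ (a : Fin 3 → ℤ) (X Y : Fin 3 → ℝ) (W : ℝ) (z : ℤ)
      (T : Finset (((Fin 3 → ℤ) × (Fin 3 → ℤ)) × ((Fin 3 → ℤ) × (Fin 3 → ℤ)))), IsBox a X Y W →
      (∀ s ∈ T, IsCollision a X Y z s) →
      (#T : ℝ) ≤ C * W ^ ε * (X 1 ^ 2 * Y 1 ^ 2 / Y 0 ^ 3 + √(X 1) ^ 3 * Y 1) := by
  obtain ⟨C₁, hC₁, hfiber⟩ := exists_card_collisions_le_of_middlePair_eq (half_pos hε)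
  obtain ⟨C₂, hC₂, hpairs⟩ := exists_card_congruentPairs_le (half_pos hε)
  refine ⟨8 * C₂ * C₁, one_le_mul_of_one_le_of_one_le (by linarith) hC₁,
    fun a X Y W z T hbox hT => ?_⟩
  have hW := hbox.pos
  have hX := hbox.x_pos 1
  have hY := hbox.y_pos 1
  have hY0 := hbox.y_pos 0
  rcases T.eq_empty_or_nonempty with rfl | ⟨s₀, hs₀⟩
  · rw [card_empty, Nat.cast_zero]
    positivity
  have h₀ := (hT s₀ hs₀).fst
  have hz : s₀.1.2 0 = z := (hT s₀ hs₀).fst_y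
  have hzY : Y 0 / 2 < z := hz ▸ h₀.lt_y 0
  have himage : (#(T.image middlePair) : ℝ) ≤
      C₂ * W ^ (ε / 2) * (8 * (X 1 ^ 2 * Y 1 ^ 2 / Y 0 ^ 3 + √(X 1) ^ 3 * Y 1)) := by
    refine (hpairs (X 1) (Y 1) W z _ hX.le (hbox.one_le_y 1) (hbox.y_le 1) (hz ▸ h₀.y_pos 0)
      (hz ▸ h₀.squarefree 0) (hz ▸ (h₀.y_le 0).trans (hbox.y_le 0))
      (forall_mem_image.2 fun s hs => (hT s hs).isCongruentPair)).trans ?_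
    gcongr
    calc X 1 ^ 2 * Y 1 ^ 2 / z ^ 3 + √(X 1) ^ 3 * Y 1
        ≤ X 1 ^ 2 * Y 1 ^ 2 / (Y 0 / 2) ^ 3 + 8 * (√(X 1) ^ 3 * Y 1) := by
          refine add_le_add (by gcongr) (le_mul_of_one_le_left (by positivity) (by norm_num))
      _ = 8 * (X 1 ^ 2 * Y 1 ^ 2 / Y 0 ^ 3 + √(X 1) ^ 3 * Y 1) := by
        field_simp
        ring
  have hcard := card_le_mul_of_fiber_card_le middlePair (M := C₁ * W ^ (ε / 2)) (by positivity)
    himage fun e _ => hfiber a X Y W z e _ hbox (fun s hs => hT s (mem_filter.1 hs).1)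
      fun s hs => (mem_filter.1 hs).2
  calc (#T : ℝ) ≤ _ := hcard
    _ = 8 * C₂ * C₁ * (W ^ (ε / 2) * W ^ (ε / 2)) *
        (X 1 ^ 2 * Y 1 ^ 2 / Y 0 ^ 3 + √(X 1) ^ 3 * Y 1) := by ring
    _ = _ := by rw [← Real.rpow_add hW, add_halves]

theorem exists_card_le_of_fixed_y_zero {ε : ℝ} (hε : 0 < ε) :
    ∃ C : ℝ, 1 ≤ C ∧ ∀ (a : Fin 3 → ℤ) (X Y : Fin 3 → ℝ) (W : ℝ) (z : ℤ)
      (T : Finset ((Fin 3 → ℤ) × (Fin 3 → ℤ))), IsBox a X Y W → (∀ p ∈ T, IsSolution a X Y p) →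
      (∀ p ∈ T, p.2 0 = z) →
      (#T : ℝ) ≤ C * W ^ ε * (X 2 * Y 2 +
        √(X 2 * Y 2 * (X 1 ^ 2 * Y 1 ^ 2 / Y 0 ^ 3 + √(X 1) ^ 3 * Y 1))) := by
  obtain ⟨C, hC, hcoll⟩ := exists_card_collisions_le hε
  refine ⟨C, hC, fun a X Y W z T hbox hT hz => ?_⟩
  have hX i : 0 ≤ X i := (hbox.x_pos i).le
  have hY i : 0 ≤ Y i := (hbox.y_pos i).le
  set V := X 2 * Y 2
  set G := X 1 ^ 2 * Y 1 ^ 2 / Y 0 ^ 3 + √(X 1) ^ 3 * Y 1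
  have hV : 0 ≤ V := mul_nonneg (hX 2) (hY 2)
  have hR : 1 ≤ C * W ^ ε := one_le_mul_of_one_le_of_one_le hC (Real.one_le_rpow hbox.one_le hε.le)
  set R := C * W ^ ε
  have hcollisions : (#{s ∈ T.offDiag | (s.1.1 2, s.1.2 2) = (s.2.1 2, s.2.2 2)} : ℝ) ≤ R * G := by
    refine hcoll a X Y W z _ hbox fun s hs => ?_
    obtain ⟨hs, heq⟩ := mem_filter.1 hs
    obtain ⟨h1, h2, hne⟩ := mem_offDiag.1 hs
    exact ⟨hT _ h1, hT _ h2, hne, hz _ h1, hz _ h2, (Prod.ext_iff.1 heq).1, (Prod.ext_iff.1 heq).2⟩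
  have hquad : (#T : ℝ) ^ 2 ≤ V * #T + R * (V * G) := by
    calc (#T : ℝ) ^ 2 ≤ _ := card_sq_le_card_image_mul T fun p => (p.1 2, p.2 2)
      _ ≤ V * (#T + R * G) := by
        gcongr
        exact card_image_prodMk_le (card_image_x_le hT hX 2) (card_image_y_le hT hY 2)
      _ = V * #T + R * (V * G) := by ring
  calc (#T : ℝ) ≤ V + √(R * (V * G)) := le_add_sqrt_of_sq_le hV hquad
    _ = 1 * V + √R * √(V * G) := by rw [Real.sqrt_mul (by positivity), one_mul]
    _ ≤ R * V + R * √(V * G) := by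
      gcongr
      exact Real.sqrt_le_iff.2 ⟨by positivity, le_self_pow₀ hR two_ne_zero⟩
    _ = R * (V + √(V * G)) := by ring

theorem exists_card_le_collision_bound {ε : ℝ} (hε : 0 < ε) :
    ∃ C : ℝ, 1 ≤ C ∧ ∀ (a : Fin 3 → ℤ) (X Y : Fin 3 → ℝ) (W : ℝ)
      (T : Finset ((Fin 3 → ℤ) × (Fin 3 → ℤ))), IsBox a X Y W → (∀ p ∈ T, IsSolution a X Y p) →
      (#T : ℝ) ≤ C * W ^ ε * (Y 0 * (X 2 * Y 2 +
        √(X 2 * Y 2 * (X 1 ^ 2 * Y 1 ^ 2 / Y 0 ^ 3 + √(X 1) ^ 3 * Y 1)))) := by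
  obtain ⟨C, hC, hfiber⟩ := exists_card_le_of_fixed_y_zero hε
  refine ⟨C, hC, fun a X Y W T hbox hT => ?_⟩
  have hW := hbox.pos
  have hX i : 0 ≤ X i := (hbox.x_pos i).le
  have hY i : 0 ≤ Y i := (hbox.y_pos i).le
  have := hX 2; have := hY 2
  exact (card_le_mul_of_fiber_card_le (fun p => p.2 0) (by positivity) (card_image_y_le hT hY 0)
    fun z _ => hfiber a X Y W z _ hbox (fun p hp => hT p (mem_filter.1 hp).1)
      fun p hp => (mem_filter.1 hp).2).trans_eq (by ring)

end Collisions

/-! ### Linear programming -/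

section LinearProgram

/-- The logarithmic form of the three bounds in a box: `m` stands for the logarithm of the number of
solutions, `L` for that of the height, `x` and `y` for those of the sides. -/
structure IsFeasible (m L : ℝ) (x y : Fin 3 → ℝ) : Prop where
  y_nonneg : ∀ i, 0 ≤ y i
  two_mul_add_le : ∀ i, 2 * x i + 3 * y i ≤ L
  lattice : m ≤ x 1 + x 2 + y 0 ∨ m ≤ x 1 + x 2 + y 0 + 3 / 4 * (y 1 + y 2 - 3 * y 0)
  conic : m ≤ y 0 + y 1 + y 2 ∨ m ≤ L / 2
  collision : m ≤ y 0 + (x 2 + y 2) ∨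
    m ≤ y 0 + (x 2 + y 2 + (2 * x 1 + 2 * y 1 - 3 * y 0)) / 2 ∨
    m ≤ y 0 + (x 2 + y 2 + (3 / 2 * x 1 + y 1)) / 2

variable {m L D : ℝ} {x y : Fin 3 → ℝ}

namespace IsFeasible

theorem le_of_y_zero_le (h : IsFeasible m L x y) (hD : D ≤ 3 / 55 * L) (h02 : y 0 ≤ y 2)
    (h21 : y 2 ≤ y 1) (hsmall : y 0 ≤ L / 5 - D) : m ≤ 3 / 5 * L - D := by
  have h0 := h.y_nonneg 0
  have h1 := h.two_mul_add_le 1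
  have h2 := h.two_mul_add_le 2
  rcases h.conic with hconic | hconic
  · rcases h.lattice with hlattice | hlattice
    · linarith
    · rcases h.collision with hcollision | hcollision | hcollision <;> linarith
  · linarith

theorem le_of_x_two_le (h : IsFeasible m L x y) (hD : D ≤ 1 / 15 * L) (h01 : y 0 ≤ y 1)
    (hlarge : L / 5 - D ≤ y 0) (hsmall : x 2 ≤ L / 5 - 3 / 2 * D) : m ≤ 3 / 5 * L - D := by
  have h1 := h.two_mul_add_le 1
  have h2 := h.two_mul_add_le 2
  rcases h.lattice with hlattice | hlattice <;> linarith

end IsFeasible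

theorem exists_perm_le_le (y : Fin 3 → ℝ) :
    ∃ σ : Equiv.Perm (Fin 3), (∀ i, y (σ 0) ≤ y i) ∧ y (σ 2) ≤ y (σ 1) := by
  have hmono : Monotone (y ∘ Tuple.sort y) := Tuple.monotone_sort y
  refine ⟨Tuple.sort y * Equiv.swap 1 2, fun i => ?_, ?_⟩
  · obtain ⟨j, rfl⟩ := (Tuple.sort y).surjective i
    exact hmono (Fin.zero_le j)
  · exact hmono (by decide : Equiv.swap (1 : Fin 3) 2 2 ≤ Equiv.swap 1 2 1)

theorem exists_perm_two_eq_le (y : Fin 3 → ℝ) (k : Fin 3) :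
    ∃ σ : Equiv.Perm (Fin 3), σ 2 = k ∧ y (σ 0) ≤ y (σ 1) := by
  rcases le_total (y (Equiv.swap 2 k 0)) (y (Equiv.swap 2 k 1)) with h | h
  · exact ⟨Equiv.swap 2 k, Equiv.swap_apply_left 2 k, h⟩
  · exact ⟨Equiv.swap 2 k * Equiv.swap 0 1, Equiv.swap_apply_left 2 k, h⟩

theorem le_of_exists_small_coordinate
    (h : ∀ σ : Equiv.Perm (Fin 3), IsFeasible m L (x ∘ σ) (y ∘ σ)) (hL : 0 ≤ L)
    (hD : D ≤ 3 / 55 * L) (hsmall : ∃ k, x k ≤ L / 5 - 3 / 2 * D ∨ y k ≤ L / 5 - D) :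
    m ≤ 3 / 5 * L - D := by
  obtain ⟨k, hsmall⟩ := hsmall
  obtain ⟨σ, hmin, h21⟩ := exists_perm_le_le y
  by_cases hmin_small : y (σ 0) ≤ L / 5 - D
  · exact (h σ).le_of_y_zero_le hD (hmin _) h21 hmin_small
  · have hlarge i : L / 5 - D ≤ y i := (not_le.1 hmin_small).le.trans (hmin i)
    have hk : x k ≤ L / 5 - 3 / 2 * D :=
      hsmall.resolve_right fun hy => hmin_small ((hmin k).trans hy)
    obtain ⟨τ, rfl, h01⟩ := exists_perm_two_eq_le y k
    exact (h τ).le_of_x_two_le (by linarith) h01 (hlarge _) hk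

-- The threshold `D = 3 / 55 * L` is where `3 / 5 * L - D` equals `6 / 11 * L`.
theorem le_or_le_of_exists_small_coordinate
    (h : ∀ σ : Equiv.Perm (Fin 3), IsFeasible m L (x ∘ σ) (y ∘ σ)) (hL : 0 ≤ L)
    (hsmall : ∃ k, x k ≤ L / 5 - 3 / 2 * D ∨ y k ≤ L / 5 - D) :
    m ≤ 6 / 11 * L ∨ m ≤ 3 / 5 * L - D := by
  rcases le_total D (3 / 55 * L) with hD | hD
  · exact .inr (le_of_exists_small_coordinate h hL hD hsmall)
  · have hsmall' : ∃ k, x k ≤ L / 5 - 3 / 2 * (3 / 55 * L) ∨ y k ≤ L / 5 - 3 / 55 * L :=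
      hsmall.imp fun _ => .imp (fun hx => by linarith) fun hy => by linarith
    have := le_of_exists_small_coordinate h hL le_rfl hsmall'
    exact .inl (by linarith)

end LinearProgram

/-! ### The bound outside the critical box -/

section Assembly

open Finset

variable {a : Fin 3 → ℤ} {X Y : Fin 3 → ℝ} {W : ℝ} {T : Finset ((Fin 3 → ℤ) × (Fin 3 → ℤ))}

theorem log_le_or_log_le_of_two_mul_le_add {M u v : ℝ} (hM : 0 < M) (h : 2 * M ≤ u + v) :
    Real.log M ≤ Real.log u ∨ Real.log M ≤ Real.log v := by
  rcases le_total u v with huv | huv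
  · exact .inr (Real.log_le_log hM (by linarith))
  · exact .inl (Real.log_le_log hM (by linarith))

theorem log_le_of_le_lattice_bound {M : ℝ} (hM : 0 < M) (hX : ∀ i, 0 < X i) (hY : ∀ i, 0 < Y i)
    (h : 2 * M ≤ X 1 * X 2 * Y 0 * (1 + (Y 1 * Y 2 / Y 0 ^ 3) ^ (3 / 4 : ℝ))) :
    Real.log M ≤ Real.log (X 1) + Real.log (X 2) + Real.log (Y 0) ∨
      Real.log M ≤ Real.log (X 1) + Real.log (X 2) + Real.log (Y 0) +
        3 / 4 * (Real.log (Y 1) + Real.log (Y 2) - 3 * Real.log (Y 0)) := by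
  have := hX 1; have := hX 2; have := hY 0; have := hY 1; have := hY 2
  have hlog : Real.log (X 1 * X 2 * Y 0) =
      Real.log (X 1) + Real.log (X 2) + Real.log (Y 0) := by
    rw [Real.log_mul (by positivity) (by positivity), Real.log_mul (by positivity) (by positivity)]
  rw [mul_one_add] at h
  refine (log_le_or_log_le_of_two_mul_le_add hM h).imp (·.trans_eq hlog) (·.trans_eq ?_)
  rw [Real.log_mul (by positivity) (by positivity), hlog, Real.log_rpow (by positivity),
    Real.log_div (by positivity) (by positivity), Real.log_mul (by positivity) (by positivity),
    Real.log_pow, Nat.cast_ofNat]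

theorem log_le_of_le_conic_bound {M : ℝ} (hM : 0 < M) (hW : 0 < W) (hY : ∀ i, 0 < Y i)
    (h : 2 * M ≤ ∏ i, Y i + W ^ (1 / 2 : ℝ)) :
    Real.log M ≤ Real.log (Y 0) + Real.log (Y 1) + Real.log (Y 2) ∨
      Real.log M ≤ Real.log W / 2 := by
  refine (log_le_or_log_le_of_two_mul_le_add hM h).imp (·.trans_eq ?_) (·.trans_eq ?_)
  · rw [Real.log_prod fun i _ => (hY i).ne', Fin.sum_univ_three]
  · rw [Real.log_rpow hW]
    ring

theorem sqrt_add_le_add_sqrt {u v : ℝ} (hu : 0 ≤ u) (hv : 0 ≤ v) : √(u + v) ≤ √u + √v := by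
  refine Real.sqrt_le_iff.2 ⟨by positivity, ?_⟩
  rw [add_sq, Real.sq_sqrt hu, Real.sq_sqrt hv, add_right_comm]
  exact le_add_of_nonneg_right (by positivity)

theorem log_le_of_le_collision_bound {M : ℝ} (hM : 0 < M) (hX : ∀ i, 0 < X i) (hY : ∀ i, 0 < Y i)
    (h : 4 * M ≤ Y 0 * (X 2 * Y 2 +
      √(X 2 * Y 2 * (X 1 ^ 2 * Y 1 ^ 2 / Y 0 ^ 3 + √(X 1) ^ 3 * Y 1)))) :
    Real.log M ≤ Real.log (Y 0) + (Real.log (X 2) + Real.log (Y 2)) ∨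
      Real.log M ≤ Real.log (Y 0) + (Real.log (X 2) + Real.log (Y 2) +
        (2 * Real.log (X 1) + 2 * Real.log (Y 1) - 3 * Real.log (Y 0))) / 2 ∨
      Real.log M ≤ Real.log (Y 0) + (Real.log (X 2) + Real.log (Y 2) +
        (3 / 2 * Real.log (X 1) + Real.log (Y 1))) / 2 := by
  have := hX 1; have := hX 2; have := hY 0; have := hY 1; have := hY 2
  have hV : 0 < X 2 * Y 2 := by positivity
  have hlogV : Real.log (X 2 * Y 2) = Real.log (X 2) + Real.log (Y 2) :=
    Real.log_mul (by positivity) (by positivity)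
  have hlog_sqrt {Z : ℝ} (hZ : 0 < Z) : Real.log (Y 0 * √(X 2 * Y 2 * Z)) =
      Real.log (Y 0) + (Real.log (X 2) + Real.log (Y 2) + Real.log Z) / 2 := by
    rw [Real.log_mul (by positivity) (by positivity), Real.log_sqrt (by positivity),
      Real.log_mul hV.ne' hZ.ne', hlogV]
  have hsplit : √(X 2 * Y 2 * (X 1 ^ 2 * Y 1 ^ 2 / Y 0 ^ 3 + √(X 1) ^ 3 * Y 1)) ≤
      √(X 2 * Y 2 * (X 1 ^ 2 * Y 1 ^ 2 / Y 0 ^ 3)) + √(X 2 * Y 2 * (√(X 1) ^ 3 * Y 1)) := by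
    rw [mul_add (X 2 * Y 2)]
    exact sqrt_add_le_add_sqrt (by positivity) (by positivity)
  replace h := h.trans (mul_le_mul_of_nonneg_left (add_le_add_right hsplit _) (hY 0).le)
  rw [mul_add, mul_add] at h
  rcases le_or_gt M (Y 0 * (X 2 * Y 2)) with hle | hlt
  · refine .inl ((Real.log_le_log hM hle).trans_eq ?_)
    rw [Real.log_mul (by positivity) (by positivity), hlogV]
  · have h2 := (by linarith : 2 * M ≤ 4 * M - Y 0 * (X 2 * Y 2)).trans (sub_le_iff_le_add'.2 h)
    refine .inr ((log_le_or_log_le_of_two_mul_le_add hM h2).imp (·.trans_eq ?_) (·.trans_eq ?_))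
    · rw [hlog_sqrt (by positivity), Real.log_div (by positivity) (by positivity),
        Real.log_mul (by positivity) (by positivity)]
      simp only [Real.log_pow, Nat.cast_ofNat]
    · rw [hlog_sqrt (by positivity), Real.log_mul (by positivity) (by positivity), Real.log_pow,
        Real.log_sqrt (hX 1).le, Nat.cast_ofNat]
      ring

theorem exists_card_eq_and_isSolution_comp (σ : Equiv.Perm (Fin 3))
    (hT : ∀ p ∈ T, IsSolution a X Y p) :
    ∃ T' : Finset ((Fin 3 → ℤ) × (Fin 3 → ℤ)), #T' = #T ∧
      ∀ p ∈ T', IsSolution (a ∘ σ) (X ∘ σ) (Y ∘ σ) p := by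
  refine ⟨T.image (Prod.map (· ∘ σ) (· ∘ σ)), card_image_of_injective _ ?_,
    forall_mem_image.2 fun p hp => (hT p hp).comp σ⟩
  exact σ.surjective.injective_comp_right.prodMap σ.surjective.injective_comp_right

theorem exists_isFeasible_log {ε : ℝ} (hε : 0 < ε) :
    ∃ C : ℝ, 1 ≤ C ∧ ∀ (a : Fin 3 → ℤ) (X Y : Fin 3 → ℝ) (W : ℝ)
      (T : Finset ((Fin 3 → ℤ) × (Fin 3 → ℤ))), IsBox a X Y W → (∀ p ∈ T, IsSolution a X Y p) →
      T.Nonempty →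
      IsFeasible (Real.log (#T / (C * W ^ ε))) (Real.log W) (Real.log ∘ X) (Real.log ∘ Y) := by
  obtain ⟨C₁, hC₁, hlattice⟩ := exists_card_le_lattice_bound hε
  obtain ⟨C₂, hC₂, hconic⟩ := exists_card_le_conic_bound hε
  obtain ⟨C₃, hC₃, hcollision⟩ := exists_card_le_collision_bound hε
  refine ⟨4 * (C₁ + C₂ + C₃), by linarith, fun a X Y W T hbox hT hne => ?_⟩
  have hW := hbox.pos
  have := hbox.x_pos 1; have := hbox.x_pos 2
  have := hbox.y_pos 0; have := hbox.y_pos 1; have := hbox.y_pos 2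
  have : 0 < ∏ i, Y i := prod_pos fun i _ => hbox.y_pos i
  have : 0 < (#T : ℝ) := by exact_mod_cast hne.card_pos
  set M := #T / (4 * (C₁ + C₂ + C₃) * W ^ ε) with hM_def
  have hM : 0 < M := by positivity
  have hle {C Z : ℝ} (hC : C ≤ C₁ + C₂ + C₃) (hZ : 0 < Z) (h : (#T : ℝ) ≤ C * W ^ ε * Z) :
      4 * M ≤ Z := by
    rw [hM_def, ← mul_div_assoc, div_le_iff₀ (by positivity)]
    calc 4 * (#T : ℝ) ≤ 4 * ((C₁ + C₂ + C₃) * W ^ ε * Z) := by grw [h, hC]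
      _ = Z * (4 * (C₁ + C₂ + C₃) * W ^ ε) := by ring
  have hlattice := hle (by linarith) (by positivity) (hlattice a X Y W T hbox hT)
  have hconic := hle (by linarith) (by positivity) (hconic a X Y W T hbox hT)
  have hcollision := hle (by linarith) (by positivity) (hcollision a X Y W T hbox hT)
  exact {
    y_nonneg i := Real.log_nonneg (hbox.one_le_y i)
    two_mul_add_le i := by
      have hX := hbox.x_pos i
      have hY := hbox.y_pos i
      have h := Real.log_le_log (by positivity) (hbox.x_sq_mul_y_pow_le i)
      rwa [Real.log_mul (by positivity) (by positivity), Real.log_pow, Real.log_pow] at h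
    lattice := log_le_of_le_lattice_bound hM hbox.x_pos hbox.y_pos (by linarith)
    conic := log_le_of_le_conic_bound hM hbox.pos hbox.y_pos (by linarith)
    collision := log_le_of_le_collision_bound hM hbox.x_pos hbox.y_pos hcollision }

theorem exists_card_le_of_small_side {ε : ℝ} (hε : 0 < ε) :
    ∃ C : ℝ, 1 ≤ C ∧ ∀ (a : Fin 3 → ℤ) (X Y : Fin 3 → ℝ) (W Δ : ℝ)
      (T : Finset ((Fin 3 → ℤ) × (Fin 3 → ℤ))), IsBox a X Y W → (∀ p ∈ T, IsSolution a X Y p) →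
      0 < Δ → (∃ k, X k ≤ W ^ (1 / 5 : ℝ) / Δ ^ (3 / 2 : ℝ) ∨ Y k ≤ W ^ (1 / 5 : ℝ) / Δ) →
      (#T : ℝ) ≤ C * W ^ ε * (W ^ (6 / 11 : ℝ) + W ^ (3 / 5 : ℝ) / Δ) := by
  obtain ⟨C, hC, hfeasible⟩ := exists_isFeasible_log hε
  refine ⟨C, hC, fun a X Y W Δ T hbox hT hΔ hsmall => ?_⟩
  have hW := hbox.pos
  rcases T.eq_empty_or_nonempty with rfl | hne
  · rw [card_empty, Nat.cast_zero]
    positivity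
  have hperm (σ : Equiv.Perm (Fin 3)) : IsFeasible (Real.log (#T / (C * W ^ ε))) (Real.log W)
      ((Real.log ∘ X) ∘ σ) ((Real.log ∘ Y) ∘ σ) := by
    obtain ⟨T', hcard, hT'⟩ := exists_card_eq_and_isSolution_comp σ hT
    rw [← hcard]
    exact hfeasible _ _ _ W T' (hbox.comp σ) hT' (card_pos.1 (hcard ▸ hne.card_pos))
  have hlog_small : ∃ k, Real.log (X k) ≤ Real.log W / 5 - 3 / 2 * Real.log Δ ∨
      Real.log (Y k) ≤ Real.log W / 5 - Real.log Δ := by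
    refine hsmall.imp fun k => .imp (fun h => ?_) fun h => ?_
    · refine (Real.log_le_log (hbox.x_pos k) h).trans_eq ?_
      rw [Real.log_div (by positivity) (by positivity), Real.log_rpow hW, Real.log_rpow hΔ]
      ring
    · refine (Real.log_le_log (hbox.y_pos k) h).trans_eq ?_
      rw [Real.log_div (by positivity) hΔ.ne', Real.log_rpow hW]
      ring
  have : 0 < (#T : ℝ) := by exact_mod_cast hne.card_pos
  rw [← div_le_iff₀' (by positivity)]
  rcases le_or_le_of_exists_small_coordinate hperm (Real.log_nonneg hbox.one_le) hlog_small
    with h | h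
  · refine le_add_of_le_of_nonneg ((Real.log_le_log_iff (by positivity) (by positivity)).1 ?_)
      (by positivity)
    rwa [Real.log_rpow hW]
  · refine le_add_of_nonneg_of_le (by positivity)
      ((Real.log_le_log_iff (by positivity) (by positivity)).1 ?_)
    rwa [Real.log_div (by positivity) hΔ.ne', Real.log_rpow hW]

end Assembly

section CriticalCase

variable {a : Fin 3 → ℤ} {X Y : Fin 3 → ℝ} {p : (Fin 3 → ℤ) × (Fin 3 → ℤ)}

theorem finite_S0 (a : Fin 3 → ℤ) (X Y : Fin 3 → ℝ) : (S0 a X Y).Finite := by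
  refine ((Set.finite_Icc (0 : Fin 3 → ℤ) fun i => ⌊X i⌋).prod
    (Set.finite_Icc (0 : Fin 3 → ℤ) fun i => ⌊Y i⌋)).subset ?_
  rintro p ⟨hx, hy, hxX, hyY, -⟩
  exact ⟨⟨fun i => (hx i).le, fun i => Int.le_floor.2 (hxX i).2⟩,
    ⟨fun i => (hy i).le, fun i => Int.le_floor.2 (hyY i).2⟩⟩

-- A prime dividing two of the terms divides the third, hence all three of the coprime `x i * y i`.
theorem isCoprime_mul_of_sum_eq_zero {a x y : Fin 3 → ℤ} (hxy : ∀ i, x i * y i ≠ 0)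
    (hsum : ∑ i, a i * x i ^ 2 * y i ^ 3 = 0) (ha : ∀ i j, IsCoprime (a i) (x j * y j))
    (hgcd : Int.gcd (x 0 * y 0) (Int.gcd (x 1 * y 1) (x 2 * y 2)) = 1) {i j : Fin 3}
    (hij : i ≠ j) : IsCoprime (x i * y i) (x j * y j) := by
  refine isCoprime_of_prime_dvd (fun h => hxy i h.1) fun q hq hqi hqj => hq.not_isUnit ?_
  have hterm l (hl : q ∣ x l * y l) : q ∣ a l * x l ^ 2 * y l ^ 3 :=
    hl.trans ⟨a l * x l * y l ^ 2, by ring⟩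
  have hall k : q ∣ x k * y k := by
    by_cases hk : k = i ∨ k = j
    · rcases hk with rfl | rfl <;> assumption
    have hrest : ∀ l ∈ Finset.univ.erase k, q ∣ a l * x l ^ 2 * y l ^ 3 := by
      intro l hl
      have : l = i ∨ l = j := by
        have := Finset.ne_of_mem_erase hl
        omega
      rcases this with rfl | rfl <;> exact hterm _ ‹_›
    have hqk : q ∣ a k * x k ^ 2 * y k ^ 3 := by
      have h := Finset.add_sum_erase Finset.univ (fun l => a l * x l ^ 2 * y l ^ 3)
        (Finset.mem_univ k)
      rw [hsum] at h
      exact (dvd_add_left (Finset.dvd_sum hrest)).1 (h ▸ dvd_zero q)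
    have hqak : ¬ q ∣ a k := fun h => hq.not_isUnit ((ha k i).isUnit_of_dvd' h hqi)
    rcases hq.dvd_or_dvd hqk with h | h
    · exact (hq.dvd_of_dvd_pow ((hq.dvd_or_dvd h).resolve_left hqak)).mul_right _
    · exact (hq.dvd_of_dvd_pow h).mul_left _
  refine isUnit_of_dvd_one ?_
  have h := Int.dvd_coe_gcd (hall 0) (Int.dvd_coe_gcd (hall 1) (hall 2))
  rwa [hgcd, Nat.cast_one] at h

theorem isCoprime_coeff_of_gcd_eq_one {a x y : Fin 3 → ℤ}
    (h : Int.gcd (a 0 * a 1 * a 2) (x 0 * x 1 * x 2 * y 0 * y 1 * y 2) = 1) (i j : Fin 3) :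
    IsCoprime (a i) (x j * y j) := by
  have hprod : IsCoprime (∏ i, a i) (∏ j, x j * y j) := by
    rw [Int.isCoprime_iff_gcd_eq_one, Fin.prod_univ_three, Fin.prod_univ_three, ← h]
    congr 1
    ring
  exact (hprod.of_isCoprime_of_dvd_left (Finset.dvd_prod_of_mem _ (Finset.mem_univ i)))
    |>.of_isCoprime_of_dvd_right (Finset.dvd_prod_of_mem _ (Finset.mem_univ j))

theorem isSolution_of_mem_S0 (hp : p ∈ S0 a X Y) : IsSolution a X Y p := by
  obtain ⟨hx, hy, hxX, hyY, hsum, hgcd, hcoeff, hsq⟩ := hp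
  have hsum' : ∑ i, a i * p.1 i ^ 2 * p.2 i ^ 3 = 0 := by rwa [Fin.sum_univ_three]
  exact {
    x_pos := hx
    y_pos := hy
    lt_x i := (hxX i).1
    x_le i := (hxX i).2
    lt_y i := (hyY i).1
    y_le i := (hyY i).2
    sum_eq_zero := hsum'
    isCoprime _ _ := isCoprime_mul_of_sum_eq_zero (fun i => (mul_pos (hx i) (hy i)).ne') hsum'
      (isCoprime_coeff_of_gcd_eq_one hcoeff) hgcd
    isCoprime_coeff := isCoprime_coeff_of_gcd_eq_one hcoeff
    squarefree i := (hsq i).of_mul_right }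

theorem exists_small_side_of_not_critical {B δ : ℝ} (hB : 0 < B) (hX : ∀ i, 0 < X i)
    (hY : ∀ i, 0 < Y i) (hXY : ∀ i, X i ^ 2 * Y i ^ 3 ≤ 32 * B)
    (hcrit : ¬ ∀ k : Fin 3,
      B ^ ((1 : ℝ) / 5 - 3 * δ / 2) ≤ X k ∧ X k ≤ B ^ ((1 : ℝ) / 5 + 3 * δ / 2) ∧
      B ^ ((1 : ℝ) / 5 - δ) ≤ Y k ∧ Y k ≤ B ^ ((1 : ℝ) / 5 + δ)) :
    ∃ k, X k ≤ (32 * B) ^ (1 / 5 : ℝ) / (B ^ δ / 2) ^ (3 / 2 : ℝ) ∨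
      Y k ≤ (32 * B) ^ (1 / 5 : ℝ) / (B ^ δ / 2) := by
  by_contra! h
  refine hcrit fun k => ?_
  obtain ⟨hXk, hYk⟩ := h k
  have h32 : Real.log 32 = 5 * Real.log 2 := by
    rw [show (32 : ℝ) = 2 ^ 5 by norm_num, Real.log_pow, Nat.cast_ofNat]
  have hlogΔ : Real.log (B ^ δ / 2) = δ * Real.log B - Real.log 2 := by
    rw [Real.log_div (by positivity) two_ne_zero, Real.log_rpow hB]
  have hlogW : Real.log (32 * B) = 5 * Real.log 2 + Real.log B := by
    rw [Real.log_mul (by norm_num) hB.ne', h32]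
  have hlogX := Real.log_lt_log (by positivity) hXk
  have hlogY := Real.log_lt_log (by positivity) hYk
  rw [Real.log_div (by positivity) (by positivity), Real.log_rpow (by positivity),
    Real.log_rpow (by positivity), hlogW, hlogΔ] at hlogX
  rw [Real.log_div (by positivity) (by positivity), Real.log_rpow (by positivity), hlogW,
    hlogΔ] at hlogY
  have hlogXY := Real.log_le_log (mul_pos (pow_pos (hX k) 2) (pow_pos (hY k) 3)) (hXY k)
  rw [hlogW, Real.log_mul (pow_pos (hX k) 2).ne' (pow_pos (hY k) 3).ne', Real.log_pow,
    Real.log_pow, Nat.cast_ofNat, Nat.cast_ofNat] at hlogXY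
  have hlog2 : 0 < Real.log 2 := Real.log_pos one_lt_two
  rw [← Real.log_le_log_iff (by positivity) (hX k), ← Real.log_le_log_iff (hX k) (by positivity),
    ← Real.log_le_log_iff (by positivity) (hY k), ← Real.log_le_log_iff (hY k) (by positivity)]
  simp only [Real.log_rpow hB]
  refine ⟨?_, ?_, ?_, ?_⟩ <;> linarith

theorem rpow_mul_add_rpow_div_le {B : ℝ} (hB : 0 < B) (δ ε : ℝ) :
    (32 * B) ^ ε * ((32 * B) ^ (6 / 11 : ℝ) + (32 * B) ^ (3 / 5 : ℝ) / (B ^ δ / 2)) ≤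
      32 * 32 ^ ε * (B ^ ((6 : ℝ) / 11 + ε) + B ^ ((3 : ℝ) / 5 - δ + ε)) := by
  have h32 : (32 : ℝ) ^ (6 / 11 : ℝ) ≤ 32 := Real.rpow_le_self_of_one_le (by norm_num) (by norm_num)
  have h8 : (32 : ℝ) ^ (3 / 5 : ℝ) = 8 := by
    rw [show (32 : ℝ) = 2 ^ (5 : ℝ) by norm_num, ← Real.rpow_mul (by norm_num)]
    norm_num
  rw [Real.rpow_add hB, Real.rpow_add hB, Real.rpow_sub hB]
  simp only [Real.mul_rpow (by norm_num : (0 : ℝ) ≤ 32) hB.le, h8]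
  calc 32 ^ ε * B ^ ε * (32 ^ (6 / 11 : ℝ) * B ^ (6 / 11 : ℝ) +
        8 * B ^ (3 / 5 : ℝ) / (B ^ δ / 2))
      ≤ 32 ^ ε * B ^ ε * (32 * B ^ (6 / 11 : ℝ) + 32 * (B ^ (3 / 5 : ℝ) / B ^ δ)) := by
        rw [show 8 * B ^ (3 / 5 : ℝ) / (B ^ δ / 2) = 16 * (B ^ (3 / 5 : ℝ) / B ^ δ) by ring]
        gcongr
        norm_num
    _ = _ := by ring

theorem N0_critical_case_general (δ ε : ℝ) (hε : 0 < ε) :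
    ∃ C : ℝ, 0 < C ∧ ∀ (a : Fin 3 → ℤ) (X Y : Fin 3 → ℝ) (B : ℝ),
      2 ≤ B → (∀ i, a i ≠ 0) → (∀ i, 1 ≤ X i) → (∀ i, 1 ≤ Y i) →
      (∀ i, X i ^ 2 * Y i ^ 3 ≤ 32 * B / |(a i : ℝ)|) →
      ¬ (∀ k : Fin 3,
          B ^ ((1 : ℝ) / 5 - 3 * δ / 2) ≤ X k ∧ X k ≤ B ^ ((1 : ℝ) / 5 + 3 * δ / 2) ∧
          B ^ ((1 : ℝ) / 5 - δ) ≤ Y k ∧ Y k ≤ B ^ ((1 : ℝ) / 5 + δ)) →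
        ((S0 a X Y).ncard : ℝ) ≤
          C * (B ^ ((6 : ℝ) / 11 + ε) + B ^ ((3 : ℝ) / 5 - δ + ε)) := by
  obtain ⟨C, hC, hcard⟩ := exists_card_le_of_small_side hε
  refine ⟨C * (32 * 32 ^ ε), by positivity, fun a X Y B hB ha hX hY hXY hcrit => ?_⟩
  have hB0 : 0 < B := two_pos.trans_le hB
  have hbox : IsBox a X Y (32 * B) := ⟨by linarith, ha, hX, hY, fun i =>
    (le_div_iff₀' (abs_pos.2 (Int.cast_ne_zero.2 (ha i)))).1 (hXY i)⟩
  have hsmall := exists_small_side_of_not_critical hB0 hbox.x_pos hbox.y_pos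
    hbox.x_sq_mul_y_pow_le hcrit
  rw [Set.ncard_eq_toFinset_card _ (finite_S0 a X Y)]
  calc _ ≤ _ := hcard a X Y _ _ _ hbox
        (fun p hp => isSolution_of_mem_S0 ((finite_S0 a X Y).mem_toFinset.1 hp))
        (by positivity) hsmall
    _ ≤ _ := by
      rw [mul_assoc C, mul_assoc C]
      exact mul_le_mul_of_nonneg_left (rpow_mul_add_rpow_div_le hB0 δ ε) (by positivity)

end CriticalCase

/-- Let `δ, ε > 0` be fixed. There is a constant `C(δ, ε)` such that if it is not the case
that `B^{1/5 - 3δ/2} ≤ X_k ≤ B^{1/5 + 3δ/2}` and `B^{1/5 - δ} ≤ Y_k ≤ B^{1/5 + δ}` for all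
`k = 1, 2, 3`, then `N₀(B) ≤ C(δ, ε)(B^{6/11 + ε} + B^{3/5 - δ + ε})`. -/
theorem N0_critical_case (δ ε : ℝ) (hδ : 0 < δ) (hε : 0 < ε) :
    ∃ C : ℝ, 0 < C ∧ ∀ (a : Fin 3 → ℤ) (X Y : Fin 3 → ℝ) (B : ℝ),
      2 ≤ B → (∀ i, a i ≠ 0) → (∀ i, Squarefree (a i)) →
      (∀ i j, i ≠ j → IsCoprime (a i) (a j)) →
      (∀ i, 1 ≤ X i) → (∀ i, 1 ≤ Y i) →
      (∀ i, X i ^ 2 * Y i ^ 3 ≤ 32 * B / |(a i : ℝ)|) →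
      ¬ (∀ k : Fin 3,
          B ^ ((1 : ℝ) / 5 - 3 * δ / 2) ≤ X k ∧ X k ≤ B ^ ((1 : ℝ) / 5 + 3 * δ / 2) ∧
          B ^ ((1 : ℝ) / 5 - δ) ≤ Y k ∧ Y k ≤ B ^ ((1 : ℝ) / 5 + δ)) →
        ((S0 a X Y).ncard : ℝ) ≤
          C * (B ^ ((6 : ℝ) / 11 + ε) + B ^ ((3 : ℝ) / 5 - δ + ε)) :=
  (N0_critical_case_general δ ε hε).imp fun _ h => ⟨h.1, fun a X Y B hB ha _ _ => h.2 a X Y B hB ha⟩
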